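/- arXiv:2005.08155 — 15 statements merged into one kernel-verified Lean document; each statement's English description precedes it below -/
import Mathlib

section
/- Let m ≥ 2 and let f : ℝ_{≥0}^{m−1} → ℝ be convex and continuous on the nonnegative orthant. Define f*(s) = sup_{t ∈ ℝ_{≥0}^{m−1}} (⟨s, t⟩ − f(t)) ∈ ℝ ∪ {+∞} for s ∈ ℝ^{m−1}, and dom(f*) = {s ∈ ℝ^{m−1} : f*(s) < +∞}. Define the loss L_f on {1,…,m} × dom(f*) by L_f(j, s) = −s_j for j ∈ {1,…,m−1} and L_f(m, s) = f*(s). Then: (a) dom(f*) is convex and, for each j, the map s ↦ L_f(j, s) is convex on dom(f*); (b) for every η ∈ Δ_m with η_m > 0, inf_{s ∈ dom(f*)} Σ_{j=1}^m η_j L_f(j, s) = −η_m · f(η_1/η_m, …, η_{m−1}/η_m). -/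
open Finset

/-- The set of values `⟨s,t⟩ - f t` for `t` in the nonnegative orthant. -/
def conjVals (d : ℕ) (f : (Fin d → ℝ) → ℝ) (s : Fin d → ℝ) : Set ℝ :=
  {x : ℝ | ∃ t : Fin d → ℝ, (∀ i, 0 ≤ t i) ∧ x = ∑ i, s i * t i - f t}

/-- `dom(f*) = {s : f*(s) < ∞}`, expressed as boundedness of the value set. -/
def conjDom (d : ℕ) (f : (Fin d → ℝ) → ℝ) : Set (Fin d → ℝ) :=
  {s | BddAbove (conjVals d f s)}

/-- `f*(s) = sup_{t ≥ 0} (⟨s,t⟩ - f t)`. -/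
noncomputable def conj (d : ℕ) (f : (Fin d → ℝ) → ℝ) (s : Fin d → ℝ) : ℝ :=
  sSup (conjVals d f s)

/-- The loss `L_f`: `L_f(j,s) = -s_j` for `j ≤ m-1`, `L_f(m,s) = f*(s)`. -/
noncomputable def Lf (d : ℕ) (f : (Fin d → ℝ) → ℝ) (j : Fin (d + 1))
    (s : Fin d → ℝ) : ℝ :=
  Fin.lastCases (conj d f s) (fun i => -s i) j

/-!
The conjugate `f*` is a supremum of affine functions of `s`, hence convex. The risk at `η` factors
as `η_m (f*(s) - ⟨s, t⟩)` with `t = (η_1/η_m, …, η_{m-1}/η_m)`, so its infimum over `s` is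
`-η_m f**(t)`. On the orthant `f** = f`: a convex lower semicontinuous function on a closed convex
set is the upper envelope of its affine minorants, and `s` is the slope and `-f*(s)` the best
constant of such a minorant.
-/

theorem convexOn_ciSup {E ι : Type*} [AddCommMonoid E] [SMul ℝ E] [Nonempty ι] {S : Set E}
    {g : ι → E → ℝ} (hg : ∀ i, ConvexOn ℝ S (g i)) :
    ConvexOn ℝ {x ∈ S | BddAbove (Set.range fun i => g i x)} fun x => ⨆ i, g i x := by
  have jensen {x y : E} (hx : x ∈ {x ∈ S | BddAbove (Set.range fun i => g i x)})
      (hy : y ∈ {x ∈ S | BddAbove (Set.range fun i => g i x)}) {a b : ℝ} (ha : 0 ≤ a)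
      (hb : 0 ≤ b) (hab : a + b = 1) (i : ι) :
      g i (a • x + b • y) ≤ a • (⨆ i, g i x) + b • ⨆ i, g i y :=
    calc
      g i (a • x + b • y) ≤ a • g i x + b • g i y := (hg i).2 hx.1 hy.1 ha hb hab
      _ ≤ a • (⨆ i, g i x) + b • ⨆ i, g i y := by
        gcongr
        exacts [le_ciSup hx.2 i, le_ciSup hy.2 i]
  refine ⟨fun x hx y hy a b ha hb hab => ⟨?_, ?_⟩, fun x hx y hy a b ha hb hab => ?_⟩
  · exact (hg (Classical.arbitrary ι)).1 hx.1 hy.1 ha hb hab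
  · exact ⟨_, Set.forall_mem_range.2 (jensen hx hy ha hb hab)⟩
  · exact ciSup_le (jensen hx hy ha hb hab)

theorem exists_dotProduct_add_le_of_lt {ι : Type*} [Fintype ι] {K : Set (ι → ℝ)}
    {f : (ι → ℝ) → ℝ} (hK : IsClosed K) (hf : ConvexOn ℝ K f) (hfc : LowerSemicontinuousOn f K)
    {t : ι → ℝ} (ht : t ∈ K) {a : ℝ} (ha : a < f t) :
    ∃ (s : ι → ℝ) (c : ℝ), (∀ u ∈ K, s ⬝ᵥ u + c ≤ f u) ∧ s ⬝ᵥ t + c = a := by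
  classical
  obtain ⟨l, c, hle, heq⟩ := hf.exists_affine_le_of_lt (𝕜 := ℝ) ht ha hK hfc
  obtain ⟨s, hs⟩ := (dotProductEquiv ℝ ι).surjective l.toLinearMap
  have hl (u : ι → ℝ) : s ⬝ᵥ u = l u := LinearMap.congr_fun hs u
  exact ⟨s, c, fun u hu => by simpa [hl] using hle ⟨u, hu⟩, by simpa [hl] using heq⟩

section Conjugate

variable {d : ℕ} {f : (Fin d → ℝ) → ℝ} {s t : Fin d → ℝ}

theorem conjVals_eq_range (f : (Fin d → ℝ) → ℝ) (s : Fin d → ℝ) :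
    conjVals d f s = Set.range fun t : Set.Ici (0 : Fin d → ℝ) => s ⬝ᵥ t - f t := by
  ext x
  exact ⟨fun ⟨t, ht, hx⟩ => ⟨⟨t, ht⟩, hx.symm⟩, fun ⟨t, hx⟩ => ⟨t, t.2, hx.symm⟩⟩

theorem dotProduct_sub_le_conj (hs : s ∈ conjDom d f) (ht : 0 ≤ t) :
    s ⬝ᵥ t - f t ≤ conj d f s :=
  le_csSup hs ⟨t, ht, rfl⟩

theorem convexOn_conj (f : (Fin d → ℝ) → ℝ) : ConvexOn ℝ (conjDom d f) (conj d f) := by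
  have affine (t : Set.Ici (0 : Fin d → ℝ)) :
      ConvexOn ℝ Set.univ fun s : Fin d → ℝ => s ⬝ᵥ t - f t :=
    (((dotProductBilin ℝ ℝ).flip (t : Fin d → ℝ)).convexOn convex_univ).add_const (-f t)
  convert convexOn_ciSup affine using 1
  · ext s
    simp [conjDom, conjVals_eq_range]
  · ext s
    rw [conj, conjVals_eq_range, sSup_range]

theorem isLUB_dotProduct_sub_conj (hf : ConvexOn ℝ (Set.Ici 0) f)
    (hfc : LowerSemicontinuousOn f (Set.Ici 0)) (ht : 0 ≤ t) :
    IsLUB ((fun s => s ⬝ᵥ t - conj d f s) '' conjDom d f) (f t) := by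
  refine ⟨?_, fun b hb => le_of_forall_lt_imp_le_of_dense fun a ha => ?_⟩
  · rintro _ ⟨s, hs, rfl⟩
    linarith [dotProduct_sub_le_conj hs ht]
  · obtain ⟨s, c, hle, rfl⟩ := exists_dotProduct_add_le_of_lt isClosed_Ici hf hfc ht ha
    have hc : -c ∈ upperBounds (conjVals d f s) := by
      rintro _ ⟨u, hu, rfl⟩
      change s ⬝ᵥ u - f u ≤ -c
      linarith [hle u hu]
    have hconj : conj d f s ≤ -c := csSup_le ⟨_, 0, fun _ => le_rfl, rfl⟩ hc
    calc
      s ⬝ᵥ t + c ≤ s ⬝ᵥ t - conj d f s := by linarith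
      _ ≤ b := hb ⟨s, ⟨-c, hc⟩, rfl⟩

end Conjugate

section Loss

variable {d : ℕ}

theorem Lf_last (f : (Fin d → ℝ) → ℝ) : Lf d f (Fin.last d) = conj d f :=
  funext fun _ => Fin.lastCases_last

theorem Lf_castSucc (f : (Fin d → ℝ) → ℝ) (i : Fin d) : Lf d f i.castSucc = fun s => -s i :=
  funext fun _ => Fin.lastCases_castSucc i

theorem convexOn_Lf (f : (Fin d → ℝ) → ℝ) (j : Fin (d + 1)) :
    ConvexOn ℝ (conjDom d f) (Lf d f j) := by
  induction j using Fin.lastCases with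
  | last => exact Lf_last f ▸ convexOn_conj f
  | cast i =>
    rw [Lf_castSucc]
    exact (-LinearMap.proj i : (Fin d → ℝ) →ₗ[ℝ] ℝ).convexOn (convexOn_conj f).1

theorem sum_mul_Lf (f : (Fin d → ℝ) → ℝ) (s : Fin d → ℝ) {η : Fin (d + 1) → ℝ}
    (hη : η (Fin.last d) ≠ 0) :
    ∑ j, η j * Lf d f j s =
      η (Fin.last d) * -(s ⬝ᵥ (fun i => η i.castSucc / η (Fin.last d)) - conj d f s) := by
  have hdot : η (Fin.last d) * (s ⬝ᵥ fun i => η i.castSucc / η (Fin.last d)) =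
      ∑ i : Fin d, η i.castSucc * s i := by
    rw [dotProduct, Finset.mul_sum]
    refine Finset.sum_congr rfl fun i _ => ?_
    field_simp
  simp only [Fin.sum_univ_castSucc, Lf_castSucc, Lf_last, mul_neg, Finset.sum_neg_distrib, ← hdot]
  ring

theorem isGLB_sum_mul_Lf {f : (Fin d → ℝ) → ℝ} (hf : ConvexOn ℝ (Set.Ici 0) f)
    (hfc : LowerSemicontinuousOn f (Set.Ici 0)) {η : Fin (d + 1) → ℝ} (hη : 0 ≤ η)
    (hpos : 0 < η (Fin.last d)) :
    IsGLB ((fun s => ∑ j, η j * Lf d f j s) '' conjDom d f)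
      (-η (Fin.last d) * f fun i => η i.castSucc / η (Fin.last d)) := by
  have ht : (0 : Fin d → ℝ) ≤ fun i => η i.castSucc / η (Fin.last d) :=
    fun i => div_nonneg (hη _) hpos.le
  have h := (isLUB_dotProduct_sub_conj hf hfc ht).neg.mul_left hpos.le
  simpa only [sum_mul_Lf f _ hpos.ne', ← Set.image_neg_eq_neg, Set.image_image, neg_mul, mul_neg]
    using h

end Loss

theorem stmt1_general {d : ℕ} (f : (Fin d → ℝ) → ℝ) :
    (Convex ℝ (conjDom d f) ∧ ∀ j : Fin (d + 1), ConvexOn ℝ (conjDom d f) (Lf d f j)) ∧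
    (ConvexOn ℝ (Set.Ici 0) f → LowerSemicontinuousOn f (Set.Ici 0) →
      ∀ η : Fin (d + 1) → ℝ, 0 ≤ η → 0 < η (Fin.last d) →
        IsGLB ((fun s => ∑ j, η j * Lf d f j s) '' conjDom d f)
          (-η (Fin.last d) * f fun i => η i.castSucc / η (Fin.last d))) :=
  ⟨⟨(convexOn_conj f).1, convexOn_Lf f⟩, fun hf hfc _ hη hpos => isGLB_sum_mul_Lf hf hfc hη hpos⟩

theorem stmt1 (d : ℕ) (hd : 1 ≤ d) (f : (Fin d → ℝ) → ℝ)
    (hf : ConvexOn ℝ {t : Fin d → ℝ | ∀ i, 0 ≤ t i} f)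
    (hfc : ContinuousOn f {t : Fin d → ℝ | ∀ i, 0 ≤ t i}) :
    -- (a) dom(f*) is convex and each L_f(j, ·) is convex on it
    (Convex ℝ (conjDom d f) ∧
      ∀ j : Fin (d + 1), ConvexOn ℝ (conjDom d f) (Lf d f j))
    ∧
    -- (b) inf over dom(f*) of the risk equals -η_m f(η_1/η_m, …, η_{m-1}/η_m)
    (∀ η : Fin (d + 1) → ℝ, (∀ j, 0 ≤ η j) → ∑ j, η j = 1 →
      0 < η (Fin.last d) →
      IsGLB {x : ℝ | ∃ s ∈ conjDom d f, x = ∑ j, η j * Lf d f j s}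
        (-η (Fin.last d) * f (fun i => η i.castSucc / η (Fin.last d)))) := by
  refine ⟨(stmt1_general f).1, fun η hη _ hpos => ?_⟩
  simpa only [Set.image, eq_comm] using!
    (stmt1_general f).2 hf hfc.lowerSemicontinuousOn η hη hpos
end

section
/- Let m ≥ 2, let f : ℝ_{≥0}^{m−1} → ℝ be convex, and let g : ℝ_{≥0}^{m−1} → ℝ^{m−1} be a subgradient selection for f, i.e. f(v) ≥ f(u) + ⟨g(u), v − u⟩ for all u, v ∈ ℝ_{≥0}^{m−1}. Define the loss L_{f2}(j, u) = −g_j(u) for j ∈ {1,…,m−1} and L_{f2}(m, u) = ⟨u, g(u)⟩ − f(u), for u ∈ ℝ_{≥0}^{m−1}. Then for every η ∈ Δ_m with η_m > 0, inf_{u ∈ ℝ_{≥0}^{m−1}} Σ_{j=1}^m η_j L_{f2}(j, u) = −η_m · f(η_1/η_m, …, η_{m−1}/η_m), and the infimum is attained at u = (η_1/η_m, …, η_{m−1}/η_m). -/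
open Finset

/-- The loss `L_{f2}`: `L_{f2}(j,u) = -g_j(u)` for `j ≤ m-1`,
`L_{f2}(m,u) = ⟨u, g(u)⟩ - f(u)`. -/
noncomputable def Lf2 (d : ℕ) (f : (Fin d → ℝ) → ℝ) (g : (Fin d → ℝ) → Fin d → ℝ)
    (j : Fin (d + 1)) (u : Fin d → ℝ) : ℝ :=
  Fin.lastCases (∑ i, u i * g u i - f u) (fun i => -g u i) j

/-! Up to the factor `-η_m`, the risk of the prediction `u` is the affine function that supports `f`
at `u`, evaluated at `u^η`. A supporting affine function lies below `f` and touches it at its base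
point, so this value is largest at `u = u^η`, where it equals `f (u^η)`. -/

/-- `g` selects subgradients of `f` on `S`: the affine function through `(u, f u)` with slope `g u`
lies below `f` on `S`, for every `u ∈ S`. Values of `g` off `S` are unconstrained. -/
def IsSubgradientSelectionOn {d : ℕ} (S : Set (Fin d → ℝ)) (f : (Fin d → ℝ) → ℝ)
    (g : (Fin d → ℝ) → Fin d → ℝ) : Prop :=
  ∀ ⦃u⦄, u ∈ S → ∀ ⦃v⦄, v ∈ S → f u + ∑ i, g u i * (v i - u i) ≤ f v

/-- The conditional risk `∑_j η_j L_{f2}(j, u)` of the prediction `u`, for arbitrary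
real class weights `η`. -/
noncomputable def condRisk {d : ℕ} (f : (Fin d → ℝ) → ℝ) (g : (Fin d → ℝ) → Fin d → ℝ)
    (η : Fin (d + 1) → ℝ) (u : Fin d → ℝ) : ℝ :=
  ∑ j, η j * Lf2 d f g j u

/-- The vector `u^η = (η_1/η_m, …, η_{m-1}/η_m)` of class weights relative to the last class,
at which the conditional risk is minimal. It is meaningful only if `η_m ≠ 0`. -/
noncomputable def weightRatio {d : ℕ} (η : Fin (d + 1) → ℝ) : Fin d → ℝ :=
  fun i => η i.castSucc / η (Fin.last d)

section CondRisk

variable {d : ℕ} (f : (Fin d → ℝ) → ℝ) (g : (Fin d → ℝ) → Fin d → ℝ) {η : Fin (d + 1) → ℝ}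

theorem condRisk_eq_neg_mul_add_sum (hη : η (Fin.last d) ≠ 0) (u : Fin d → ℝ) :
    condRisk f g η u =
      -η (Fin.last d) * (f u + ∑ i, g u i * (weightRatio η i - u i)) := by
  have castSucc_eq (i : Fin d) : η i.castSucc = η (Fin.last d) * weightRatio η i :=
    (mul_div_cancel₀ _ hη).symm
  calc condRisk f g η u
      = ∑ i : Fin d, η i.castSucc * -g u i + η (Fin.last d) * (∑ i, u i * g u i - f u) := by
        simp only [condRisk, Fin.sum_univ_castSucc, Lf2, Fin.lastCases_castSucc,
          Fin.lastCases_last]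
    _ = -η (Fin.last d) *
          (f u + (∑ i, g u i * weightRatio η i - ∑ i, g u i * u i)) := by
        simp only [castSucc_eq, mul_assoc, ← mul_sum, mul_neg, sum_neg_distrib,
          mul_comm (g u _)]
        ring
    _ = -η (Fin.last d) * (f u + ∑ i, g u i * (weightRatio η i - u i)) := by
        simp only [mul_sub, sum_sub_distrib]

theorem condRisk_weightRatio (hη : η (Fin.last d) ≠ 0) :
    condRisk f g η (weightRatio η) = -η (Fin.last d) * f (weightRatio η) := by
  simp only [condRisk_eq_neg_mul_add_sum f g hη, sub_self, mul_zero, sum_const_zero, add_zero]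

variable {f g} {S : Set (Fin d → ℝ)} {u : Fin d → ℝ}

theorem IsSubgradientSelectionOn.neg_mul_le_condRisk (hg : IsSubgradientSelectionOn S f g)
    (hη : 0 < η (Fin.last d)) (hηS : weightRatio η ∈ S) (hu : u ∈ S) :
    -η (Fin.last d) * f (weightRatio η) ≤ condRisk f g η u := by
  rw [condRisk_eq_neg_mul_add_sum f g hη.ne']
  exact mul_le_mul_of_nonpos_left (hg hu hηS) (neg_nonpos.2 hη.le)

theorem stmt2_general (hg : IsSubgradientSelectionOn S f g) (hη : 0 < η (Fin.last d))
    (hηS : weightRatio η ∈ S) :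
    (∀ u ∈ S, -η (Fin.last d) * f (weightRatio η) ≤ condRisk f g η u) ∧
      condRisk f g η (weightRatio η) = -η (Fin.last d) * f (weightRatio η) :=
  ⟨fun _ hu => hg.neg_mul_le_condRisk hη hηS hu, condRisk_weightRatio f g hη.ne'⟩

end CondRisk

theorem stmt2 (d : ℕ) (hd : 1 ≤ d) (f : (Fin d → ℝ) → ℝ)
    (hf : ConvexOn ℝ {t : Fin d → ℝ | ∀ i, 0 ≤ t i} f)
    (g : (Fin d → ℝ) → Fin d → ℝ)
    (hg : ∀ u v : Fin d → ℝ, (∀ i, 0 ≤ u i) → (∀ i, 0 ≤ v i) →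
      f u + ∑ i, g u i * (v i - u i) ≤ f v)
    (η : Fin (d + 1) → ℝ) (hη0 : ∀ j, 0 ≤ η j) (hη1 : ∑ j, η j = 1)
    (hηm : 0 < η (Fin.last d)) :
    -- the value -η_m f(u^η) is a lower bound of the risk over the orthant …
    (∀ u : Fin d → ℝ, (∀ i, 0 ≤ u i) →
      -η (Fin.last d) * f (fun i => η i.castSucc / η (Fin.last d)) ≤
        ∑ j, η j * Lf2 d f g j u)
    ∧
    -- … and it is attained at u = u^η = (η_1/η_m, …, η_{m-1}/η_m)
    (∑ j, η j * Lf2 d f g j (fun i => η i.castSucc / η (Fin.last d)) =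
      -η (Fin.last d) * f (fun i => η i.castSucc / η (Fin.last d))) :=
  stmt2_general (S := {u | ∀ i, 0 ≤ u i}) (fun u hu v hv => hg u v hu hv) hηm
    fun i => div_nonneg (hη0 i.castSucc) hηm.le
end

section
/- Let m ≥ 2, let f : ℝ_{≥0}^{m−1} → ℝ be convex, and let g : ℝ_{≥0}^{m−1} → ℝ^{m−1} satisfy f(v) ≥ f(u) + ⟨g(u), v − u⟩ for all u, v ∈ ℝ_{≥0}^{m−1}. For q ∈ Δ_m with q_m > 0 set u^q = (q_1/q_m, …, q_{m−1}/q_m), and define L_{f3}(j, q) = −g_j(u^q) for j ∈ {1,…,m−1} and L_{f3}(m, q) = ⟨u^q, g(u^q)⟩ − f(u^q). Then L_{f3} is a proper scoring rule whose generalized entropy is H_f: for every η ∈ Δ_m with η_m > 0, inf over q ∈ Δ_m with q_m > 0 of Σ_{j=1}^m η_j L_{f3}(j, q) equals −η_m · f(u^η), which in turn equals Σ_{j=1}^m η_j L_{f3}(j, η). -/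
open Finset

/-- The ratio vector `u^q = (q_1/q_m, …, q_{m-1}/q_m)`. -/
noncomputable def uRatio (d : ℕ) (q : Fin (d + 1) → ℝ) : Fin d → ℝ :=
  fun i => q i.castSucc / q (Fin.last d)

/-- The scoring rule `L_{f3}`: `L_{f3}(j,q) = -g_j(u^q)` for `j ≤ m-1`,
`L_{f3}(m,q) = ⟨u^q, g(u^q)⟩ - f(u^q)`. -/
noncomputable def Lf3 (d : ℕ) (f : (Fin d → ℝ) → ℝ) (g : (Fin d → ℝ) → Fin d → ℝ)
    (j : Fin (d + 1)) (q : Fin (d + 1) → ℝ) : ℝ :=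
  Fin.lastCases (∑ i, uRatio d q i * g (uRatio d q) i - f (uRatio d q))
    (fun i => -g (uRatio d q) i) j

/-!
Multiplying out with `η_j = η_m u^η_j`, the expected loss of reporting `q` is `-η_m` times the
supporting affine function of `f` at `u^q`, evaluated at `u^η`. It therefore exceeds `-η_m f(u^η)`
by `η_m` times the Bregman divergence of `u^η` from `u^q`. The divergence is nonnegative by the
subgradient inequality, and it vanishes when `q = η`.
-/

section Bregman

variable {ι : Type*} [Fintype ι] (f : (ι → ℝ) → ℝ) (g : (ι → ℝ) → ι → ℝ)

/-- The Bregman divergence of `v` from `u` generated by `f`: the gap at `v` between `f` and its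
supporting affine function at `u`. The slope is read off a selection `g` of subgradients, so `f`
need not be differentiable. -/
def bregmanDiv (v u : ι → ℝ) : ℝ :=
  f v - (f u + ∑ i, g u i * (v i - u i))

theorem bregmanDiv_self (u : ι → ℝ) : bregmanDiv f g u u = 0 := by
  simp [bregmanDiv]

variable {f g} in
theorem bregmanDiv_nonneg_iff {u v : ι → ℝ} :
    0 ≤ bregmanDiv f g v u ↔ f u + ∑ i, g u i * (v i - u i) ≤ f v :=
  sub_nonneg

end Bregman

section ScoringRule

variable {d : ℕ}

theorem last_mul_uRatio {q : Fin (d + 1) → ℝ} (hq : q (Fin.last d) ≠ 0) (i : Fin d) :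
    q (Fin.last d) * uRatio d q i = q i.castSucc :=
  mul_div_cancel₀ _ hq

theorem uRatio_nonneg {q : Fin (d + 1) → ℝ} (hq : ∀ j, 0 ≤ q j) (i : Fin d) :
    0 ≤ uRatio d q i :=
  div_nonneg (hq _) (hq _)

variable (f : (Fin d → ℝ) → ℝ) (g : (Fin d → ℝ) → Fin d → ℝ) (q : Fin (d + 1) → ℝ)

theorem Lf3_castSucc (i : Fin d) : Lf3 d f g i.castSucc q = -g (uRatio d q) i :=
  Fin.lastCases_castSucc _

theorem Lf3_last :
    Lf3 d f g (Fin.last d) q = ∑ i, uRatio d q i * g (uRatio d q) i - f (uRatio d q) :=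
  Fin.lastCases_last

theorem sum_mul_Lf3 (η : Fin (d + 1) → ℝ) :
    ∑ j, η j * Lf3 d f g j q =
      ∑ i : Fin d, η i.castSucc * -g (uRatio d q) i +
        η (Fin.last d) * (∑ i, uRatio d q i * g (uRatio d q) i - f (uRatio d q)) := by
  simp only [Fin.sum_univ_castSucc, Lf3_castSucc, Lf3_last]

theorem sum_mul_Lf3_eq_bregmanDiv {η : Fin (d + 1) → ℝ} (hη : η (Fin.last d) ≠ 0) :
    ∑ j, η j * Lf3 d f g j q =
      -η (Fin.last d) * f (uRatio d η) +
        η (Fin.last d) * bregmanDiv f g (uRatio d η) (uRatio d q) := by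
  have affine_part : ∑ i : Fin d, η i.castSucc * -g (uRatio d q) i +
      η (Fin.last d) * ∑ i, uRatio d q i * g (uRatio d q) i =
        -η (Fin.last d) * ∑ i, g (uRatio d q) i * (uRatio d η i - uRatio d q i) := by
    rw [mul_sum, mul_sum, ← sum_add_distrib]
    refine sum_congr rfl fun i _ => ?_
    rw [← last_mul_uRatio hη i]
    ring
  rw [sum_mul_Lf3, bregmanDiv]
  linear_combination affine_part

theorem sum_mul_Lf3_self {η : Fin (d + 1) → ℝ} (hη : η (Fin.last d) ≠ 0) :
    ∑ j, η j * Lf3 d f g j η = -η (Fin.last d) * f (uRatio d η) := by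
  rw [sum_mul_Lf3_eq_bregmanDiv f g η hη, bregmanDiv_self, mul_zero, add_zero]

end ScoringRule

theorem stmt3_general {d : ℕ} {S : Set (Fin d → ℝ)} {f : (Fin d → ℝ) → ℝ}
    {g : (Fin d → ℝ) → Fin d → ℝ}
    (hg : ∀ u ∈ S, ∀ v ∈ S, f u + ∑ i, g u i * (v i - u i) ≤ f v)
    {η : Fin (d + 1) → ℝ} (hηm : 0 < η (Fin.last d)) (hηS : uRatio d η ∈ S) :
    IsMinOn (fun q => ∑ j, η j * Lf3 d f g j q) {q | 0 < q (Fin.last d) ∧ uRatio d q ∈ S} η ∧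
      ∑ j, η j * Lf3 d f g j η = -η (Fin.last d) * f (uRatio d η) := by
  have entropy := sum_mul_Lf3_self f g hηm.ne'
  refine ⟨isMinOn_iff.2 fun q hq => ?_, entropy⟩
  have divergence_nonneg : 0 ≤ bregmanDiv f g (uRatio d η) (uRatio d q) :=
    bregmanDiv_nonneg_iff.2 (hg _ hq.2 _ hηS)
  rw [entropy, sum_mul_Lf3_eq_bregmanDiv f g q hηm.ne']
  exact le_add_of_nonneg_right (mul_nonneg hηm.le divergence_nonneg)

theorem stmt3 (d : ℕ) (hd : 1 ≤ d) (f : (Fin d → ℝ) → ℝ)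
    (hf : ConvexOn ℝ {t : Fin d → ℝ | ∀ i, 0 ≤ t i} f)
    (g : (Fin d → ℝ) → Fin d → ℝ)
    (hg : ∀ u v : Fin d → ℝ, (∀ i, 0 ≤ u i) → (∀ i, 0 ≤ v i) →
      f u + ∑ i, g u i * (v i - u i) ≤ f v)
    (η : Fin (d + 1) → ℝ) (hη0 : ∀ j, 0 ≤ η j) (hη1 : ∑ j, η j = 1)
    (hηm : 0 < η (Fin.last d)) :
    -- -η_m f(u^η) is a lower bound of the expected loss over q ∈ Δ_m, q_m > 0 …
    (∀ q : Fin (d + 1) → ℝ, (∀ j, 0 ≤ q j) → ∑ j, q j = 1 →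
      0 < q (Fin.last d) →
      -η (Fin.last d) * f (uRatio d η) ≤ ∑ j, η j * Lf3 d f g j q)
    ∧
    -- … and it is attained at q = η (properness, entropy = H_f(η))
    (∑ j, η j * Lf3 d f g j η = -η (Fin.last d) * f (uRatio d η)) := by
  obtain ⟨proper, entropy⟩ := stmt3_general (fun u hu v hv => hg u v hu hv) hηm (uRatio_nonneg hη0)
  exact ⟨fun q hq0 _ hqm => entropy ▸ proper ⟨hqm, uRatio_nonneg hq0⟩, entropy⟩
end

section
/- Let m ≥ 2. For β ∈ (0,1) ∪ (1,∞) and q ∈ Δ_m define ‖q‖_β = (Σ_{j=1}^m q_j^β)^{1/β} and H^r_β(q) = (‖q‖_β − 1)/(m^{1/β−1} − 1). Then for every q ∈ Δ_m with q_j > 0 for all j: (i) lim_{β→0+} H^r_β(q) = m · (∏_{j=1}^m q_j)^{1/m}; (ii) lim_{β→1} H^r_β(q) = −(log m)^{−1} Σ_{j=1}^m q_j log q_j (limit taken over β ∈ (0,1) ∪ (1,∞)); (iii) lim_{β→∞} H^r_β(q) = (1 − 1/m)^{−1} (1 − max_{j∈{1,…,m}} q_j). -/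
/-!
Everything reduces to three facts about the power mean `M_p(w, q) = (∑ j, w j * q j ^ p) ^ (1 / p)`.
As `p → 0`, for weights of total mass one, `log M_p` is the difference quotient at `0` of
`p ↦ log (∑ j, w j * q j ^ p)`, so `M_p` tends to the geometric mean. At `p = 1` it is
differentiable. As `p → ∞` it is squeezed between `w i ^ (1 / p) * q i`, for an index `i` maximizing
`q`, and `(∑ j, w j) ^ (1 / p) * max q`.

The norm `‖q‖_β` is the power mean with unit weights. For `β → 0+` it diverges like
`m ^ (1 / β)`, so one cancels this factor from the numerator and the denominator of `Hr`, which
turns the unit weights into the weights `1 / m`. For `β → 1` the entropy is a quotient of two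
difference quotients.
-/

open Finset

/-- The rescaled entropy `H^r_β(q) = (‖q‖_β - 1)/(m^{1/β-1} - 1)`. -/
noncomputable def Hr (m : ℕ) (β : ℝ) (q : Fin m → ℝ) : ℝ :=
  ((∑ j, q j ^ β) ^ (1 / β) - 1) / ((m : ℝ) ^ (1 / β - 1) - 1)

open Filter Topology

section Limits

theorem tendsto_rpow_one_div_atTop {c : ℝ} (hc : c ≠ 0) :
    Tendsto (fun p : ℝ => c ^ (1 / p)) atTop (𝓝 1) := by
  simpa using tendsto_const_nhds.rpow tendsto_inv_atTop_zero (Or.inl hc)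

theorem tendsto_inv_rpow_one_div_nhdsGT_zero {c : ℝ} (hc : 1 < c) :
    Tendsto (fun p : ℝ => (c ^ (1 / p))⁻¹) (𝓝[>] 0) (𝓝 0) := by
  simpa only [one_div, Function.comp_def] using tendsto_inv_atTop_zero.comp
    ((tendsto_rpow_atTop_of_base_gt_one c hc).comp tendsto_inv_nhdsGT_zero)

theorem tendsto_rpow_one_div_of_hasDerivAt {f : ℝ → ℝ} {f' : ℝ} (hf : HasDerivAt f f' 0)
    (hf0 : f 0 = 1) : Tendsto (fun p => f p ^ (1 / p)) (𝓝[≠] 0) (𝓝 (Real.exp f')) := by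
  have hlog : HasDerivAt (fun p => Real.log (f p)) f' 0 := by
    simpa [hf0] using hf.log (by simp [hf0])
  have hpos : ∀ᶠ p in 𝓝[≠] (0 : ℝ), 0 < f p :=
    nhdsWithin_le_nhds (hf.continuousAt.eventually_const_lt (by simp [hf0]))
  refine ((Real.continuous_exp.tendsto f').comp hlog.tendsto_slope).congr' ?_
  filter_upwards [hpos] with p hp
  simp [slope_def_field, hf0, Real.rpow_def_of_pos hp, div_eq_mul_inv]

theorem tendsto_sub_div_sub_of_hasDerivAt {𝕜 : Type*} [NontriviallyNormedField 𝕜] {f g : 𝕜 → 𝕜}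
    {f' g' a : 𝕜} (hf : HasDerivAt f f' a) (hg : HasDerivAt g g' a) (hg' : g' ≠ 0) :
    Tendsto (fun x => (f x - f a) / (g x - g a)) (𝓝[≠] a) (𝓝 (f' / g')) := by
  refine (hf.tendsto_slope.div hg.tendsto_slope hg').congr' ?_
  filter_upwards [self_mem_nhdsWithin] with x hx
  simp only [Pi.div_apply, slope_def_field]
  exact div_div_div_cancel_right₀ (sub_ne_zero.2 hx) _ _

end Limits

section PowerMean

variable {ι : Type*} [Fintype ι] {w q : ι → ℝ}

/-- The power mean `(∑ j, w j * q j ^ p) ^ (1 / p)` of exponent `p` of the family `q` with weights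
`w`. The weights need not have total mass one, so that `w = 1` gives the norm `‖q‖_p`. -/
noncomputable def powerMean (w q : ι → ℝ) (p : ℝ) : ℝ :=
  (∑ j, w j * q j ^ p) ^ (1 / p)

theorem powerMean_const_mul {c : ℝ} (hc : 0 ≤ c) (hw : ∀ j, 0 ≤ w j) (hq : ∀ j, 0 ≤ q j) (p : ℝ) :
    powerMean (fun j => c * w j) q p = c ^ (1 / p) * powerMean w q p := by
  have hsum : 0 ≤ ∑ j, w j * q j ^ p :=
    sum_nonneg fun j _ => mul_nonneg (hw j) (Real.rpow_nonneg (hq j) p)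
  simp only [powerMean, mul_assoc, ← mul_sum, Real.mul_rpow hc hsum]

theorem hasDerivAt_sum_mul_rpow (w : ι → ℝ) (hq : ∀ j, 0 < q j) (p : ℝ) :
    HasDerivAt (fun p : ℝ => ∑ j, w j * q j ^ p) (∑ j, w j * (q j ^ p * Real.log (q j))) p :=
  HasDerivAt.fun_sum fun j _ =>
    (Real.hasStrictDerivAt_const_rpow (hq j) p).hasDerivAt.const_mul (w j)

theorem tendsto_powerMean_nhdsNE_zero (hw : ∑ j, w j = 1) (hq : ∀ j, 0 < q j) :
    Tendsto (powerMean w q) (𝓝[≠] 0) (𝓝 (∏ j, q j ^ w j)) := by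
  have hexp : Real.exp (∑ j, w j * Real.log (q j)) = ∏ j, q j ^ w j := by
    rw [Real.exp_sum]
    exact prod_congr rfl fun j _ => by rw [Real.rpow_def_of_pos (hq j), mul_comm]
  rw [← hexp]
  exact tendsto_rpow_one_div_of_hasDerivAt (by simpa using hasDerivAt_sum_mul_rpow w hq 0)
    (by simpa using hw)

theorem hasDerivAt_powerMean_one (hwq : 0 < ∑ j, w j * q j) (hq : ∀ j, 0 < q j) :
    HasDerivAt (powerMean w q) (∑ j, w j * (q j * Real.log (q j)) -
      (∑ j, w j * q j) * Real.log (∑ j, w j * q j)) 1 := by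
  have hinv : HasDerivAt (fun p : ℝ => 1 / p) (-1) 1 := by
    simpa using hasDerivAt_inv (one_ne_zero (α := ℝ))
  have hmean : HasDerivAt (powerMean w q) _ 1 :=
    (hasDerivAt_sum_mul_rpow w hq 1).rpow hinv (by simpa using hwq)
  simpa [sub_eq_add_neg] using hmean

theorem mul_rpow_rpow_one_div {x y p : ℝ} (hx : 0 ≤ x) (hy : 0 ≤ y) (hp : p ≠ 0) :
    (x * y ^ p) ^ (1 / p) = x ^ (1 / p) * y := by
  rw [Real.mul_rpow hx (Real.rpow_nonneg hy p), one_div, Real.rpow_rpow_inv hy hp]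

theorem rpow_one_div_mul_le_powerMean (hw : ∀ j, 0 ≤ w j) (hq : ∀ j, 0 ≤ q j) {p : ℝ} (hp : 0 < p)
    (i : ι) : w i ^ (1 / p) * q i ≤ powerMean w q p := by
  have hterm (j : ι) : 0 ≤ w j * q j ^ p := mul_nonneg (hw j) (Real.rpow_nonneg (hq j) p)
  rw [← mul_rpow_rpow_one_div (hw i) (hq i) hp.ne']
  exact Real.rpow_le_rpow (hterm i) (single_le_sum (fun j _ => hterm j) (mem_univ i))
    (one_div_pos.2 hp).le

theorem powerMean_le_rpow_one_div_mul_iSup (hw : ∀ j, 0 ≤ w j) (hq : ∀ j, 0 ≤ q j) {p : ℝ}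
    (hp : 0 < p) : powerMean w q p ≤ (∑ j, w j) ^ (1 / p) * ⨆ j, q j := by
  rw [← mul_rpow_rpow_one_div (sum_nonneg fun j _ => hw j) (Real.iSup_nonneg hq) hp.ne', sum_mul]
  refine Real.rpow_le_rpow
    (sum_nonneg fun j _ => mul_nonneg (hw j) (Real.rpow_nonneg (hq j) p))
    (sum_le_sum fun j _ => ?_) (one_div_pos.2 hp).le
  exact mul_le_mul_of_nonneg_left
    (Real.rpow_le_rpow (hq j) (le_ciSup (Set.finite_range q).bddAbove j) hp.le) (hw j)

theorem tendsto_powerMean_atTop [Nonempty ι] (hw : ∀ j, 0 < w j) (hq : ∀ j, 0 ≤ q j) :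
    Tendsto (powerMean w q) atTop (𝓝 (⨆ j, q j)) := by
  obtain ⟨i, hi⟩ := exists_eq_ciSup_of_finite (f := q)
  have hlower : Tendsto (fun p : ℝ => w i ^ (1 / p) * q i) atTop (𝓝 (⨆ j, q j)) := by
    simpa [hi] using (tendsto_rpow_one_div_atTop (hw i).ne').mul_const (q i)
  have hupper : Tendsto (fun p : ℝ => (∑ j, w j) ^ (1 / p) * ⨆ j, q j) atTop (𝓝 (⨆ j, q j)) := by
    have hsum : 0 < ∑ j, w j := sum_pos (fun j _ => hw j) univ_nonempty
    simpa using (tendsto_rpow_one_div_atTop hsum.ne').mul_const (⨆ j, q j)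
  refine tendsto_of_tendsto_of_tendsto_of_le_of_le' hlower hupper ?_ ?_
  · filter_upwards [eventually_gt_atTop 0] with p hp
    exact rpow_one_div_mul_le_powerMean (fun j => (hw j).le) hq hp i
  · filter_upwards [eventually_gt_atTop 0] with p hp
    exact powerMean_le_rpow_one_div_mul_iSup (fun j => (hw j).le) hq hp

end PowerMean

section RescaledEntropy

variable {m : ℕ} {q : Fin m → ℝ}

theorem Hr_eq_powerMean_one (β : ℝ) (q : Fin m → ℝ) :
    Hr m β q = (powerMean 1 q β - 1) / ((m : ℝ) ^ (1 / β - 1) - 1) := by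
  simp [Hr, powerMean]

theorem Hr_eq_powerMean_inv (hm : 0 < m) (hq : ∀ j, 0 ≤ q j) (β : ℝ) :
    Hr m β q = (powerMean (fun _ => (m : ℝ)⁻¹) q β - ((m : ℝ) ^ (1 / β))⁻¹) /
      ((m : ℝ)⁻¹ - ((m : ℝ) ^ (1 / β))⁻¹) := by
  have hm0 : (0 : ℝ) < m := Nat.cast_pos.2 hm
  have hpow : (m : ℝ) ^ (1 / β) ≠ 0 := (Real.rpow_pos_of_pos hm0 _).ne'
  have hmean : powerMean 1 q β = (m : ℝ) ^ (1 / β) * powerMean (fun _ => (m : ℝ)⁻¹) q β := by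
    rw [← powerMean_const_mul hm0.le (fun _ => (inv_pos.2 hm0).le) hq]
    simp [mul_inv_cancel₀ hm0.ne', Pi.one_def]
  rw [Hr_eq_powerMean_one, hmean, Real.rpow_sub_one hm0.ne']
  conv_rhs => rw [← mul_div_mul_left _ _ hpow, mul_sub, mul_sub, mul_inv_cancel₀ hpow,
    ← div_eq_mul_inv]

theorem tendsto_Hr_nhdsGT_zero (hm : 1 < m) (hq : ∀ j, 0 < q j) :
    Tendsto (fun β => Hr m β q) (𝓝[>] 0) (𝓝 (m * (∏ j, q j) ^ (m : ℝ)⁻¹)) := by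
  have hm1 : (1 : ℝ) < m := Nat.one_lt_cast.2 hm
  have hm0 : (m : ℝ) ≠ 0 := (zero_lt_one.trans hm1).ne'
  have hmean : Tendsto (powerMean (fun _ => (m : ℝ)⁻¹) q) (𝓝[>] 0)
      (𝓝 ((∏ j, q j) ^ (m : ℝ)⁻¹)) := by
    rw [← Real.finsetProd_rpow _ _ fun j _ => (hq j).le]
    exact (tendsto_powerMean_nhdsNE_zero (by simp [hm0]) hq).mono_left (nhdsGT_le_nhdsNE 0)
  have hpow := tendsto_inv_rpow_one_div_nhdsGT_zero hm1
  have hquot := (hmean.sub hpow).div (hpow.const_sub (m : ℝ)⁻¹)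
    (by simpa only [sub_zero] using inv_ne_zero hm0)
  rw [sub_zero, sub_zero, div_inv_eq_mul, mul_comm] at hquot
  exact hquot.congr fun β =>
    (Hr_eq_powerMean_inv (zero_lt_one.trans hm) (fun j => (hq j).le) β).symm

theorem tendsto_Hr_nhdsNE_one (hm : 1 < m) (hq : ∀ j, 0 < q j) (hsum : ∑ j, q j = 1) :
    Tendsto (fun β => Hr m β q) (𝓝[≠] 1) (𝓝 (-(Real.log m)⁻¹ * ∑ j, q j * Real.log (q j))) := by
  have hm1 : (1 : ℝ) < m := Nat.one_lt_cast.2 hm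
  have hnum : HasDerivAt (powerMean 1 q) (∑ j, q j * Real.log (q j)) 1 := by
    simpa [hsum] using hasDerivAt_powerMean_one (w := 1) (by simp [hsum]) hq
  have hden : HasDerivAt (fun β : ℝ => (m : ℝ) ^ (1 / β - 1)) (-Real.log m) 1 := by
    simpa using ((hasDerivAt_inv (one_ne_zero (α := ℝ))).sub_const 1).const_rpow
      (zero_lt_one.trans hm1)
  rw [← inv_neg, ← div_eq_inv_mul]
  refine (tendsto_sub_div_sub_of_hasDerivAt hnum hden
    (neg_ne_zero.2 (Real.log_pos hm1).ne')).congr fun β => ?_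
  simp [Hr_eq_powerMean_one, powerMean, hsum]

theorem tendsto_Hr_atTop (hm : 1 < m) (hq : ∀ j, 0 ≤ q j) :
    Tendsto (fun β => Hr m β q) atTop (𝓝 ((1 - (m : ℝ)⁻¹)⁻¹ * (1 - ⨆ j, q j))) := by
  have hm1 : (1 : ℝ) < m := Nat.one_lt_cast.2 hm
  have hm0 : (m : ℝ) ≠ 0 := (zero_lt_one.trans hm1).ne'
  have : Nonempty (Fin m) := ⟨0, zero_lt_one.trans hm⟩
  have hmean : Tendsto (powerMean 1 q) atTop (𝓝 (⨆ j, q j)) :=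
    tendsto_powerMean_atTop (fun _ => one_pos) hq
  have hpow : Tendsto (fun β : ℝ => (m : ℝ) ^ (1 / β - 1)) atTop (𝓝 (m : ℝ)⁻¹) := by
    simpa [Real.rpow_sub_one hm0] using (tendsto_rpow_one_div_atTop hm0).div_const (m : ℝ)
  have hquot := (hmean.sub_const 1).div (hpow.sub_const 1)
    (sub_neg.2 (inv_lt_one_of_one_lt₀ hm1)).ne
  rw [← div_eq_inv_mul, ← neg_div_neg_eq, neg_sub, neg_sub]
  exact hquot.congr fun β => (Hr_eq_powerMean_one β q).symm

end RescaledEntropy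

theorem stmt4 (d : ℕ) (hd : 1 ≤ d) (q : Fin (d + 1) → ℝ)
    (hq0 : ∀ j, 0 < q j) (hq1 : ∑ j, q j = 1) :
    -- (i) β → 0+ : simultaneous exponential entropy
    Filter.Tendsto (fun β => Hr (d + 1) β q) (nhdsWithin 0 (Set.Ioi 0))
      (nhds (((d : ℝ) + 1) * (∏ j, q j) ^ (((d : ℝ) + 1)⁻¹)))
    ∧
    -- (ii) β → 1 over (0,1) ∪ (1,∞) : rescaled Shannon entropy
    Filter.Tendsto (fun β => Hr (d + 1) β q)
      (nhdsWithin 1 (Set.Ioo (0 : ℝ) 1 ∪ Set.Ioi 1))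
      (nhds (-(Real.log ((d : ℝ) + 1))⁻¹ * ∑ j, q j * Real.log (q j)))
    ∧
    -- (iii) β → ∞ : rescaled zero-one entropy
    Filter.Tendsto (fun β => Hr (d + 1) β q) Filter.atTop
      (nhds ((1 - ((d : ℝ) + 1)⁻¹)⁻¹ * (1 - ⨆ j, q j))) := by
  have hm : 1 < d + 1 := Nat.lt_add_of_pos_left hd
  have hne : Set.Ioo (0 : ℝ) 1 ∪ Set.Ioi 1 ⊆ {1}ᶜ :=
    Set.union_subset (fun _ hβ => hβ.2.ne) (fun _ hβ => ne_of_gt hβ)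
  rw [← Nat.cast_add_one]
  exact ⟨tendsto_Hr_nhdsGT_zero hm hq0,
    (tendsto_Hr_nhdsNE_one hm hq0 hq1).mono_left (nhdsWithin_mono 1 hne),
    tendsto_Hr_atTop hm fun j => (hq0 j).le⟩
end

section
/- Let m ≥ 2 and β ∈ (0,1). The function g : ℝ^{m−1} → ℝ defined by g(x) = (1 + Σ_{i=1}^{m−1} exp(β x_i))^{1/β − 1} is convex on ℝ^{m−1}. Consequently, the composite loss L_β(j, q^h) = {1 + Σ_{i≠j} exp(β(h_i − h_j))}^{1/β − 1}, obtained from the L_β scoring rule under the multinomial logistic link, is a convex function of h ∈ ℝ^m for each j ∈ {1,…,m}. -/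
open Finset

/-! Each `exp (f i x)` with `f i` convex is log-convex in `x`. Log-convexity survives finite sums,
by Hölder's inequality with exponents `a⁻¹` and `b⁻¹`, and nonnegative powers, and it implies
convexity by the weighted AM-GM inequality. -/

section LogConvexOn

variable {ι E : Type*} [AddCommMonoid E] {s : Set E}

/-- A nonnegative function `f` is log-convex on `s` if its logarithm is convex there. The condition
is put multiplicatively, with strictly positive weights, so that `f` may vanish and the junk values
`Real.log 0 = 0` and `0 ^ 0 = 1` never enter. -/
structure LogConvexOn [SMul ℝ E] (s : Set E) (f : E → ℝ) : Prop where
  convex : Convex ℝ s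
  nonneg : ∀ ⦃x⦄, x ∈ s → 0 ≤ f x
  map_le_rpow_mul_rpow : ∀ ⦃x⦄, x ∈ s → ∀ ⦃y⦄, y ∈ s → ∀ ⦃a b : ℝ⦄, 0 < a → 0 < b → a + b = 1 →
    f (a • x + b • y) ≤ f x ^ a * f y ^ b

theorem sum_rpow_mul_rpow_le (t : Finset ι) {u v : ι → ℝ} (hu : ∀ i ∈ t, 0 ≤ u i)
    (hv : ∀ i ∈ t, 0 ≤ v i) {a b : ℝ} (ha : 0 < a) (hb : 0 < b) (hab : a + b = 1) :
    ∑ i ∈ t, u i ^ a * v i ^ b ≤ (∑ i ∈ t, u i) ^ a * (∑ i ∈ t, v i) ^ b := by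
  have rpow_rpow_inv_sum {w : ι → ℝ} (hw : ∀ i ∈ t, 0 ≤ w i) {c : ℝ} (hc : 0 < c) :
      ∑ i ∈ t, (w i ^ c) ^ c⁻¹ = ∑ i ∈ t, w i :=
    sum_congr rfl fun i hi => Real.rpow_rpow_inv (hw i hi) hc.ne'
  have holder := Real.inner_le_Lp_mul_Lq_of_nonneg t (Real.HolderConjugate.inv_inv ha hb hab)
    (fun i hi => Real.rpow_nonneg (hu i hi) a) (fun i hi => Real.rpow_nonneg (hv i hi) b)
  simpa only [rpow_rpow_inv_sum hu ha, rpow_rpow_inv_sum hv hb, one_div, inv_inv] using holder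

theorem logConvexOn_exp [SMul ℝ E] {f : E → ℝ} (hf : ConvexOn ℝ s f) :
    LogConvexOn s fun x => Real.exp (f x) where
  convex := hf.1
  nonneg _ _ := (Real.exp_pos _).le
  map_le_rpow_mul_rpow x hx y hy a b ha hb hab :=
    calc Real.exp (f (a • x + b • y))
        ≤ Real.exp (a * f x + b * f y) := Real.exp_le_exp.2 (hf.2 hx hy ha.le hb.le hab)
      _ = Real.exp (f x) ^ a * Real.exp (f y) ^ b := by
        rw [Real.exp_add, mul_comm a, mul_comm b, Real.exp_mul, Real.exp_mul]

namespace LogConvexOn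

theorem sum [SMul ℝ E] (hs : Convex ℝ s) {t : Finset ι} {f : ι → E → ℝ}
    (hf : ∀ i ∈ t, LogConvexOn s (f i)) : LogConvexOn s fun x => ∑ i ∈ t, f i x where
  convex := hs
  nonneg _ hx := sum_nonneg fun i hi => (hf i hi).nonneg hx
  map_le_rpow_mul_rpow x hx y hy a b ha hb hab :=
    calc ∑ i ∈ t, f i (a • x + b • y)
        ≤ ∑ i ∈ t, f i x ^ a * f i y ^ b :=
          sum_le_sum fun i hi => (hf i hi).map_le_rpow_mul_rpow hx hy ha hb hab
      _ ≤ (∑ i ∈ t, f i x) ^ a * (∑ i ∈ t, f i y) ^ b :=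
          sum_rpow_mul_rpow_le t (fun i hi => (hf i hi).nonneg hx)
            (fun i hi => (hf i hi).nonneg hy) ha hb hab

theorem rpow [SMul ℝ E] {f : E → ℝ} (hf : LogConvexOn s f) {p : ℝ} (hp : 0 ≤ p) :
    LogConvexOn s fun x => f x ^ p where
  convex := hf.convex
  nonneg _ hx := Real.rpow_nonneg (hf.nonneg hx) p
  map_le_rpow_mul_rpow x hx y hy a b ha hb hab := by
    have hfx := hf.nonneg hx
    have hfy := hf.nonneg hy
    calc f (a • x + b • y) ^ p
        ≤ (f x ^ a * f y ^ b) ^ p :=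
          Real.rpow_le_rpow (hf.nonneg (hf.convex hx hy ha.le hb.le hab))
            (hf.map_le_rpow_mul_rpow hx hy ha hb hab) hp
      _ = (f x ^ p) ^ a * (f y ^ p) ^ b := by
          rw [Real.mul_rpow (by positivity) (by positivity), ← Real.rpow_mul hfx,
            ← Real.rpow_mul hfy, ← Real.rpow_mul hfx, ← Real.rpow_mul hfy, mul_comm a, mul_comm b]

theorem convexOn [Module ℝ E] {f : E → ℝ} (hf : LogConvexOn s f) : ConvexOn ℝ s f :=
  convexOn_iff_forall_pos.2 ⟨hf.convex, fun _ hx _ hy _ _ ha hb hab =>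
    (hf.map_le_rpow_mul_rpow hx hy ha hb hab).trans
      (Real.geom_mean_le_arith_mean2_weighted ha.le hb.le (hf.nonneg hx) (hf.nonneg hy) hab)⟩

end LogConvexOn

theorem convexOn_one_add_sum_exp_rpow [Module ℝ E] (hs : Convex ℝ s) {t : Finset ι}
    {f : ι → E → ℝ} (hf : ∀ i ∈ t, ConvexOn ℝ s (f i)) {p : ℝ} (hp : 0 ≤ p) :
    ConvexOn ℝ s fun x => (1 + ∑ i ∈ t, Real.exp (f i x)) ^ p := by
  -- The summand `1 = exp 0` is one more exponential, indexed by `none`.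
  have exponent_convexOn : ∀ i ∈ insertNone t, ConvexOn ℝ s (fun x => i.elim 0 (f · x)) := by
    rw [forall_mem_insertNone]
    exact ⟨convexOn_const 0 hs, hf⟩
  simpa only [sum_insertNone, Option.elim, Real.exp_zero] using
    ((LogConvexOn.sum hs fun i hi => logConvexOn_exp (exponent_convexOn i hi)).rpow hp).convexOn

end LogConvexOn

theorem stmt5_general {ι κ : Type*} [Fintype ι] [Fintype κ] [DecidableEq κ] (β : ℝ) {p : ℝ}
    (hp : 0 ≤ p) :
    ConvexOn ℝ Set.univ (fun x : ι → ℝ => (1 + ∑ i, Real.exp (β * x i)) ^ p) ∧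
    ∀ j : κ, ConvexOn ℝ Set.univ
      (fun h : κ → ℝ => (1 + ∑ i ∈ univ.erase j, Real.exp (β * (h i - h j))) ^ p) :=
  ⟨convexOn_one_add_sum_exp_rpow convex_univ
      (fun i _ => (β • LinearMap.proj (R := ℝ) (φ := fun _ : ι => ℝ) i).convexOn convex_univ) hp,
    fun j => convexOn_one_add_sum_exp_rpow convex_univ
      (fun i _ => (β • (LinearMap.proj (R := ℝ) (φ := fun _ : κ => ℝ) i -
        LinearMap.proj j)).convexOn convex_univ) hp⟩

theorem stmt5 (m : ℕ) (hm : 2 ≤ m) (β : ℝ) (hβ : β ∈ Set.Ioo (0 : ℝ) 1) :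
    -- g(x) = (1 + Σ exp(β x_i))^{1/β - 1} is convex on ℝ^{m-1}
    ConvexOn ℝ Set.univ
      (fun x : Fin (m - 1) → ℝ =>
        (1 + ∑ i, Real.exp (β * x i)) ^ (1 / β - 1))
    ∧
    -- hence the composite loss L_β(j, q^h) is convex in h for each j
    ∀ j : Fin m, ConvexOn ℝ Set.univ
      (fun h : Fin m → ℝ =>
        (1 + ∑ i ∈ Finset.univ.erase j, Real.exp (β * (h i - h j))) ^ (1 / β - 1)) :=
  stmt5_general β (sub_nonneg.2 (one_le_one_div hβ.1 hβ.2.le))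
end

section
/- Let m ≥ 2 and let C = (c_{jk}) be a cost matrix. Define f^{cw} : ℝ_{≥0}^{m−1} → ℝ by f^{cw}(t) = max_{k∈{1,…,m}} ( −(Σ_{j=1}^{m−1} c_{jk} t_j + c_{mk}) ). Then for every s ∈ ℝ^{m−1}, in ℝ ∪ {+∞}: sup_{t ∈ ℝ_{≥0}^{m−1}} (⟨s, t⟩ − f^{cw}(t)) = inf { Σ_{k=1}^m c_{mk} λ_k : λ ∈ Δ_m and s_j ≤ −Σ_{k=1}^m c_{jk} λ_k for every j ∈ {1,…,m−1} }, where the infimum over the empty set is +∞. In particular the supremum is finite if and only if the constraint set is nonempty, and in that case the infimum is attained. -/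
open Finset

/-- `f^{cw}(t) = max_k ( -(Σ_{j<m} c_{jk} t_j + c_{mk}) )` with `m = d+1`. -/
noncomputable def fcw (d : ℕ) (C : Fin (d + 1) → Fin (d + 1) → ℝ)
    (t : Fin d → ℝ) : ℝ :=
  ⨆ k : Fin (d + 1), -(∑ j : Fin d, C j.castSucc k * t j + C (Fin.last d) k)

/-- The constraint set `{λ ∈ Δ_m : s_j ≤ -(Cλ)_j for j ∈ [m-1]}`. -/
def cwFeas (d : ℕ) (C : Fin (d + 1) → Fin (d + 1) → ℝ) (s : Fin d → ℝ)
    (lam : Fin (d + 1) → ℝ) : Prop :=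
  (∀ k, 0 ≤ lam k) ∧ ∑ k, lam k = 1 ∧
    ∀ j : Fin d, s j ≤ -∑ k, C j.castSucc k * lam k

/-!
The program `inf {⟨b, λ⟩ : λ ∈ Δ, s + A λ ≤ 0}`, with `b = (c_{mk})_k` and `A = (c_{jk})_{j < m}`,
has the Lagrangian `L(λ, t) = ⟨b, λ⟩ + ⟨s + A λ, t⟩`. Its supremum over `t ≥ 0` is `⟨b, λ⟩` at
feasible `λ` and `+∞` elsewhere; its infimum over the simplex is attained at a vertex and equals
`⟨s, t⟩ - f^{cw}(t)`. Since the simplex is compact, Sion's minimax theorem exchanges the two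
without any constraint qualification.
-/

open scoped Matrix

section Lagrangian

variable {E ι : Type*} [Fintype ι] {f : E → ℝ} {g : E → ι → ℝ} {x : E}

/-- The Lagrangian of the program "minimise `f` subject to `g ≤ 0`", with multipliers `t`. -/
def lagrangian (f : E → ℝ) (g : E → ι → ℝ) (x : E) (t : ι → ℝ) : ℝ :=
  f x + g x ⬝ᵥ t

theorem continuous_lagrangian_right : Continuous (lagrangian f g x) :=
  continuous_const.add (continuous_const.dotProduct continuous_id)

theorem concaveOn_lagrangian_right : ConcaveOn ℝ (Set.Ici 0) (lagrangian f g x) :=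
  (concaveOn_const (f x) (convex_Ici 0)).add
    ((dotProductBilin ℝ ℝ (g x)).concaveOn (convex_Ici 0))

theorem iSup_lagrangian_of_nonpos (hx : g x ≤ 0) :
    ⨆ t ∈ Set.Ici 0, (lagrangian f g x t : EReal) = f x := by
  refine le_antisymm (iSup₂_le fun t ht ↦ ?_) ?_
  · have hle : g x ⬝ᵥ t ≤ 0 := by
      simpa using dotProduct_le_dotProduct_of_nonneg_right hx ht
    exact EReal.coe_le_coe_iff.2 (add_le_of_nonpos_right hle)
  · exact le_iSup₂_of_le 0 Set.self_mem_Ici (by simp [lagrangian])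

theorem iSup_lagrangian_of_not_nonpos (hx : ¬ g x ≤ 0) :
    ⨆ t ∈ Set.Ici 0, (lagrangian f g x t : EReal) = ⊤ := by
  classical
  obtain ⟨i, hi⟩ : ∃ i, 0 < g x i := by simpa [Pi.le_def] using hx
  refine (EReal.eq_top_iff_forall_lt _).2 fun r ↦ ?_
  obtain ⟨c, hc, hrc⟩ : ∃ c : ℝ, 0 ≤ c ∧ r < f x + g x i * c := by
    refine ⟨(|r - f x| + 1) / g x i, by positivity, ?_⟩
    rw [mul_div_cancel₀ _ hi.ne']
    linarith [le_abs_self (r - f x)]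
  refine lt_of_lt_of_le (EReal.coe_lt_coe_iff.2 hrc) ?_
  exact le_iSup₂_of_le (Pi.single i c) (Pi.single_nonneg.2 hc) (by simp [lagrangian])

variable [TopologicalSpace E] [AddCommGroup E] [Module ℝ E] [IsTopologicalAddGroup E]
  [ContinuousSMul ℝ E] {X : Set E}

theorem iSup_iInf_lagrangian_eq_iInf_constrained (hne : X.Nonempty) (hconv : Convex ℝ X)
    (hcomp : IsCompact X) (hlsc : ∀ t, 0 ≤ t → LowerSemicontinuousOn (lagrangian f g · t) X)
    (hqc : ∀ t, 0 ≤ t → QuasiconvexOn ℝ X (lagrangian f g · t)) :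
    ⨆ t ∈ Set.Ici 0, ⨅ x ∈ X, (lagrangian f g x t : EReal) =
      ⨅ x ∈ {x ∈ X | g x ≤ 0}, (f x : EReal) := by
  have hmono : Monotone ((↑) : ℝ → EReal) := EReal.coe_strictMono.monotone
  have minimax : ⨅ x ∈ X, ⨆ t ∈ Set.Ici 0, (lagrangian f g x t : EReal) =
      ⨆ t ∈ Set.Ici 0, ⨅ x ∈ X, (lagrangian f g x t : EReal) :=
    Sion.minimax' hne hconv hcomp
      (fun t ht ↦ continuous_coe_real_ereal.comp_lowerSemicontinuousOn (hlsc t ht) hmono)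
      (fun t ht ↦ (hqc t ht).monotone_comp (g := Real.toEReal) hmono) (convex_Ici 0)
      (fun x _ ↦ (continuous_coe_real_ereal.comp
        continuous_lagrangian_right).upperSemicontinuous.upperSemicontinuousOn _)
      (fun x _ ↦ concaveOn_lagrangian_right.quasiconcaveOn.monotone_comp (g := Real.toEReal) hmono)
  rw [← minimax]
  simp only [Set.mem_ofPred_eq, iInf_and]
  refine iInf_congr fun x ↦ iInf_congr fun _ ↦ ?_
  by_cases hx : g x ≤ 0
  · simp only [iSup_lagrangian_of_nonpos hx, hx, iInf_pos]
  · simp only [iSup_lagrangian_of_not_nonpos hx, hx, iInf_neg, not_false_eq_true]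

end Lagrangian

section Simplex

variable {ι κ : Type*} [Fintype κ]

theorem dotProduct_le_iSup_of_mem_stdSimplex (u : κ → ℝ) {l : κ → ℝ} (hl : l ∈ stdSimplex ℝ κ) :
    u ⬝ᵥ l ≤ ⨆ k, u k :=
  calc
    u ⬝ᵥ l ≤ (fun _ ↦ ⨆ k, u k) ⬝ᵥ l :=
      dotProduct_le_dotProduct_of_nonneg_right
        (le_ciSup (Set.finite_range u).bddAbove) hl.1
    _ = ⨆ k, u k := by simp only [dotProduct, ← Finset.mul_sum, hl.2, mul_one]

theorem iInf_stdSimplex_sub_dotProduct [Nonempty κ] (a : ℝ) (u : κ → ℝ) :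
    ⨅ l ∈ stdSimplex ℝ κ, ((a - u ⬝ᵥ l : ℝ) : EReal) = ((a - ⨆ k, u k : ℝ) : EReal) := by
  classical
  obtain ⟨k, hk⟩ := exists_eq_ciSup_of_finite (f := u)
  refine le_antisymm ?_ (le_iInf₂ fun l hl ↦ ?_)
  · exact iInf₂_le_of_le (Pi.single k 1) (single_mem_stdSimplex ℝ k) (by simp [hk])
  · exact EReal.coe_le_coe_iff.2 (sub_le_sub_left (dotProduct_le_iSup_of_mem_stdSimplex u hl) a)

/-- The constraint set `{λ ∈ Δ : s ≤ -Aλ}` of the linear program dual to `⟨s, t⟩ - max (-(Aᵀt + b))`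
over `t ≥ 0`, for a matrix of any shape. -/
def feasibleSet (A : Matrix ι κ ℝ) (s : ι → ℝ) : Set (κ → ℝ) :=
  {l | (∀ k, 0 ≤ l k) ∧ ∑ k, l k = 1 ∧ s ≤ -(A *ᵥ l)}

variable (A : Matrix ι κ ℝ) (b : κ → ℝ) (s : ι → ℝ)

theorem feasibleSet_eq : feasibleSet A s = {l ∈ stdSimplex ℝ κ | s + A *ᵥ l ≤ 0} := by
  ext l
  simp only [feasibleSet, stdSimplex, Set.mem_ofPred_eq, and_assoc, le_neg_iff_add_nonpos_right]

theorem isCompact_feasibleSet : IsCompact (feasibleSet A s) := by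
  rw [feasibleSet_eq]
  exact (isCompact_stdSimplex ℝ κ).inter_right <|
    isClosed_le (continuous_const.add (continuous_const.matrix_mulVec continuous_id))
      continuous_const

variable [Fintype ι]

theorem lagrangian_linear_eq (l : κ → ℝ) (t : ι → ℝ) :
    lagrangian (b ⬝ᵥ ·) (s + A *ᵥ ·) l t = s ⬝ᵥ t - -(Aᵀ *ᵥ t + b) ⬝ᵥ l := by
  have adjoint : A *ᵥ l ⬝ᵥ t = Aᵀ *ᵥ t ⬝ᵥ l := by
    rw [dotProduct_comm, Matrix.dotProduct_mulVec, Matrix.mulVec_transpose]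
  simp only [lagrangian, add_dotProduct, neg_dotProduct, adjoint]
  ring

theorem iSup_sub_iSup_eq_iInf_feasibleSet [Nonempty κ] :
    ⨆ t : {t : ι → ℝ // 0 ≤ t}, ((s ⬝ᵥ t.1 - ⨆ k, -(Aᵀ *ᵥ t.1 + b) k : ℝ) : EReal) =
      ⨅ l : feasibleSet A s, ((b ⬝ᵥ l.1 : ℝ) : EReal) := by
  have hconv := convex_stdSimplex ℝ κ
  have hcont (t : ι → ℝ) : Continuous (lagrangian (b ⬝ᵥ ·) (s + A *ᵥ ·) · t) := by
    simp only [lagrangian_linear_eq]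
    exact continuous_const.sub (continuous_const.dotProduct continuous_id)
  have hconvex (t : ι → ℝ) :
      ConvexOn ℝ (stdSimplex ℝ κ) (lagrangian (b ⬝ᵥ ·) (s + A *ᵥ ·) · t) := by
    simp only [lagrangian_linear_eq]
    exact (convexOn_const _ hconv).sub ((dotProductBilin ℝ ℝ _).concaveOn hconv)
  have duality := iSup_iInf_lagrangian_eq_iInf_constrained
    (Set.nonempty_coe_sort.1 inferInstance) hconv (isCompact_stdSimplex ℝ κ)
    (fun t _ ↦ (hcont t).lowerSemicontinuous.lowerSemicontinuousOn _)
    (fun t _ ↦ (hconvex t).quasiconvexOn)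
  simpa only [lagrangian_linear_eq, iInf_stdSimplex_sub_dotProduct, ← feasibleSet_eq,
    Pi.neg_apply, iSup_subtype, iInf_subtype, Set.mem_Ici] using duality

theorem stmt6_general [Nonempty κ] :
    ((⨆ t : {t : ι → ℝ // 0 ≤ t}, ((s ⬝ᵥ t.1 - ⨆ k, -(Aᵀ *ᵥ t.1 + b) k : ℝ) : EReal))
      = ⨅ l : feasibleSet A s, ((b ⬝ᵥ l.1 : ℝ) : EReal))
    ∧
    ((⨆ t : {t : ι → ℝ // 0 ≤ t}, ((s ⬝ᵥ t.1 - ⨆ k, -(Aᵀ *ᵥ t.1 + b) k : ℝ) : EReal)) < ⊤ ↔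
      (feasibleSet A s).Nonempty)
    ∧
    ((feasibleSet A s).Nonempty →
      ∃ l₀ ∈ feasibleSet A s, ∀ l ∈ feasibleSet A s, b ⬝ᵥ l₀ ≤ b ⬝ᵥ l) := by
  have duality := iSup_sub_iSup_eq_iInf_feasibleSet A b s
  refine ⟨duality, ?_, fun hne ↦ ?_⟩
  · simp only [duality, iInf_lt_iff, EReal.coe_lt_top, exists_const_iff, and_true,
      Set.nonempty_coe_sort]
  · exact (isCompact_feasibleSet A s).exists_isMinOn hne
      (continuous_const.dotProduct continuous_id).continuousOn

end Simplex

theorem stmt6 (d : ℕ) (hd : 1 ≤ d) (C : Fin (d + 1) → Fin (d + 1) → ℝ)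
    (hC0 : ∀ j, C j j = 0) (hCnn : ∀ j k, 0 ≤ C j k)
    (hCpos : ∀ j, ∃ k, k ≠ j ∧ 0 < C j k) (s : Fin d → ℝ) :
    -- equality in ℝ ∪ {+∞} (the infimum over an empty index type is ⊤ in EReal)
    ((⨆ t : {t : Fin d → ℝ // ∀ i, 0 ≤ t i},
        ((∑ i, s i * t.1 i - fcw d C t.1 : ℝ) : EReal))
      = ⨅ lam : {lam : Fin (d + 1) → ℝ // cwFeas d C s lam},
          ((∑ k, C (Fin.last d) k * lam.1 k : ℝ) : EReal))
    ∧
    -- the supremum is finite iff the constraint set is nonempty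
    ((⨆ t : {t : Fin d → ℝ // ∀ i, 0 ≤ t i},
        ((∑ i, s i * t.1 i - fcw d C t.1 : ℝ) : EReal)) < ⊤ ↔
      ∃ lam : Fin (d + 1) → ℝ, cwFeas d C s lam)
    ∧
    -- and in that case the infimum is attained
    ((∃ lam : Fin (d + 1) → ℝ, cwFeas d C s lam) →
      ∃ lam₀ : Fin (d + 1) → ℝ, cwFeas d C s lam₀ ∧
        ∀ lam : Fin (d + 1) → ℝ, cwFeas d C s lam →
          ∑ k, C (Fin.last d) k * lam₀ k ≤ ∑ k, C (Fin.last d) k * lam k) :=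
  stmt6_general (.of fun j : Fin d ↦ C j.castSucc) (C (Fin.last d)) s
end

section
/- Let m ≥ 2. Then: (a) for each j ∈ {1,…,m}, the map τ ↦ L^{zo4}(j, τ) is convex on ℝ^{m−1}; (b) if τ̃ := (τ_1, …, τ_{m−1}, 1 − Σ_{k=1}^{m−1} τ_k) ∈ Δ_m, then L^{zo4}(j, τ) = 1 − τ̃_j for every j ∈ {1,…,m}; (c) for every η ∈ Δ_m, inf_{τ ∈ ℝ^{m−1}} Σ_{j=1}^m η_j L^{zo4}(j, τ) = 1 − max_{k∈{1,…,m}} η_k. -/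
open Finset

/-- `τ̃ = (τ_1, …, τ_{m-1}, 1 - Σ τ_k)`. -/
noncomputable def tauTilde (d : ℕ) (τ : Fin d → ℝ) : Fin (d + 1) → ℝ :=
  Fin.snoc τ (1 - ∑ i, τ i)

/-- `S_τ^{(j)} = max{0, max_{1≤l≤m-1} (τ̃_j + τ̃_{j(1)} + … + τ̃_{j(l-1)} - 1)/l}`.
Since the sum of the `l-1` largest components of `τ̃` other than `τ̃_j` equals the
maximum over subsets `A` of `{1,…,m}\{j}` of cardinality `l-1` of `Σ_{k∈A} τ̃_k`,
this is the supremum of `0` together with all `(τ̃_j + Σ_{k∈A} τ̃_k - 1)/(|A|+1)`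
over subsets `A ⊆ {1,…,m}\{j}` with `|A| ≤ m-2`. -/
noncomputable def Szo4 (d : ℕ) (τt : Fin (d + 1) → ℝ) (j : Fin (d + 1)) : ℝ :=
  sSup (insert 0 {x : ℝ | ∃ A : Finset (Fin (d + 1)),
    A ⊆ Finset.univ.erase j ∧ A.card ≤ d - 1 ∧
    x = (τt j + ∑ k ∈ A, τt k - 1) / (A.card + 1)})

/-- The hinge-like loss `L^{zo4}(j,τ) = 1 - τ̃_j + S_τ^{(j)}`. -/
noncomputable def Lzo4 (d : ℕ) (j : Fin (d + 1)) (τ : Fin d → ℝ) : ℝ :=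
  1 - tauTilde d τ j + Szo4 d (tauTilde d τ) j

/-!
For `t` of total mass one, the numbers `t_j - S^{(j)}` have sum at most one over every set `B` of
indices: if `B` is proper, each `j ∈ B` has `|B| S^{(j)} ≥ ∑_{k ∈ B} t_k - 1`, and averaging these
inequalities over `B` gives the claim; if `B` is everything, `S ≥ 0` suffices. Since `η ≤ max η`,
restricting to the indices where `t_j - S^{(j)}` is positive bounds the risk
`∑ η_j L_j = 1 - ∑ η_j (t_j - S^{(j)})` below by `1 - max η`. On the simplex `S` vanishes, so the
vertex at a maximizer of `η` attains this bound.
-/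

theorem sum_mul_le_mul_of_forall_sum_le {ι R : Type*} [Ring R] [LinearOrder R] [IsOrderedRing R]
    {s : Finset ι} {w x : ι → R} {M C : R} (hM : 0 ≤ M) (hw : ∀ i ∈ s, 0 ≤ w i)
    (hwM : ∀ i ∈ s, w i ≤ M) (hx : ∀ B ⊆ s, ∑ i ∈ B, x i ≤ C) :
    ∑ i ∈ s, w i * x i ≤ M * C := by
  calc ∑ i ∈ s, w i * x i
      ≤ ∑ i ∈ s, M * (if 0 < x i then x i else 0) := by
        refine sum_le_sum fun i hi => ?_
        split_ifs with hpos
        · exact mul_le_mul_of_nonneg_right (hwM i hi) hpos.le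
        · rw [mul_zero]
          exact mul_nonpos_of_nonneg_of_nonpos (hw i hi) (not_lt.1 hpos)
    _ = M * ∑ i ∈ s with 0 < x i, x i := by rw [← mul_sum, sum_filter]
    _ ≤ M * C := mul_le_mul_of_nonneg_left (hx _ (filter_subset _ _)) hM

section

variable {d : ℕ}

theorem sum_tauTilde (τ : Fin d → ℝ) : ∑ k, tauTilde d τ k = 1 := by
  simp [tauTilde, Fin.sum_univ_castSucc]

theorem tauTilde_init {t : Fin (d + 1) → ℝ} (ht : ∑ k, t k = 1) :
    tauTilde d (Fin.init t) = t := by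
  have hlast : 1 - ∑ i, Fin.init t i = t (Fin.last d) := by
    rw [← ht, Fin.sum_univ_castSucc]
    exact add_sub_cancel_left _ _
  rw [tauTilde, hlast, Fin.snoc_init_self]

theorem tauTilde_smul_add_smul (x y : Fin d → ℝ) {a b : ℝ} (hab : a + b = 1) :
    tauTilde d (a • x + b • y) = a • tauTilde d x + b • tauTilde d y := by
  funext k
  cases k using Fin.lastCases with
  | last =>
    simp only [tauTilde, Fin.snoc_last, Pi.add_apply, Pi.smul_apply, smul_eq_mul,
      sum_add_distrib, ← mul_sum]
    linear_combination -hab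
  | cast i => simp [tauTilde]

theorem szo4_le_iff {t : Fin (d + 1) → ℝ} {j : Fin (d + 1)} {c : ℝ} :
    Szo4 d t j ≤ c ↔ 0 ≤ c ∧ ∀ A ⊆ univ.erase j, #A ≤ d - 1 →
      t j + ∑ k ∈ A, t k - 1 ≤ c * (#A + 1) := by
  have hbdd : BddAbove (insert 0 {x : ℝ | ∃ A ⊆ univ.erase j, #A ≤ d - 1 ∧
      x = (t j + ∑ k ∈ A, t k - 1) / (#A + 1)}) := by
    refine (((Set.toFinite (Set.range fun A : Finset (Fin (d + 1)) =>
      (t j + ∑ k ∈ A, t k - 1) / (#A + 1))).subset ?_).insert 0).bddAbove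
    rintro x ⟨A, -, -, rfl⟩
    exact ⟨A, rfl⟩
  have hpos (A : Finset (Fin (d + 1))) : (0 : ℝ) < #A + 1 := by positivity
  rw [Szo4, csSup_le_iff hbdd (Set.insert_nonempty _ _), Set.forall_mem_insert]
  refine and_congr_right fun _ => ⟨fun h A hA hcard => ?_, ?_⟩
  · exact (div_le_iff₀ (hpos A)).1 (h _ ⟨A, hA, hcard, rfl⟩)
  · rintro h x ⟨A, hA, hcard, rfl⟩
    exact (div_le_iff₀ (hpos A)).2 (h A hA hcard)

theorem szo4_nonneg (t : Fin (d + 1) → ℝ) (j : Fin (d + 1)) : 0 ≤ Szo4 d t j :=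
  (szo4_le_iff.1 le_rfl).1

theorem sum_sub_one_le_szo4_mul_card (t : Fin (d + 1) → ℝ) {B : Finset (Fin (d + 1))}
    (hB : B ≠ univ) {j : Fin (d + 1)} (hj : j ∈ B) :
    ∑ k ∈ B, t k - 1 ≤ Szo4 d t j * #B := by
  have hlt : #B < d + 1 := by simpa using (card_lt_iff_ne_univ B).2 hB
  have hle := (szo4_le_iff.1 (le_refl (Szo4 d t j))).2 (B.erase j)
    (erase_subset_erase _ (subset_univ _)) (by rw [card_erase_of_mem hj]; omega)
  rwa [add_sum_erase _ _ hj, ← Nat.cast_add_one, card_erase_add_one hj] at hle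

theorem sum_sub_szo4_le_one {t : Fin (d + 1) → ℝ} (ht : ∑ k, t k ≤ 1)
    (B : Finset (Fin (d + 1))) : ∑ j ∈ B, (t j - Szo4 d t j) ≤ 1 := by
  rcases B.eq_empty_or_nonempty with rfl | hne
  · simp
  by_cases hB : B = univ
  · subst hB
    exact (sum_le_sum fun j _ => sub_le_self _ (szo4_nonneg t j)).trans ht
  have hcard : (0 : ℝ) < #B := by exact_mod_cast hne.card_pos
  have havg : (∑ k ∈ B, t k - 1) * #B ≤ (∑ j ∈ B, Szo4 d t j) * #B := by
    rw [sum_mul, mul_comm, ← nsmul_eq_mul]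
    exact card_nsmul_le_sum _ _ _ fun j hj => sum_sub_one_le_szo4_mul_card t hB hj
  rw [sum_sub_distrib]
  linarith [le_of_mul_le_mul_right havg hcard]

theorem szo4_eq_zero_of_mem_stdSimplex {t : Fin (d + 1) → ℝ}
    (ht : t ∈ stdSimplex ℝ (Fin (d + 1))) (j : Fin (d + 1)) : Szo4 d t j = 0 := by
  refine le_antisymm (szo4_le_iff.2 ⟨le_rfl, fun A hA _ => ?_⟩) (szo4_nonneg t j)
  have hj : j ∉ A := fun h => notMem_erase j univ (hA h)
  have hsum : ∑ k ∈ insert j A, t k ≤ ∑ k, t k :=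
    sum_le_univ_sum_of_nonneg ht.1
  rw [sum_insert hj, ht.2] at hsum
  linarith

theorem convexOn_szo4 (j : Fin (d + 1)) : ConvexOn ℝ Set.univ fun t => Szo4 d t j := by
  refine ⟨convex_univ, fun x _ y _ a b ha hb hab => szo4_le_iff.2 ⟨?_, fun A hA hcard => ?_⟩⟩
  · exact add_nonneg (mul_nonneg ha (szo4_nonneg x j)) (mul_nonneg hb (szo4_nonneg y j))
  have hx := mul_le_mul_of_nonneg_left ((szo4_le_iff.1 (le_refl (Szo4 d x j))).2 A hA hcard) ha
  have hy := mul_le_mul_of_nonneg_left ((szo4_le_iff.1 (le_refl (Szo4 d y j))).2 A hA hcard) hb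
  simp only [Pi.add_apply, Pi.smul_apply, smul_eq_mul, sum_add_distrib, ← mul_sum]
  linarith

theorem convexOn_lzo4 (j : Fin (d + 1)) : ConvexOn ℝ Set.univ (Lzo4 d j) := by
  refine ⟨convex_univ, fun x _ y _ a b ha hb hab => ?_⟩
  have hS := (convexOn_szo4 j).2 (Set.mem_univ (tauTilde d x)) (Set.mem_univ (tauTilde d y))
    ha hb hab
  simp only [Lzo4, tauTilde_smul_add_smul x y hab, Pi.add_apply, Pi.smul_apply, smul_eq_mul]
    at hS ⊢
  linarith

theorem lzo4_eq_of_mem_stdSimplex {τ : Fin d → ℝ}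
    (hτ : tauTilde d τ ∈ stdSimplex ℝ (Fin (d + 1))) (j : Fin (d + 1)) :
    Lzo4 d j τ = 1 - tauTilde d τ j := by
  rw [Lzo4, szo4_eq_zero_of_mem_stdSimplex hτ, add_zero]

theorem one_sub_le_sum_mul_lzo4 {η : Fin (d + 1) → ℝ} (hη : η ∈ stdSimplex ℝ (Fin (d + 1)))
    {M : ℝ} (hM : ∀ k, η k ≤ M) (τ : Fin d → ℝ) : 1 - M ≤ ∑ j, η j * Lzo4 d j τ := by
  have hrisk : ∑ j, η j * Lzo4 d j τ =
      1 - ∑ j, η j * (tauTilde d τ j - Szo4 d (tauTilde d τ) j) := by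
    rw [← hη.2, ← sum_sub_distrib]
    exact sum_congr rfl fun j _ => by rw [Lzo4]; ring
  have hbound : ∑ j, η j * (tauTilde d τ j - Szo4 d (tauTilde d τ) j) ≤ M * 1 :=
    sum_mul_le_mul_of_forall_sum_le ((hη.1 0).trans (hM 0)) (fun j _ => hη.1 j)
      (fun j _ => hM j) fun B _ => sum_sub_szo4_le_one (sum_tauTilde τ).le B
  rw [hrisk]
  linarith

theorem sum_mul_lzo4_init {η t : Fin (d + 1) → ℝ} (hη : ∑ j, η j = 1)
    (ht : t ∈ stdSimplex ℝ (Fin (d + 1))) :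
    ∑ j, η j * Lzo4 d j (Fin.init t) = 1 - ∑ j, η j * t j := by
  have hτ := tauTilde_init ht.2
  simp only [lzo4_eq_of_mem_stdSimplex (hτ.symm ▸ ht), hτ, mul_sub, mul_one, sum_sub_distrib, hη]

theorem isLeast_sum_mul_lzo4 {η : Fin (d + 1) → ℝ} (hη : η ∈ stdSimplex ℝ (Fin (d + 1))) :
    IsLeast {x : ℝ | ∃ τ : Fin d → ℝ, x = ∑ j, η j * Lzo4 d j τ} (1 - ⨆ k, η k) := by
  constructor
  · obtain ⟨k, hk⟩ := exists_eq_ciSup_of_finite (f := η)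
    refine ⟨Fin.init (Pi.single k 1 : Fin (d + 1) → ℝ), ?_⟩
    rw [sum_mul_lzo4_init hη.2 (single_mem_stdSimplex ℝ k), ← dotProduct, dotProduct_single_one, hk]
  · rintro _ ⟨τ, rfl⟩
    exact one_sub_le_sum_mul_lzo4 hη (le_ciSup (Set.finite_range η).bddAbove) τ

end

theorem stmt8 (d : ℕ) (hd : 1 ≤ d) :
    -- (a) convexity in τ
    (∀ j, ConvexOn ℝ Set.univ (Lzo4 d j))
    ∧
    -- (b) extension property: on the simplex, L^{zo4}(j,τ) = 1 - τ̃_j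
    (∀ τ : Fin d → ℝ, (∀ k, 0 ≤ tauTilde d τ k) → ∑ k, tauTilde d τ k = 1 →
      ∀ j, Lzo4 d j τ = 1 - tauTilde d τ j)
    ∧
    -- (c) generalized entropy = zero-one entropy
    (∀ η : Fin (d + 1) → ℝ, (∀ j, 0 ≤ η j) → ∑ j, η j = 1 →
      IsGLB {x : ℝ | ∃ τ : Fin d → ℝ, x = ∑ j, η j * Lzo4 d j τ}
        (1 - ⨆ k, η k)) := by
  exact ⟨convexOn_lzo4, fun τ h0 h1 => lzo4_eq_of_mem_stdSimplex ⟨h0, h1⟩,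
    fun η h0 h1 => (isLeast_sum_mul_lzo4 ⟨h0, h1⟩).isGLB⟩
end

section
/- Let m ≥ 2 and let C = (c_{jk}) be a cost matrix. For τ ∈ ℝ^{m−1} let τ† = (τ_1, …, τ_{m−1}, 1 − Σ_{k=1}^{m−1} max(τ_k,0)) ∈ ℝ^m. Then for every η ∈ Δ_m, every τ ∈ ℝ^{m−1}, and every index l ∈ {1,…,m} with τ†_l = max_{j∈{1,…,m}} τ†_j: (1/m) · ( Σ_{j=1}^m η_j c_{jl} − min_{k∈{1,…,m}} Σ_{j=1}^m η_j c_{jk} ) ≤ Σ_{j=1}^m η_j L^{cw3}(j, τ) − min_{k∈{1,…,m}} Σ_{j=1}^m η_j c_{jk}. -/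
open Finset

/-- The hinge-like loss `L^{cw3}` (see Statement 7 context). -/
noncomputable def Lcw3 (d : ℕ) (C : Fin (d + 1) → Fin (d + 1) → ℝ)
    (j : Fin (d + 1)) (τ : Fin d → ℝ) : ℝ :=
  Fin.lastCases
    (∑ k : Fin d, C (Fin.last d) k.castSucc * max (τ k) 0)
    (fun j' => C j'.castSucc (Fin.last d) *
        max (1 - τ j' - ∑ k ∈ Finset.univ.erase j', max (τ k) 0) 0
      + ∑ k ∈ Finset.univ.erase j', C j'.castSucc k.castSucc * max (τ k) 0)
    j

/-- `τ† = (τ_1, …, τ_{m-1}, 1 - Σ_k max(τ_k,0))`. -/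
noncomputable def tauDag (d : ℕ) (τ : Fin d → ℝ) : Fin (d + 1) → ℝ :=
  Fin.snoc τ (1 - ∑ i, max (τ i) 0)

/-!
The positive parts `w k = max (τ†_k) 0` serve as weights on the predictions `k`. They sum to at
least `1`, so the weight of a maximiser of `τ†` is at least `1 / m`. The surrogate risk dominates
the `w`-weighted sum of the conditional risks `r k = ∑ j, η j * C j k`; since `r ≥ 0` and
`∑ k, w k ≥ 1`, subtracting the minimal risk leaves at least the `w`-weighted sum of the regrets,
whose terms are all nonnegative.
-/

section WeightedRegret

theorem sub_iInf_nonneg {ι : Type*} [Finite ι] (r : ι → ℝ) (l : ι) :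
    0 ≤ r l - ⨅ k, r k :=
  sub_nonneg.2 (ciInf_le (Set.finite_range r).bddBelow l)

variable {ι : Type*} [Fintype ι]

theorem one_div_card_le_of_one_le_sum {K : Type*} [Field K] [LinearOrder K]
    [IsStrictOrderedRing K] {w : ι → K} {l : ι} (hw : 1 ≤ ∑ k, w k) (hl : ∀ k, w k ≤ w l) :
    1 / (Fintype.card ι : K) ≤ w l := by
  have : Nonempty ι := ⟨l⟩
  have hcard : ∑ k, w k ≤ Fintype.card ι * w l := by
    simpa only [card_univ, nsmul_eq_mul] using sum_le_card_nsmul univ w (w l) fun k _ => hl k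
  rw [div_le_iff₀' (by exact_mod_cast Fintype.card_pos)]
  exact hw.trans hcard

theorem mul_sub_iInf_le_sum_mul_sub_iInf {w r : ι → ℝ} (hw0 : ∀ k, 0 ≤ w k)
    (hw : 1 ≤ ∑ k, w k) (hr : ∀ k, 0 ≤ r k) (l : ι) :
    w l * (r l - ⨅ i, r i) ≤ ∑ k, w k * r k - ⨅ i, r i := by
  calc w l * (r l - ⨅ i, r i)
      ≤ ∑ k, w k * (r k - ⨅ i, r i) :=
        single_le_sum (f := fun k => w k * (r k - ⨅ i, r i))
          (fun k _ => mul_nonneg (hw0 k) (sub_iInf_nonneg r k)) (mem_univ l)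
    _ = ∑ k, w k * r k - (∑ k, w k) * ⨅ i, r i := by
        simp only [mul_sub, sum_sub_distrib, sum_mul]
    _ ≤ ∑ k, w k * r k - ⨅ i, r i :=
        sub_le_sub_left (le_mul_of_one_le_left (Real.iInf_nonneg hr) hw) _

end WeightedRegret

section Loss

variable {d : ℕ}

theorem tauDag_castSucc (τ : Fin d → ℝ) (k : Fin d) : tauDag d τ k.castSucc = τ k :=
  Fin.snoc_castSucc ..

theorem tauDag_last (τ : Fin d → ℝ) : tauDag d τ (Fin.last d) = 1 - ∑ i, max (τ i) 0 :=
  Fin.snoc_last ..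

theorem Lcw3_castSucc (C : Fin (d + 1) → Fin (d + 1) → ℝ) (j : Fin d) (τ : Fin d → ℝ) :
    Lcw3 d C j.castSucc τ =
      C j.castSucc (Fin.last d) * max (1 - τ j - ∑ k ∈ univ.erase j, max (τ k) 0) 0
        + ∑ k ∈ univ.erase j, C j.castSucc k.castSucc * max (τ k) 0 :=
  Fin.lastCases_castSucc ..

theorem Lcw3_last (C : Fin (d + 1) → Fin (d + 1) → ℝ) (τ : Fin d → ℝ) :
    Lcw3 d C (Fin.last d) τ = ∑ k : Fin d, C (Fin.last d) k.castSucc * max (τ k) 0 :=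
  Fin.lastCases_last ..

theorem one_le_sum_max_tauDag (τ : Fin d → ℝ) : 1 ≤ ∑ k, max (tauDag d τ k) 0 := by
  simp only [Fin.sum_univ_castSucc, tauDag_castSucc, tauDag_last]
  linarith [le_max_left (1 - ∑ i, max (τ i) 0) 0]

theorem tauDag_last_le (τ : Fin d → ℝ) (j : Fin d) :
    tauDag d τ (Fin.last d) ≤ 1 - τ j - ∑ k ∈ univ.erase j, max (τ k) 0 := by
  rw [tauDag_last, ← add_sum_erase univ (fun i => max (τ i) 0) (mem_univ j)]
  linarith [le_max_left (τ j) 0]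

theorem one_div_le_max_tauDag {τ : Fin d → ℝ} {l : Fin (d + 1)}
    (hl : ∀ j, tauDag d τ j ≤ tauDag d τ l) : 1 / ((d : ℝ) + 1) ≤ max (tauDag d τ l) 0 := by
  simpa only [Fintype.card_fin, Nat.cast_add_one] using
    one_div_card_le_of_one_le_sum (one_le_sum_max_tauDag τ) fun k => max_le_max_right 0 (hl k)

variable {C : Fin (d + 1) → Fin (d + 1) → ℝ} {η : Fin (d + 1) → ℝ}

theorem sum_mul_max_tauDag_le_Lcw3 {j : Fin (d + 1)} (hC0 : C j j = 0)
    (hC : 0 ≤ C j (Fin.last d)) (τ : Fin d → ℝ) :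
    ∑ k, C j k * max (tauDag d τ k) 0 ≤ Lcw3 d C j τ := by
  simp only [Fin.sum_univ_castSucc, tauDag_castSucc]
  cases j using Fin.lastCases with
  | last => rw [Lcw3_last, hC0, zero_mul, add_zero]
  | cast j =>
    rw [Lcw3_castSucc, ← add_sum_erase _ _ (mem_univ j), hC0, zero_mul, zero_add, add_comm]
    gcongr
    exact tauDag_last_le τ j

theorem sum_max_tauDag_mul_risk_le (hC0 : ∀ j, C j j = 0) (hC : ∀ j, 0 ≤ C j (Fin.last d))
    (hη0 : ∀ j, 0 ≤ η j) (τ : Fin d → ℝ) :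
    ∑ k, max (tauDag d τ k) 0 * ∑ j, η j * C j k ≤ ∑ j, η j * Lcw3 d C j τ := by
  calc ∑ k, max (tauDag d τ k) 0 * ∑ j, η j * C j k
      = ∑ j, η j * ∑ k, C j k * max (tauDag d τ k) 0 :=
        (dotProduct_comm _ _).trans (Matrix.dotProduct_mulVec η C _).symm
    _ ≤ ∑ j, η j * Lcw3 d C j τ :=
        sum_le_sum fun j _ =>
          mul_le_mul_of_nonneg_left (sum_mul_max_tauDag_le_Lcw3 (hC0 j) (hC j) τ) (hη0 j)

theorem stmt9_general (hC0 : ∀ j, C j j = 0) (hCnn : ∀ j k, 0 ≤ C j k) (hη0 : ∀ j, 0 ≤ η j)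
    (τ : Fin d → ℝ) (l : Fin (d + 1)) :
    max (tauDag d τ l) 0 * (∑ j, η j * C j l - ⨅ k, ∑ j, η j * C j k) ≤
      ∑ j, η j * Lcw3 d C j τ - ⨅ k, ∑ j, η j * C j k := by
  have hrisk (k : Fin (d + 1)) : 0 ≤ ∑ j, η j * C j k :=
    sum_nonneg fun j _ => mul_nonneg (hη0 j) (hCnn j k)
  exact (mul_sub_iInf_le_sum_mul_sub_iInf (fun _ => le_max_right _ _)
    (one_le_sum_max_tauDag τ) hrisk l).trans
    (sub_le_sub_right (sum_max_tauDag_mul_risk_le hC0 (hCnn · _) hη0 τ) _)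

end Loss

theorem stmt9 (d : ℕ) (hd : 1 ≤ d) (C : Fin (d + 1) → Fin (d + 1) → ℝ)
    (hC0 : ∀ j, C j j = 0) (hCnn : ∀ j k, 0 ≤ C j k)
    (hCpos : ∀ j, ∃ k, k ≠ j ∧ 0 < C j k)
    (η : Fin (d + 1) → ℝ) (hη0 : ∀ j, 0 ≤ η j) (hη1 : ∑ j, η j = 1)
    (τ : Fin d → ℝ) (l : Fin (d + 1))
    (hl : ∀ j, tauDag d τ j ≤ tauDag d τ l) :
    (1 / ((d : ℝ) + 1)) * (∑ j, η j * C j l - ⨅ k, ∑ j, η j * C j k) ≤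
      ∑ j, η j * Lcw3 d C j τ - ⨅ k, ∑ j, η j * C j k :=
  (mul_le_mul_of_nonneg_right (one_div_le_max_tauDag hl)
    (sub_iInf_nonneg (fun k => ∑ j, η j * C j k) l)).trans (stmt9_general hC0 hCnn hη0 τ l)
end

section
/- Let m ≥ 2, let A be a nonempty set, and let L : {1,…,m} × A → ℝ be a loss. Define R_L = { z ∈ ℝ^m : there exists γ ∈ A with z_j = L(j, γ) for all j }, the value manifold S_L = closure of the convex hull of R_L, S^{zo} = { z ∈ ℝ^m : Σ_{j=1}^m z_j = m − 1 and 0 ≤ z_j ≤ 1 for all j }, and S^{zo*} = S^{zo} + ℝ_{≥0}^m = { z + b : z ∈ S^{zo}, b ∈ ℝ^m with b_j ≥ 0 for all j }. Then the following are equivalent: (a) for every η ∈ Δ_m, inf_{γ ∈ A} Σ_{j=1}^m η_j L(j, γ) = 1 − max_{k∈{1,…,m}} η_k; (b) S^{zo} ⊆ S_L and S_L ⊆ S^{zo*}. -/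
open Finset

/-!
Substitute `u = 1 - x`, so that `η ⬝ᵥ x = 1 - η ⬝ᵥ u` on the simplex and the zero-one value manifold
becomes the simplex itself. By the duality between the sup norm and the `ℓ¹` norm, `η ⬝ᵥ u ≤ max η`
for all `η` in the simplex if and only if `u` lies below a point of the simplex; hence the
superprediction set of the zero-one loss is cut out by the inequalities `1 - max η ≤ η ⬝ᵥ x`, and
the lower bounds in (a) amount to the second inclusion in (b). For the first inclusion, take `η`
positive with its maximum attained only at `k`: over the superprediction set `η ⬝ᵥ x` is then
minimal only at the vertex `1 - Pi.single k 1`, while over the closed value manifold its infimum is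
attained. So every vertex, and with it the convex hull of the vertices, lies in the value manifold.
-/

section LinearFunctionals

theorem lowerBounds_image_closure_convexHull {E β : Type*} [AddCommGroup E] [Module ℝ E]
    [TopologicalSpace E] [LinearOrder β] {f : E → β} (hf : QuasiconcaveOn ℝ Set.univ f)
    (hfc : UpperSemicontinuous f) (s : Set E) :
    lowerBounds (f '' closure (convexHull ℝ s)) = lowerBounds (f '' s) := by
  refine (lowerBounds_mono_set (Set.image_mono
    ((subset_convexHull ℝ s).trans subset_closure))).antisymm fun c hc => ?_
  have hs : s ⊆ {x | c ≤ f x} := fun x hx => hc (Set.mem_image_of_mem f hx)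
  have hconvex : Convex ℝ {x | c ≤ f x} := by simpa using hf c
  have hclosed : IsClosed {x | c ≤ f x} := hfc.isClosed_preimage c
  rintro _ ⟨x, hx, rfl⟩
  exact closure_minimal (convexHull_min hs hconvex) hclosed hx

variable {ι : Type*} [Fintype ι]

theorem continuous_dotProduct (η : ι → ℝ) : Continuous (η ⬝ᵥ ·) :=
  continuous_const.dotProduct continuous_id

theorem lowerBounds_dotProduct_image_closure_convexHull (η : ι → ℝ) (s : Set (ι → ℝ)) :
    lowerBounds ((η ⬝ᵥ ·) '' closure (convexHull ℝ s)) = lowerBounds ((η ⬝ᵥ ·) '' s) :=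
  lowerBounds_image_closure_convexHull
    ((dotProductBilin ℝ ℝ η).concaveOn convex_univ).quasiconcaveOn
    (continuous_dotProduct η).upperSemicontinuous s

theorem isCompact_inter_setOf_dotProduct_le {η : ι → ℝ} (hη : ∀ j, 0 < η j) {C : Set (ι → ℝ)}
    (hC : IsClosed C) (hbdd : BddBelow C) (c : ℝ) : IsCompact (C ∩ {x | η ⬝ᵥ x ≤ c}) := by
  obtain ⟨l, hl⟩ := hbdd
  have hclosed : IsClosed (C ∩ {x | η ⬝ᵥ x ≤ c}) :=
    hC.inter (isClosed_le (continuous_dotProduct η) continuous_const)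
  refine (isCompact_Icc (a := l) (b := fun j => l j + (c - η ⬝ᵥ l) / η j)).of_isClosed_subset
    hclosed fun x ⟨hxC, hxc⟩ => ⟨hl hxC, fun j => ?_⟩
  have hterm : η j * (x - l) j ≤ η ⬝ᵥ (x - l) :=
    single_le_sum (f := fun i => η i * (x - l) i)
      (fun i _ => mul_nonneg (hη i).le (sub_nonneg.2 (hl hxC i))) (mem_univ j)
  rw [dotProduct_sub, Pi.sub_apply] at hterm
  rw [← sub_le_iff_le_add', le_div_iff₀' (hη j)]
  exact hterm.trans (sub_le_sub_right hxc _)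

theorem exists_dotProduct_eq_of_isGLB {η : ι → ℝ} (hη : ∀ j, 0 < η j) {C : Set (ι → ℝ)}
    (hC : IsClosed C) (hbdd : BddBelow C) {a : ℝ} (ha : IsGLB ((η ⬝ᵥ ·) '' C) a) :
    ∃ x ∈ C, η ⬝ᵥ x = a := by
  obtain ⟨x₀, hx₀⟩ : C.Nonempty := Set.image_nonempty.1 ha.nonempty
  obtain ⟨x, ⟨hxC, hxx₀⟩, hmin⟩ :=
    (isCompact_inter_setOf_dotProduct_le hη hC hbdd (η ⬝ᵥ x₀)).exists_isMinOn
      ⟨x₀, hx₀, le_refl (η ⬝ᵥ x₀)⟩ (continuous_dotProduct η).continuousOn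
  have hleast : IsLeast ((η ⬝ᵥ ·) '' C) (η ⬝ᵥ x) := by
    refine ⟨⟨x, hxC, rfl⟩, ?_⟩
    rintro _ ⟨y, hy, rfl⟩
    rcases le_total (η ⬝ᵥ y) (η ⬝ᵥ x₀) with hyx₀ | hyx₀
    · exact hmin ⟨hy, hyx₀⟩
    · exact hxx₀.trans hyx₀
  exact ⟨x, hxC, hleast.isGLB.unique ha⟩

theorem eq_of_le_of_dotProduct_le {η : ι → ℝ} (hη : ∀ j, 0 < η j) {x y : ι → ℝ} (hxy : x ≤ y)
    (h : η ⬝ᵥ y ≤ η ⬝ᵥ x) : x = y := by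
  have hle : ∀ j ∈ univ, η j * x j ≤ η j * y j :=
    fun j _ => mul_le_mul_of_nonneg_left (hxy j) (hη j).le
  have heq := (sum_eq_sum_iff_of_le hle).1 ((sum_le_sum hle).antisymm h)
  exact funext fun j => mul_left_cancel₀ (hη j).ne' (heq j (mem_univ j))

end LinearFunctionals

section Simplex

variable {ι : Type*} [Fintype ι]

theorem dotProduct_one_of_mem_stdSimplex {η : ι → ℝ} (hη : η ∈ stdSimplex ℝ ι) : η ⬝ᵥ 1 = 1 := by
  rw [dotProduct_one, hη.2]

theorem dotProduct_le_iSup_of_mem_stdSimplex_s11 (η : ι → ℝ) {p : ι → ℝ} (hp : p ∈ stdSimplex ℝ ι) :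
    η ⬝ᵥ p ≤ ⨆ k, η k :=
  calc η ⬝ᵥ p ≤ ∑ j, (⨆ k, η k) * p j := sum_le_sum fun j _ =>
        mul_le_mul_of_nonneg_right (le_ciSup (Set.finite_range η).bddAbove j) (hp.1 j)
    _ = ⨆ k, η k := by rw [← mul_sum, hp.2, mul_one]

theorem eq_single_of_le_dotProduct [DecidableEq ι] {η p : ι → ℝ} {k : ι}
    (hk : ∀ j ≠ k, η j < η k) (hp : p ∈ stdSimplex ℝ ι) (h : η k ≤ η ⬝ᵥ p) :
    p = Pi.single k 1 := by
  have hgap : ∀ j, 0 ≤ (η k - η j) * p j := fun j => by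
    rcases eq_or_ne j k with rfl | hj
    · simp
    · exact mul_nonneg (sub_nonneg.2 (hk j hj).le) (hp.1 j)
  have hsum : ∑ j, (η k - η j) * p j = η k - η ⬝ᵥ p := by
    simp only [sub_mul, sum_sub_distrib, ← mul_sum, hp.2, mul_one, dotProduct]
  have hzero : ∀ j ≠ k, p j = 0 := fun j hj => by
    have hj0 := (sum_eq_zero_iff_of_nonneg fun j _ => hgap j).1
      ((hsum.trans_le (sub_nonpos.2 h)).antisymm (sum_nonneg fun j _ => hgap j)) j (mem_univ j)
    exact (mul_eq_zero.1 hj0).resolve_left (sub_pos.2 (hk j hj)).ne'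
  have hone : p k = 1 := by rw [← hp.2, Fintype.sum_eq_single k hzero]
  ext j
  rcases eq_or_ne j k with rfl | hj
  · rw [hone, Pi.single_eq_same]
  · rw [hzero j hj, Pi.single_eq_of_ne hj]

theorem exists_mem_stdSimplex_pos_forall_ne_lt (k : ι) :
    ∃ η ∈ stdSimplex ℝ ι, (∀ j, 0 < η j) ∧ ∀ j ≠ k, η j < η k := by
  classical
  have hcard : (0 : ℝ) < Fintype.card ι + 1 := by positivity
  have hsingle : ∀ j, 0 ≤ (Pi.single k 1 : ι → ℝ) j := (single_mem_stdSimplex ℝ k).1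
  have hpos : ∀ j, 0 < (1 + (Pi.single k 1 : ι → ℝ) j) / (Fintype.card ι + 1) := fun j =>
    div_pos (add_pos_of_pos_of_nonneg one_pos (hsingle j)) hcard
  refine ⟨fun j => (1 + (Pi.single k 1 : ι → ℝ) j) / (Fintype.card ι + 1),
    ⟨fun j => (hpos j).le, ?_⟩, hpos, fun j hj => ?_⟩
  · rw [← sum_div, sum_add_distrib, (single_mem_stdSimplex ℝ k).2]
    simp [hcard.ne']
  · simp only [Pi.single_eq_of_ne hj, Pi.single_eq_same]
    gcongr
    exact one_pos

theorem sum_le_one_of_forall_dotProduct_le_iSup {u : ι → ℝ}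
    (h : ∀ η ∈ stdSimplex ℝ ι, η ⬝ᵥ u ≤ ⨆ k, η k) (T : Finset ι) : ∑ j ∈ T, u j ≤ 1 := by
  classical
  rcases T.eq_empty_or_nonempty with rfl | hT
  · simp
  have hcard : (0 : ℝ) < #T := by exact_mod_cast hT.card_pos
  let η : ι → ℝ := fun j => if j ∈ T then (#T : ℝ)⁻¹ else 0
  have hη : η ∈ stdSimplex ℝ ι := by
    refine ⟨fun j => ?_, ?_⟩
    · dsimp only [η]; split_ifs <;> positivity
    · simp [η, hcard.ne']
  have : Nonempty ι := ⟨hT.choose⟩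
  have hsup : ⨆ k, η k ≤ (#T : ℝ)⁻¹ := ciSup_le fun j => by
    dsimp only [η]; split_ifs <;> [exact le_rfl; positivity]
  have hdot : η ⬝ᵥ u = (#T : ℝ)⁻¹ * ∑ j ∈ T, u j := by
    simp [η, dotProduct, ite_mul, mul_sum]
  have := (h η hη).trans hsup
  rwa [hdot, mul_le_iff_le_one_right (inv_pos.2 hcard)] at this

theorem exists_le_mem_stdSimplex_of_sum_posPart_le_one [Nonempty ι] {u : ι → ℝ}
    (hu : ∑ j, (u j)⁺ ≤ 1) : ∃ p ∈ stdSimplex ℝ ι, u ≤ p := by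
  classical
  let k : ι := Classical.arbitrary ι
  have hslack : 0 ≤ (Pi.single k (1 - ∑ j, (u j)⁺) : ι → ℝ) := Pi.single_nonneg.2 (sub_nonneg.2 hu)
  refine ⟨u⁺ + Pi.single k (1 - ∑ j, (u j)⁺),
    ⟨fun j => add_nonneg (posPart_nonneg u j) (hslack j), ?_⟩,
    (le_posPart u).trans (le_add_of_nonneg_right hslack)⟩
  simp [sum_add_distrib]

theorem exists_le_mem_stdSimplex_iff [Nonempty ι] {u : ι → ℝ} :
    (∃ p ∈ stdSimplex ℝ ι, u ≤ p) ↔ ∀ η ∈ stdSimplex ℝ ι, η ⬝ᵥ u ≤ ⨆ k, η k := by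
  refine ⟨fun ⟨p, hp, hup⟩ η hη => ?_, fun h => ?_⟩
  · exact (dotProduct_le_dotProduct_of_nonneg_left hup hη.1).trans
      (dotProduct_le_iSup_of_mem_stdSimplex_s11 η hp)
  · refine exists_le_mem_stdSimplex_of_sum_posPart_le_one ?_
    calc ∑ j, (u j)⁺ = ∑ j with 0 ≤ u j, u j := by
          simp only [sum_filter, posPart_eq_ite]
      _ ≤ 1 := sum_le_one_of_forall_dotProduct_le_iSup h _

end Simplex

section ZeroOneLoss

variable {ι : Type*} [Fintype ι]

variable (ι) in
/-- The value manifold `S^{zo}` of the zero-one classification loss on the label set `ι`. Its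
superprediction set `S^{zo*}` is `upperClosure (zeroOneManifold ι)`. -/
def zeroOneManifold : Set (ι → ℝ) :=
  {z | ∑ j, z j = (Fintype.card ι : ℝ) - 1 ∧ ∀ j, 0 ≤ z j ∧ z j ≤ 1}

theorem mem_zeroOneManifold_iff_one_sub_mem_stdSimplex {z : ι → ℝ} :
    z ∈ zeroOneManifold ι ↔ 1 - z ∈ stdSimplex ℝ ι := by
  have hsum : ∑ j, (1 - z) j = Fintype.card ι - ∑ j, z j := by simp
  constructor
  · rintro ⟨hz, hz01⟩
    exact ⟨fun j => sub_nonneg.2 (hz01 j).2, by rw [hsum, hz, sub_sub_cancel]⟩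
  · intro hz
    refine ⟨by linarith [hsum.symm.trans hz.2], fun j => ⟨?_, sub_nonneg.1 (hz.1 j)⟩⟩
    simpa using (mem_Icc_of_mem_stdSimplex hz j).2

theorem one_sub_mem_zeroOneManifold {p : ι → ℝ} (hp : p ∈ stdSimplex ℝ ι) :
    1 - p ∈ zeroOneManifold ι := by
  rwa [mem_zeroOneManifold_iff_one_sub_mem_stdSimplex, sub_sub_cancel]

theorem zeroOneManifold_eq_convexHull [DecidableEq ι] :
    zeroOneManifold ι = convexHull ℝ (Set.range fun k => 1 - Pi.single k 1) := by
  have hmap := (AffineEquiv.constVSub ℝ (1 : ι → ℝ)).toAffineMap.image_convexHull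
    (Set.range fun k => Pi.single k (1 : ℝ))
  rw [convexHull_rangle_single_eq_stdSimplex, ← Set.range_comp] at hmap
  refine Eq.trans ?_ hmap
  ext z
  rw [mem_zeroOneManifold_iff_one_sub_mem_stdSimplex]
  exact ⟨fun hz => ⟨1 - z, hz, sub_sub_cancel 1 z⟩,
    by rintro ⟨p, hp, rfl⟩; simpa using hp⟩

theorem mem_upperClosure_zeroOneManifold_iff [Nonempty ι] {x : ι → ℝ} :
    x ∈ upperClosure (zeroOneManifold ι) ↔
      ∀ η ∈ stdSimplex ℝ ι, 1 - ⨆ k, η k ≤ η ⬝ᵥ x := by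
  have hmem : x ∈ upperClosure (zeroOneManifold ι) ↔ ∃ p ∈ stdSimplex ℝ ι, 1 - x ≤ p := by
    rw [mem_upperClosure]
    constructor
    · rintro ⟨z, hz, hzx⟩
      exact ⟨1 - z, mem_zeroOneManifold_iff_one_sub_mem_stdSimplex.1 hz, sub_le_sub_left hzx 1⟩
    · rintro ⟨p, hp, hxp⟩
      exact ⟨1 - p, one_sub_mem_zeroOneManifold hp, sub_le_comm.1 hxp⟩
  rw [hmem, exists_le_mem_stdSimplex_iff]
  refine forall₂_congr fun η hη => ?_
  rw [dotProduct_sub, dotProduct_one_of_mem_stdSimplex hη, sub_le_comm]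

theorem bddBelow_upperClosure_zeroOneManifold :
    BddBelow (upperClosure (zeroOneManifold ι) : Set (ι → ℝ)) :=
  bddBelow_upperClosure.2 ⟨0, fun _ hz j => (hz.2 j).1⟩

theorem eq_one_sub_single_of_dotProduct_le [DecidableEq ι] {η x : ι → ℝ} {k : ι}
    (hη : ∀ j, 0 < η j) (hk : ∀ j ≠ k, η j < η k)
    (hx : x ∈ upperClosure (zeroOneManifold ι)) (h : η ⬝ᵥ x ≤ η ⬝ᵥ 1 - η k) :
    x = 1 - Pi.single k 1 := by
  obtain ⟨z, hz, hzx⟩ := mem_upperClosure.1 hx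
  have hηzx : η ⬝ᵥ z ≤ η ⬝ᵥ x := dotProduct_le_dotProduct_of_nonneg_left hzx fun j => (hη j).le
  have hz_vertex : 1 - z = Pi.single k 1 := by
    refine eq_single_of_le_dotProduct hk (mem_zeroOneManifold_iff_one_sub_mem_stdSimplex.1 hz) ?_
    rw [dotProduct_sub]
    linarith
  obtain rfl : z = 1 - Pi.single k 1 := by rw [← hz_vertex, sub_sub_cancel]
  refine (eq_of_le_of_dotProduct_le hη hzx ?_).symm
  rwa [dotProduct_sub, dotProduct_single_one]

end ZeroOneLoss

section Characterization

variable {ι : Type*} [Fintype ι] [Nonempty ι] {R : Set (ι → ℝ)}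

theorem closure_convexHull_subset_upperClosure_zeroOneManifold_iff :
    closure (convexHull ℝ R) ⊆ upperClosure (zeroOneManifold ι) ↔
      ∀ η ∈ stdSimplex ℝ ι, 1 - ⨆ k, η k ∈ lowerBounds ((η ⬝ᵥ ·) '' R) := by
  simp only [← lowerBounds_dotProduct_image_closure_convexHull _ R, mem_lowerBounds,
    Set.forall_mem_image, Set.subset_def, SetLike.mem_coe, mem_upperClosure_zeroOneManifold_iff]
  exact ⟨fun h η hη _ hx => h _ hx η hη, fun h _ hx η hη => h η hη hx⟩

theorem zeroOneManifold_subset_closure_convexHull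
    (h : ∀ η ∈ stdSimplex ℝ ι, IsGLB ((η ⬝ᵥ ·) '' R) (1 - ⨆ k, η k)) :
    zeroOneManifold ι ⊆ closure (convexHull ℝ R) := by
  classical
  have hsub : closure (convexHull ℝ R) ⊆ upperClosure (zeroOneManifold ι) :=
    closure_convexHull_subset_upperClosure_zeroOneManifold_iff.2 fun η hη => (h η hη).1
  rw [zeroOneManifold_eq_convexHull]
  refine convexHull_min ?_ (convex_convexHull ℝ R).closure
  rintro _ ⟨k, rfl⟩
  obtain ⟨η, hη, hpos, hk⟩ := exists_mem_stdSimplex_pos_forall_ne_lt k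
  have hglb : IsGLB ((η ⬝ᵥ ·) '' closure (convexHull ℝ R)) (1 - ⨆ k, η k) := by
    rw [IsGLB, lowerBounds_dotProduct_image_closure_convexHull]
    exact h η hη
  obtain ⟨x, hx, hηx⟩ := exists_dotProduct_eq_of_isGLB hpos isClosed_closure
    (bddBelow_upperClosure_zeroOneManifold.mono hsub) hglb
  have hle : η ⬝ᵥ x ≤ η ⬝ᵥ 1 - η k := by
    rw [hηx, dotProduct_one_of_mem_stdSimplex hη]
    exact sub_le_sub_left (le_ciSup (Set.finite_range η).bddAbove k) 1
  change 1 - Pi.single k 1 ∈ _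
  rwa [← eq_one_sub_single_of_dotProduct_le hpos hk (hsub hx) hle]

theorem one_sub_iSup_mem_upperBounds_lowerBounds {η : ι → ℝ} (hη : η ∈ stdSimplex ℝ ι)
    (hR : zeroOneManifold ι ⊆ closure (convexHull ℝ R)) :
    1 - ⨆ k, η k ∈ upperBounds (lowerBounds ((η ⬝ᵥ ·) '' R)) := by
  classical
  rw [← lowerBounds_dotProduct_image_closure_convexHull]
  intro c hc
  obtain ⟨k, hk⟩ := exists_eq_ciSup_of_finite (f := η)
  have hvertex := hc ⟨_, hR (one_sub_mem_zeroOneManifold (single_mem_stdSimplex ℝ k)), rfl⟩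
  simpa [dotProduct_sub, dotProduct_one_of_mem_stdSimplex hη, hk] using hvertex

theorem stmt11_general (R : Set (ι → ℝ)) :
    (∀ η ∈ stdSimplex ℝ ι, IsGLB ((η ⬝ᵥ ·) '' R) (1 - ⨆ k, η k)) ↔
      zeroOneManifold ι ⊆ closure (convexHull ℝ R) ∧
        closure (convexHull ℝ R) ⊆ upperClosure (zeroOneManifold ι) := by
  rw [closure_convexHull_subset_upperClosure_zeroOneManifold_iff]
  exact ⟨fun h => ⟨zeroOneManifold_subset_closure_convexHull h, fun η hη => (h η hη).1⟩,
    fun ⟨hR, hlb⟩ η hη => ⟨hlb η hη, one_sub_iSup_mem_upperBounds_lowerBounds hη hR⟩⟩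

end Characterization

section Coordinates

theorem image_dotProduct_setOf_forall_eq {ι A : Type*} [Fintype ι] (L : ι → A → ℝ) (η : ι → ℝ) :
    (η ⬝ᵥ ·) '' {z | ∃ γ, ∀ j, z j = L j γ} = {x | ∃ γ, x = ∑ j, η j * L j γ} := by
  ext x
  simp [← funext_iff, dotProduct, eq_comm]

theorem zeroOneManifold_fin (d : ℕ) :
    zeroOneManifold (Fin (d + 1)) = {z | ∑ j, z j = (d : ℝ) ∧ ∀ j, 0 ≤ z j ∧ z j ≤ 1} := by
  simp [zeroOneManifold]

theorem coe_upperClosure_eq_setOf_exists_add {ι : Type*} (S : Set (ι → ℝ)) :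
    (upperClosure S : Set (ι → ℝ)) =
      {x | ∃ z, z ∈ S ∧ ∃ b : ι → ℝ, (∀ j, 0 ≤ b j) ∧ x = z + b} := by
  ext x
  refine mem_upperClosure.trans (exists_congr fun z => and_congr_right fun _ => ⟨fun hzx => ?_, ?_⟩)
  · exact ⟨x - z, sub_nonneg.2 hzx, (add_sub_cancel z x).symm⟩
  · rintro ⟨b, hb, rfl⟩
    exact le_add_of_nonneg_right hb

end Coordinates

theorem stmt11 (d : ℕ) (hd : 1 ≤ d) (A : Type) [Nonempty A]
    (L : Fin (d + 1) → A → ℝ) :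
    -- (a) the generalized entropy of L is the zero-one entropy …
    (∀ η : Fin (d + 1) → ℝ, (∀ j, 0 ≤ η j) → ∑ j, η j = 1 →
      IsGLB {x : ℝ | ∃ γ : A, x = ∑ j, η j * L j γ} (1 - ⨆ k, η k))
    ↔
    -- (b) … iff S^{zo} ⊆ S_L ⊆ S^{zo*}
    (({z : Fin (d + 1) → ℝ | ∑ j, z j = (d : ℝ) ∧ ∀ j, 0 ≤ z j ∧ z j ≤ 1} ⊆
        closure (convexHull ℝ
          {z : Fin (d + 1) → ℝ | ∃ γ : A, ∀ j, z j = L j γ}))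
      ∧
      (closure (convexHull ℝ {z : Fin (d + 1) → ℝ | ∃ γ : A, ∀ j, z j = L j γ}) ⊆
        {x : Fin (d + 1) → ℝ |
          ∃ z : Fin (d + 1) → ℝ, (∑ j, z j = (d : ℝ) ∧ ∀ j, 0 ≤ z j ∧ z j ≤ 1) ∧
            ∃ b : Fin (d + 1) → ℝ, (∀ j, 0 ≤ b j) ∧ x = z + b})) := by
  simpa only [image_dotProduct_setOf_forall_eq, coe_upperClosure_eq_setOf_exists_add,
    zeroOneManifold_fin, stdSimplex, Set.mem_ofPred_eq, and_imp]
    using stmt11_general {z : Fin (d + 1) → ℝ | ∃ γ, ∀ j, z j = L j γ}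
end

section
/- Let m ≥ 2, let A be a nonempty set, and let L : {1,…,m} × A → ℝ be a loss whose generalized entropy equals that of the zero-one loss, i.e. for every η ∈ Δ_m, inf_{γ ∈ A} Σ_{j=1}^m η_j L(j, γ) = 1 − max_{k∈{1,…,m}} η_k. Then for every η ∈ Δ_m, every γ ∈ A, and every index k ∈ {1,…,m} with L(k, γ) = min_{j∈{1,…,m}} L(j, γ): (1/m) · ( max_{j∈{1,…,m}} η_j − η_k ) ≤ Σ_{j=1}^m η_j L(j, γ) − (1 − max_{j∈{1,…,m}} η_j). -/
open Finset

/-!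
Put `p j = 1 - ℓ j` for the loss vector `ℓ` of an action. Testing the entropy bound on uniform
distributions gives `∑ j ∈ S, p j ≤ 1` for every set `S` of labels, so the positive parts of `p`
sum to at most `1`. Hence `p` lies below a nonnegative vector `w` of total mass at most `1` with
`1 / m ≤ w k`, where `k` maximizes `p`: take `w = p⁺` if `1 / m ≤ p k`, and the constant vector
`1 / m` otherwise. With `M = max η`, the regret `M - ∑ j, η j * p j` is then at least
`M - ∑ j, η j * w j ≥ ∑ j, (M - η j) * w j ≥ (M - η k) / m`.
-/

theorem sum_le_one_of_forall_sum_mul_le_iSup {ι : Type*} [Fintype ι] {p : ι → ℝ}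
    (hp : ∀ η ∈ stdSimplex ℝ ι, ∑ j, η j * p j ≤ ⨆ j, η j) (S : Finset ι) :
    ∑ j ∈ S, p j ≤ 1 := by
  classical
  rcases S.eq_empty_or_nonempty with rfl | hS
  · simp
  have : Nonempty ι := hS.to_type
  have card_pos : (0 : ℝ) < #S := by exact_mod_cast hS.card_pos
  let u : ι → ℝ := fun j ↦ if j ∈ S then (#S : ℝ)⁻¹ else 0
  have hu : u ∈ stdSimplex ℝ ι :=
    ⟨fun j ↦ by dsimp only [u]; positivity, by simp [u, card_pos.ne']⟩
  have iSup_u_le : ⨆ j, u j ≤ (#S : ℝ)⁻¹ :=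
    ciSup_le fun j ↦ (ite_le_sup _ _ _).trans (sup_le le_rfl (by positivity))
  have mean_le : (#S : ℝ)⁻¹ * ∑ j ∈ S, p j ≤ (#S : ℝ)⁻¹ := calc
    (#S : ℝ)⁻¹ * ∑ j ∈ S, p j = ∑ j, u j * p j := by simp [u, mul_sum]
    _ ≤ (#S : ℝ)⁻¹ := (hp u hu).trans iSup_u_le
  exact (mul_le_iff_le_one_right (inv_pos.2 card_pos)).1 mean_le

theorem mul_sub_le_sub_sum_mul {ι R : Type*} [Fintype ι] [CommRing R] [PartialOrder R]
    [IsOrderedRing R] {η w : ι → R} {M : R} (hM : 0 ≤ M) (hη : ∀ j, η j ≤ M)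
    (hw : ∀ j, 0 ≤ w j) (hw_sum : ∑ j, w j ≤ 1) (k : ι) :
    w k * (M - η k) ≤ M - ∑ j, η j * w j := calc
  w k * (M - η k) ≤ ∑ j, w j * (M - η j) :=
    single_le_sum (f := fun j ↦ w j * (M - η j))
      (fun j _ ↦ mul_nonneg (hw j) (sub_nonneg.2 (hη j))) (mem_univ k)
  _ = (∑ j, w j) * M - ∑ j, η j * w j := by
    simp only [mul_sub, sum_sub_distrib, sum_mul, mul_comm (w _) (η _)]
  _ ≤ M - ∑ j, η j * w j := sub_le_sub_right (mul_le_of_le_one_left hM hw_sum) _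

theorem exists_nonneg_ge_sum_le_one {ι 𝕜 : Type*} [Fintype ι] [Field 𝕜] [LinearOrder 𝕜]
    [IsStrictOrderedRing 𝕜] {p : ι → 𝕜} (hp : ∑ j, (p j)⁺ ≤ 1) {k : ι}
    (hk : ∀ j, p j ≤ p k) :
    ∃ w : ι → 𝕜, (∀ j, p j ≤ w j) ∧ (∀ j, 0 ≤ w j) ∧ ∑ j, w j ≤ 1 ∧
      1 / (Fintype.card ι : 𝕜) ≤ w k := by
  rcases le_total (1 / (Fintype.card ι : 𝕜)) (p k) with hge | hle
  · exact ⟨fun j ↦ (p j)⁺, fun _ ↦ le_posPart _, fun _ ↦ posPart_nonneg _, hp,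
      hge.trans (le_posPart _)⟩
  · have : Nonempty ι := ⟨k⟩
    exact ⟨fun _ ↦ 1 / (Fintype.card ι : 𝕜), fun j ↦ (hk j).trans hle, fun _ ↦ by positivity,
      by simp, le_rfl⟩

theorem stmt12_general {ι : Type*} [Fintype ι] {ℓ : ι → ℝ}
    (hℓ : ∀ η ∈ stdSimplex ℝ ι, 1 - ⨆ j, η j ≤ ∑ j, η j * ℓ j)
    {η : ι → ℝ} (hη : η ∈ stdSimplex ℝ ι) {k : ι} (hk : ∀ j, ℓ k ≤ ℓ j) :
    1 / (Fintype.card ι : ℝ) * ((⨆ j, η j) - η k) ≤ ∑ j, η j * ℓ j - (1 - ⨆ j, η j) := by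
  have sum_mul_one_sub : ∀ ξ ∈ stdSimplex ℝ ι,
      ∑ j, ξ j * (1 - ℓ j) = 1 - ∑ j, ξ j * ℓ j := fun ξ hξ ↦ by
    simp only [mul_sub, mul_one, sum_sub_distrib, hξ.2]
  have sum_posPart_le : ∑ j, (1 - ℓ j)⁺ ≤ 1 := by
    simp only [posPart_eq_ite_lt, ← sum_filter]
    exact sum_le_one_of_forall_sum_mul_le_iSup
      (fun ξ hξ ↦ by linarith [sum_mul_one_sub ξ hξ, hℓ ξ hξ]) _
  obtain ⟨w, hw_ge, hw_nonneg, hw_sum, hwk⟩ :=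
    exists_nonneg_ge_sum_le_one sum_posPart_le fun j ↦ sub_le_sub_left (hk j) 1
  have le_iSup_η : ∀ j, η j ≤ ⨆ i, η i := le_ciSup (Set.finite_range η).bddAbove
  calc 1 / (Fintype.card ι : ℝ) * ((⨆ j, η j) - η k)
      ≤ w k * ((⨆ j, η j) - η k) :=
        mul_le_mul_of_nonneg_right hwk (sub_nonneg.2 (le_iSup_η k))
    _ ≤ (⨆ j, η j) - ∑ j, η j * w j :=
        mul_sub_le_sub_sum_mul (Real.iSup_nonneg hη.1) le_iSup_η hw_nonneg hw_sum k
    _ ≤ (⨆ j, η j) - ∑ j, η j * (1 - ℓ j) :=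
        sub_le_sub_left (sum_le_sum fun j _ ↦ mul_le_mul_of_nonneg_left (hw_ge j) (hη.1 j)) _
    _ = ∑ j, η j * ℓ j - (1 - ⨆ j, η j) := by rw [sum_mul_one_sub η hη]; ring

theorem stmt12 (d : ℕ) (hd : 1 ≤ d) (A : Type) [Nonempty A]
    (L : Fin (d + 1) → A → ℝ)
    -- the generalized entropy of L equals the zero-one entropy
    (hH : ∀ η : Fin (d + 1) → ℝ, (∀ j, 0 ≤ η j) → ∑ j, η j = 1 →
      IsGLB {x : ℝ | ∃ γ : A, x = ∑ j, η j * L j γ} (1 - ⨆ k, η k)) :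
    ∀ η : Fin (d + 1) → ℝ, (∀ j, 0 ≤ η j) → ∑ j, η j = 1 →
    ∀ γ : A, ∀ k : Fin (d + 1), (∀ j, L k γ ≤ L j γ) →
      (1 / ((d : ℝ) + 1)) * ((⨆ j, η j) - η k) ≤
        ∑ j, η j * L j γ - (1 - ⨆ j, η j) := by
  intro η hη_nonneg hη_sum γ k hk
  simpa using stmt12_general (fun ξ hξ ↦ (hH ξ hξ.1 hξ.2).1 ⟨γ, rfl⟩) ⟨hη_nonneg, hη_sum⟩ hk
end

section
/- Let m ≥ 2, let ν ≤ 0, and let f_0 : (0,∞) → ℝ be twice continuously differentiable with f_0''(t) = 2^{2ν} t^{ν−1} (1+t)^{−2ν−1} for all t > 0. Define H on the open positive orthant (0,∞)^m by H(q) = −Σ_{i=1}^m Σ_{j≠i} q_i f_0(q_j/q_i). Then for all η, q ∈ Δ_m with all coordinates positive: H(q) − H(η) − Σ_{i=1}^m (q_i − η_i) ∂_i H(q) ≥ ( Σ_{i=1}^m |η_i − q_i| )^2, where ∂_i H denotes the i-th partial derivative of H as a function on (0,∞)^m. -/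
open Finset

/-- The generalized entropy of the symmetrized pairwise scoring rule:
`H(q) = -Σ_i Σ_{j≠i} q_i f₀(q_j/q_i)`. -/
noncomputable def Hpw (d : ℕ) (f₀ : ℝ → ℝ) (q : Fin (d + 1) → ℝ) : ℝ :=
  -∑ i, ∑ j ∈ Finset.univ.erase i, q i * f₀ (q j / q i)

/-!
Along a segment inside the simplex with direction `e`, the second derivative of `-H` is
`∑_{i ≠ j} f''(x_j / x_i) (e_j - (x_j / x_i) e_i)² / x_i`. For `ν ≤ 0`, the inequality
`4 t ≤ (1 + t)²` gives `f''(t) ≥ 1 / (t (1 + t))`, and since `x_i + x_j ≤ 1` each summand is at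
least `(x_i e_j - x_j e_i)² / (x_i x_j)`. By Lagrange's identity these lower bounds add up to
`2 ∑ e_i² / x_i`, because `∑ x_i = 1` and `∑ e_i = 0`, and Cauchy-Schwarz bounds this below by
`2 (∑ |e_i|)²`. Integrating twice along the segment from `q` to `η` gives the claim.
-/

open Set AffineMap

section Calculus

theorem le_quadratic_of_second_deriv_le {φ φ' φ'' : ℝ → ℝ} {a b K : ℝ} (hab : a < b)
    (hφ : ∀ s ∈ Icc a b, HasDerivAt φ (φ' s) s) (hφ' : ∀ s ∈ Icc a b, HasDerivAt φ' (φ'' s) s)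
    (hK : ∀ s ∈ Icc a b, φ'' s ≤ K) :
    φ b ≤ φ a + φ' a * (b - a) + K / 2 * (b - a) ^ 2 := by
  let ψ s := φ s - K / 2 * (s - a) ^ 2
  have hψ : ∀ s ∈ Icc a b, HasDerivAt ψ (φ' s - K * (s - a)) s := fun s hs => by
    refine ((hφ s hs).fun_sub
      ((((hasDerivAt_id' s).sub_const a).fun_pow 2).const_mul (K / 2))).congr_deriv ?_
    push_cast
    ring
  have hψ' : ∀ s ∈ Icc a b, HasDerivAt (fun s => φ' s - K * (s - a)) (φ'' s - K) s :=
    fun s hs => by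
      simpa using (hφ' s hs).fun_sub (((hasDerivAt_id' s).sub_const a).const_mul K)
  have hconcave : ConcaveOn ℝ (Icc a b) ψ :=
    concaveOn_of_hasDerivWithinAt2_nonpos (convex_Icc a b)
      (fun s hs => (hψ s hs).continuousAt.continuousWithinAt)
      (fun s hs => (hψ s (interior_subset hs)).hasDerivWithinAt)
      (fun s hs => (hψ' s (interior_subset hs)).hasDerivWithinAt)
      (fun s hs => sub_nonpos.2 (hK s (interior_subset hs)))
  have ha : a ∈ Icc a b := left_mem_Icc.2 hab.le
  have hslope := hconcave.slope_le_of_hasDerivAt ha (right_mem_Icc.2 hab.le) hab (hψ a ha)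
  rw [slope_def_field, div_le_iff₀ (sub_pos.2 hab)] at hslope
  simp only [ψ, sub_self] at hslope
  linarith

theorem sum_smul_deriv_update {𝕜 E ι : Type*} [NontriviallyNormedField 𝕜]
    [NormedAddCommGroup E] [NormedSpace 𝕜 E] [Fintype ι] [DecidableEq ι] {F : (ι → 𝕜) → E}
    {x : ι → 𝕜} (hF : DifferentiableAt 𝕜 F x) (v : ι → 𝕜) :
    ∑ i, v i • deriv (fun s => F (Function.update x i s)) (x i) = fderiv 𝕜 F x v := by
  have hpartial (i : ι) :
      deriv (fun s => F (Function.update x i s)) (x i) = fderiv 𝕜 F x (Pi.single i 1) := by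
    refine HasDerivAt.deriv (HasFDerivAt.comp_hasDerivAt (x i) ?_ (hasDerivAt_update x i (x i)))
    rw [Function.update_eq_self]
    exact hF.hasFDerivAt
  simp only [hpartial, ← map_smul, ← map_sum, ← Pi.single_smul, smul_eq_mul, mul_one,
    univ_sum_single]

end Calculus

section Weight

theorem pairwise_weight_eq (ν : ℝ) {t : ℝ} (ht : 0 < t) :
    (2 : ℝ) ^ (2 * ν) * t ^ (ν - 1) * (1 + t) ^ (-2 * ν - 1) =
      (4 * t / (1 + t) ^ 2) ^ ν * (1 / (t * (1 + t))) := by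
  have ht' : 0 < 1 + t := by positivity
  rw [Real.div_rpow (by positivity) (by positivity), Real.mul_rpow (by norm_num) ht.le,
    Real.rpow_sub_one ht.ne', Real.rpow_sub_one ht'.ne', Real.rpow_mul (by norm_num),
    neg_mul, Real.rpow_neg ht'.le, Real.rpow_mul ht'.le, Real.rpow_two, Real.rpow_two,
    show (2 : ℝ) ^ 2 = 4 by norm_num]
  field_simp

theorem one_div_le_pairwise_weight {ν t : ℝ} (hν : ν ≤ 0) (ht : 0 < t) :
    1 / (t * (1 + t)) ≤ (2 : ℝ) ^ (2 * ν) * t ^ (ν - 1) * (1 + t) ^ (-2 * ν - 1) := by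
  rw [pairwise_weight_eq ν ht]
  have hle : 4 * t / (1 + t) ^ 2 ≤ 1 :=
    div_le_one_of_le₀ (by linarith [sq_nonneg (1 - t)]) (sq_nonneg _)
  exact le_mul_of_one_le_left (by positivity)
    (Real.one_le_rpow_of_pos_of_le_one_of_nonpos (by positivity) hle hν)

end Weight

section Perspective

/-- The perspective `x f(y / x)` of a function `f`, the building block of pairwise entropies. Its
value at `x = 0` is the junk value `0`. -/
noncomputable def perspective (f : ℝ → ℝ) (x y : ℝ) : ℝ :=
  x * f (y / x)

/-- The directional derivative at `(x, y)`, in the direction `(a, b)`, of the perspective of a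
function `f` with derivative `f'`. -/
noncomputable def perspectiveDeriv (f f' : ℝ → ℝ) (x y a b : ℝ) : ℝ :=
  a * f (y / x) + f' (y / x) * (b - y / x * a)

/-- The second directional derivative at `(x, y)`, in the direction `(a, b)`, of the perspective of
a function with second derivative `f''`. -/
noncomputable def perspectiveDeriv₂ (f'' : ℝ → ℝ) (x y a b : ℝ) : ℝ :=
  f'' (y / x) * ((b - y / x * a) ^ 2 / x)

theorem differentiableAt_perspective_comp {E : Type*} [NormedAddCommGroup E] [NormedSpace ℝ E]
    {f : ℝ → ℝ} {X Y : E → ℝ} {p : E} (hX : DifferentiableAt ℝ X p)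
    (hY : DifferentiableAt ℝ Y p) (h0 : X p ≠ 0) (hf : DifferentiableAt ℝ f (Y p / X p)) :
    DifferentiableAt ℝ (fun u => perspective f (X u) (Y u)) p := by
  have hdiv : DifferentiableAt ℝ (fun u => Y u / X u) p := by
    simpa only [div_eq_mul_inv] using hY.fun_mul (hX.fun_inv h0)
  exact hX.fun_mul (hf.fun_comp' p hdiv)

variable {f f' f'' X Y : ℝ → ℝ} {a b s : ℝ}

theorem hasDerivAt_div_comp (hX : HasDerivAt X a s) (hY : HasDerivAt Y b s) (h0 : X s ≠ 0) :
    HasDerivAt (fun u => Y u / X u) ((b - Y s / X s * a) / X s) s := by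
  refine (hY.fun_div hX h0).congr_deriv ?_
  field_simp

theorem hasDerivAt_perspective_comp (hX : HasDerivAt X a s) (hY : HasDerivAt Y b s)
    (h0 : X s ≠ 0) (hf : HasDerivAt f (f' (Y s / X s)) (Y s / X s)) :
    HasDerivAt (fun u => perspective f (X u) (Y u)) (perspectiveDeriv f f' (X s) (Y s) a b) s := by
  refine (hX.fun_mul (hf.comp s (hasDerivAt_div_comp hX hY h0))).congr_deriv ?_
  simp only [perspectiveDeriv, Function.comp_apply]
  field_simp

theorem hasDerivAt_perspectiveDeriv_comp (hX : HasDerivAt X a s) (hY : HasDerivAt Y b s)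
    (h0 : X s ≠ 0) (hf : HasDerivAt f (f' (Y s / X s)) (Y s / X s))
    (hf' : HasDerivAt f' (f'' (Y s / X s)) (Y s / X s)) :
    HasDerivAt (fun u => perspectiveDeriv f f' (X u) (Y u) a b)
      (perspectiveDeriv₂ f'' (X s) (Y s) a b) s := by
  have hT := hasDerivAt_div_comp hX hY h0
  refine (((hf.comp s hT).const_mul a).fun_add
    ((hf'.comp s hT).fun_mul ((hT.mul_const a).const_sub b))).congr_deriv ?_
  simp only [perspectiveDeriv₂, Function.comp_apply]
  ring

theorem div_le_perspectiveDeriv₂ {x y : ℝ} (hx : 0 < x) (hy : 0 < y) (hxy : x + y ≤ 1)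
    (hf'' : 1 / (y / x * (1 + y / x)) ≤ f'' (y / x)) :
    (x * b - y * a) ^ 2 / (x * y) ≤ perspectiveDeriv₂ f'' x y a b :=
  calc (x * b - y * a) ^ 2 / (x * y)
      ≤ (x * b - y * a) ^ 2 / (x * y) / (x + y) :=
        le_div_self (by positivity) (by positivity) hxy
    _ = 1 / (y / x * (1 + y / x)) * ((b - y / x * a) ^ 2 / x) := by field_simp
    _ ≤ perspectiveDeriv₂ f'' x y a b := mul_le_mul_of_nonneg_right hf'' (by positivity)

end Perspective

section Simplex

variable {ι : Type*} [Fintype ι]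

/-- The open probability simplex: the strictly positive weights on `ι` with sum `1`. -/
def openSimplex (ι : Type*) [Fintype ι] : Set (ι → ℝ) :=
  {x | (∀ i, 0 < x i) ∧ ∑ i, x i = 1}

theorem convex_openSimplex : Convex ℝ (openSimplex ι) := by
  refine (convex_iff_forall_pos.2 fun x hx y hy a b ha hb hab => ⟨fun i => ?_, ?_⟩)
  · exact add_pos (mul_pos ha (hx.1 i)) (mul_pos hb (hy.1 i))
  · simp only [Pi.add_apply, Pi.smul_apply, smul_eq_mul, sum_add_distrib, ← mul_sum, hx.2, hy.2,
      mul_one, hab]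

theorem add_le_one_of_mem_openSimplex {x : ι → ℝ} (hx : x ∈ openSimplex ι) {i j : ι}
    (hij : i ≠ j) : x i + x j ≤ 1 :=
  hx.2 ▸ add_le_sum (fun k _ => (hx.1 k).le) (mem_univ i) (mem_univ j) hij

theorem sum_sum_sq_sub_div_eq {K : Type*} [Field K] {x : ι → K} (hx : ∀ i, x i ≠ 0) (e : ι → K) :
    ∑ i, ∑ j, (x i * e j - x j * e i) ^ 2 / (x i * x j) =
      2 * ((∑ i, x i) * ∑ i, e i ^ 2 / x i - (∑ i, e i) ^ 2) := by
  have hterm (i j : ι) : (x i * e j - x j * e i) ^ 2 / (x i * x j) =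
      x i * (e j ^ 2 / x j) - 2 * (e i * e j) + e i ^ 2 / x i * x j := by
    have hi := hx i
    have hj := hx j
    field_simp
    ring
  simp only [hterm, sum_add_distrib, sum_sub_distrib, ← mul_sum, ← sum_mul]
  ring

theorem sq_sum_abs_le_sum_sq_div {x : ι → ℝ} (hx : x ∈ openSimplex ι) (e : ι → ℝ) :
    (∑ i, |e i|) ^ 2 ≤ ∑ i, e i ^ 2 / x i := by
  simpa only [hx.2, div_one, sq_abs] using
    sq_sum_div_le_sum_sq_div univ (fun i => |e i|) fun i _ => hx.1 i

end Simplex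

section PairwiseEntropy

variable {f f' f'' : ℝ → ℝ} {ι : Type*} [Fintype ι] [DecidableEq ι]

/-- The entropy `Hpw` over an arbitrary finite set of classes, as a sum of perspectives. -/
noncomputable def pairwiseEntropy (f : ℝ → ℝ) (x : ι → ℝ) : ℝ :=
  -∑ i, ∑ j ∈ univ.erase i, perspective f (x i) (x j)

/-- The directional derivative at `x`, in the direction `e`, of the pairwise entropy of a function
`f` with derivative `f'`. -/
noncomputable def pairwiseEntropyDeriv (f f' : ℝ → ℝ) (x e : ι → ℝ) : ℝ :=
  -∑ i, ∑ j ∈ univ.erase i, perspectiveDeriv f f' (x i) (x j) (e i) (e j)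

/-- The second directional derivative at `x`, in the direction `e`, of the pairwise entropy of a
function with second derivative `f''`. -/
noncomputable def pairwiseEntropyDeriv₂ (f'' : ℝ → ℝ) (x e : ι → ℝ) : ℝ :=
  -∑ i, ∑ j ∈ univ.erase i, perspectiveDeriv₂ f'' (x i) (x j) (e i) (e j)

theorem pairwiseEntropyDeriv₂_le (hf'' : ∀ t, 0 < t → 1 / (t * (1 + t)) ≤ f'' t) {x e : ι → ℝ}
    (hx : x ∈ openSimplex ι) (he : ∑ i, e i = 0) :
    pairwiseEntropyDeriv₂ f'' x e ≤ -2 * (∑ i, |e i|) ^ 2 := by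
  have hlower : 2 * (∑ i, |e i|) ^ 2 ≤
      ∑ i, ∑ j ∈ univ.erase i, perspectiveDeriv₂ f'' (x i) (x j) (e i) (e j) :=
    calc 2 * (∑ i, |e i|) ^ 2
        ≤ 2 * ∑ i, e i ^ 2 / x i := by gcongr; exact sq_sum_abs_le_sum_sq_div hx e
      _ = ∑ i, ∑ j, (x i * e j - x j * e i) ^ 2 / (x i * x j) := by
        rw [sum_sum_sq_sub_div_eq (fun i => (hx.1 i).ne'), hx.2, he]
        ring
      _ = ∑ i, ∑ j ∈ univ.erase i, (x i * e j - x j * e i) ^ 2 / (x i * x j) :=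
        sum_congr rfl fun i _ => (sum_erase _ (by simp)).symm
      _ ≤ _ := by
        refine sum_le_sum fun i _ => sum_le_sum fun j hj => ?_
        exact div_le_perspectiveDeriv₂ (hx.1 i) (hx.1 j)
          (add_le_one_of_mem_openSimplex hx (ne_of_mem_erase hj).symm)
          (hf'' _ (div_pos (hx.1 j) (hx.1 i)))
  rw [pairwiseEntropyDeriv₂]
  linarith

theorem differentiableAt_pairwiseEntropy (hf : ∀ t, 0 < t → HasDerivAt f (f' t) t)
    {x : ι → ℝ} (hx : ∀ i, 0 < x i) :
    DifferentiableAt ℝ (pairwiseEntropy f) x :=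
  .fun_neg <| .fun_sum fun i _ => .fun_sum fun j _ =>
    differentiableAt_perspective_comp (differentiableAt_apply i x) (differentiableAt_apply j x)
      (hx i).ne' (hf _ (div_pos (hx j) (hx i))).differentiableAt

theorem hasDerivAt_pairwiseEntropy_comp (hf : ∀ t, 0 < t → HasDerivAt f (f' t) t)
    {x : ℝ → ι → ℝ} {e : ι → ℝ} {s : ℝ} (hx : HasDerivAt x e s) (hpos : ∀ i, 0 < x s i) :
    HasDerivAt (fun u => pairwiseEntropy f (x u)) (pairwiseEntropyDeriv f f' (x s) e) s :=
  have hcoord := hasDerivAt_pi.1 hx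
  .fun_neg <| .fun_sum fun i _ => .fun_sum fun j _ =>
    hasDerivAt_perspective_comp (hcoord i) (hcoord j) (hpos i).ne'
      (hf _ (div_pos (hpos j) (hpos i)))

theorem hasDerivAt_pairwiseEntropyDeriv_comp (hf : ∀ t, 0 < t → HasDerivAt f (f' t) t)
    (hf' : ∀ t, 0 < t → HasDerivAt f' (f'' t) t)
    {x : ℝ → ι → ℝ} {e : ι → ℝ} {s : ℝ} (hx : HasDerivAt x e s) (hpos : ∀ i, 0 < x s i) :
    HasDerivAt (fun u => pairwiseEntropyDeriv f f' (x u) e)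
      (pairwiseEntropyDeriv₂ f'' (x s) e) s :=
  have hcoord := hasDerivAt_pi.1 hx
  .fun_neg <| .fun_sum fun i _ => .fun_sum fun j _ =>
    hasDerivAt_perspectiveDeriv_comp (hcoord i) (hcoord j) (hpos i).ne'
      (hf _ (div_pos (hpos j) (hpos i))) (hf' _ (div_pos (hpos j) (hpos i)))

theorem fderiv_pairwiseEntropy (hf : ∀ t, 0 < t → HasDerivAt f (f' t) t)
    {x : ι → ℝ} (hx : ∀ i, 0 < x i) (e : ι → ℝ) :
    fderiv ℝ (pairwiseEntropy f) x e = pairwiseEntropyDeriv f f' x e := by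
  have hline : HasDerivAt (fun s : ℝ => lineMap x (x + e) s) e 0 := by
    simpa using hasDerivAt_lineMap (a := x) (b := x + e) (x := (0 : ℝ))
  have hcurve := hasDerivAt_pairwiseEntropy_comp hf hline (by simpa using hx)
  have hfderiv := (differentiableAt_pairwiseEntropy hf hx).hasFDerivAt
  rw [← lineMap_apply_zero (k := ℝ) x (x + e)] at hfderiv
  simpa using (hfderiv.comp_hasDerivAt 0 hline).unique hcurve

theorem stmt13_general (hf : ∀ t, 0 < t → HasDerivAt f (f' t) t)
    (hf' : ∀ t, 0 < t → HasDerivAt f' (f'' t) t)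
    (hf'' : ∀ t, 0 < t → 1 / (t * (1 + t)) ≤ f'' t) {η q : ι → ℝ}
    (hη : η ∈ openSimplex ι) (hq : q ∈ openSimplex ι) :
    (∑ i, |η i - q i|) ^ 2 ≤
      pairwiseEntropy f q - pairwiseEntropy f η -
        ∑ i, (q i - η i) * deriv (fun s => pairwiseEntropy f (Function.update q i s)) (q i) := by
  have hmem : ∀ s ∈ Icc (0 : ℝ) 1, lineMap q η s ∈ openSimplex ι :=
    fun s hs => convex_openSimplex.lineMap_mem hq hη hs
  have hdir : ∑ i, (η - q) i = 0 := by simp [hη.2, hq.2]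
  have htaylor := le_quadratic_of_second_deriv_le one_pos
    (fun s hs => hasDerivAt_pairwiseEntropy_comp hf hasDerivAt_lineMap (hmem s hs).1)
    (fun s hs => hasDerivAt_pairwiseEntropyDeriv_comp hf hf' hasDerivAt_lineMap (hmem s hs).1)
    (fun s hs => pairwiseEntropyDeriv₂_le hf'' (hmem s hs) hdir)
  have hlinear : ∑ i, (q i - η i) * deriv (fun s => pairwiseEntropy f (Function.update q i s)) (q i)
      = -pairwiseEntropyDeriv f f' q (η - q) := by
    rw [← fderiv_pairwiseEntropy hf hq.1, ← map_neg, neg_sub]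
    exact sum_smul_deriv_update (differentiableAt_pairwiseEntropy hf hq.1) (q - η)
  rw [lineMap_apply_zero, lineMap_apply_one] at htaylor
  rw [hlinear]
  simp only [Pi.sub_apply] at htaylor
  linarith

end PairwiseEntropy

theorem stmt13 (d : ℕ) (hd : 1 ≤ d) (ν : ℝ) (hν : ν ≤ 0) (f₀ : ℝ → ℝ)
    (hf : ContDiffOn ℝ 2 f₀ (Set.Ioi 0))
    (hf'' : ∀ t : ℝ, 0 < t →
      deriv (deriv f₀) t = (2 : ℝ) ^ (2 * ν) * t ^ (ν - 1) * (1 + t) ^ (-2 * ν - 1))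
    (η q : Fin (d + 1) → ℝ)
    (hη0 : ∀ j, 0 < η j) (hη1 : ∑ j, η j = 1)
    (hq0 : ∀ j, 0 < q j) (hq1 : ∑ j, q j = 1) :
    (∑ i, |η i - q i|) ^ 2 ≤
      Hpw d f₀ q - Hpw d f₀ η -
        ∑ i, (q i - η i) *
          deriv (fun s => Hpw d f₀ (Function.update q i s)) (q i) := by
  have hf' : DifferentiableOn ℝ (deriv f₀) (Ioi 0) :=
    (hf.deriv_of_isOpen isOpen_Ioi one_add_one_eq_two.le).differentiableOn one_ne_zero
  exact stmt13_general
    (fun t ht => (hf.differentiableOn two_ne_zero).hasDerivAt (Ioi_mem_nhds ht))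
    (fun t ht => hf'.hasDerivAt (Ioi_mem_nhds ht))
    (fun t ht => (one_div_le_pairwise_weight hν ht).trans_eq (hf'' t ht).symm)
    ⟨hη0, hη1⟩ ⟨hq0, hq1⟩
end

section
/- Let m ≥ 2 and β ∈ (0,1). Define H(q) = ‖q‖_β = (Σ_{j=1}^m q_j^β)^{1/β} on the open positive orthant, with partial derivatives ∂_j H(q) = q_j^{β−1} ‖q‖_β^{1−β}. Let κ_β = (1−β) m^{(1−1/β)(2β−1)} 2^{2−2β} if β ∈ [1/2, 1), and κ_β = (1−β) 2^{1/β−1} if β ∈ (0, 1/2]. Then for all η, q ∈ Δ_m with all coordinates positive: ‖q‖_β − ‖η‖_β − Σ_{j=1}^m (q_j − η_j) q_j^{β−1} ‖q‖_β^{1−β} ≥ (κ_β / 2) ( Σ_{j=1}^m |η_j − q_j| )^2. -/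
open Finset

/-!
The Bregman divergence is the second-order remainder of `-‖·‖_β` along the segment from `q` to `η`,
so it suffices to bound the Hessian of `-‖·‖_β` below by `κ_β ‖v‖₁²`, at a probability vector `x`
and in a direction `v` with `∑ v = 0`. Up to positive factors the Hessian form is the Gram
determinant of `x` and `v` for the inner product with weights `x j ^ (β - 2)`, that is, the squared
distance from `v` to the line `ℝ x`. Test it by Cauchy–Schwarz against the centred indicator
`1_P - x(P)` of `P = {j | 0 ≤ v j}`: this annihilates `x`, and its pairing with `v` is
`v(P) = ‖v‖₁ / 2`. By superadditivity of `t ↦ t ^ (2 - β)` the dual norm of the test vector is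
bounded in terms of `p = x(P)` alone; a two-point estimate in `p`, combined with
`p ^ β + (1 - p) ^ β ≤ ‖x‖_β ^ β` and `‖x‖_β ≤ m ^ (1 / β - 1)`, then produces `κ_β`.
-/

lemma add_mul_add_half_mul_sq_le_of_hasDerivAt2 {f f' f'' : ℝ → ℝ} {a b K : ℝ} (hab : a < b)
    (hf : ContinuousOn f (Set.Icc a b)) (hf' : ∀ t ∈ Set.Ico a b, HasDerivAt f (f' t) t)
    (hf'' : ∀ t ∈ Set.Ioo a b, HasDerivAt f' (f'' t) t) (hK : ∀ t ∈ Set.Ioo a b, K ≤ f'' t) :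
    f a + f' a * (b - a) + K / 2 * (b - a) ^ 2 ≤ f b := by
  set g : ℝ → ℝ := fun t ↦ f t - K / 2 * (t - a) ^ 2 with hg
  have hg' : ∀ t ∈ Set.Ico a b, HasDerivAt g (f' t - K * (t - a)) t := fun t ht ↦ by
    refine ((hf' t ht).sub ((((hasDerivAt_id t).sub_const a).pow 2).const_mul (K / 2))).congr_deriv
      ?_
    simp only [id_eq]
    ring
  have hconv : ConvexOn ℝ (Set.Icc a b) g := by
    refine convexOn_of_hasDerivWithinAt2_nonneg (f' := fun t ↦ f' t - K * (t - a))
      (f'' := fun t ↦ f'' t - K) (convex_Icc a b) (by fun_prop) ?_ ?_ ?_ <;>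
      rw [interior_Icc] <;> intro t ht
    · exact (hg' t (Set.Ioo_subset_Ico_self ht)).hasDerivWithinAt
    · exact ((hf'' t ht).fun_sub
        (((hasDerivAt_id t).sub_const a).const_mul K)).hasDerivWithinAt.congr_deriv (by ring)
    · exact sub_nonneg.2 (hK t ht)
  have hslope := hconv.le_slope_of_hasDerivAt (Set.left_mem_Icc.2 hab.le)
    (Set.right_mem_Icc.2 hab.le) hab (hg' a (Set.left_mem_Ico.2 hab))
  rw [slope_def_field, le_div_iff₀ (sub_pos.2 hab)] at hslope
  simp only [hg, sub_self] at hslope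
  linarith

section FinsetSums

variable {ι : Type*}

lemma sum_rpow_le_rpow_sum {s : Finset ι} {x : ι → ℝ} {p : ℝ} (hx : ∀ i ∈ s, 0 ≤ x i)
    (hp : 1 ≤ p) : ∑ i ∈ s, x i ^ p ≤ (∑ i ∈ s, x i) ^ p := by
  induction s using Finset.cons_induction with
  | empty => simp [Real.zero_rpow (by linarith : p ≠ 0)]
  | cons i s hi ih =>
    rw [Finset.forall_mem_cons] at hx
    simp only [sum_cons]
    exact (add_le_add_right (ih hx.2) _).trans
      (Real.add_rpow_le_rpow_add hx.1 (sum_nonneg hx.2) hp)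

lemma rpow_sum_le_sum_rpow {s : Finset ι} {x : ι → ℝ} {p : ℝ} (hx : ∀ i ∈ s, 0 ≤ x i)
    (hp₀ : 0 < p) (hp₁ : p ≤ 1) : (∑ i ∈ s, x i) ^ p ≤ ∑ i ∈ s, x i ^ p := by
  induction s using Finset.cons_induction with
  | empty => simp [Real.zero_rpow hp₀.ne']
  | cons i s hi ih =>
    rw [Finset.forall_mem_cons] at hx
    simp only [sum_cons]
    exact (Real.rpow_add_le_add_rpow hx.1 (sum_nonneg hx.2) hp₀.le hp₁).trans
      (add_le_add_right (ih hx.2) _)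

lemma sum_abs_eq_two_mul_sum_nonneg {s : Finset ι} {v : ι → ℝ} (hv : ∑ j ∈ s, v j = 0) :
    ∑ j ∈ s, |v j| = 2 * ∑ j ∈ s with 0 ≤ v j, v j := by
  have habs : ∀ j, |v j| = 2 * (if 0 ≤ v j then v j else 0) - v j := fun j ↦ by
    split_ifs with h
    · rw [abs_of_nonneg h]
      ring
    · rw [abs_of_neg (not_le.1 h)]
      ring
  simp only [habs, sum_sub_distrib, hv, sub_zero, ← mul_sum, sum_filter]

/-- Cauchy–Schwarz for the component of `v` orthogonal to `x` in the inner product with weights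
`w`. -/
lemma sum_mul_sq_mul_sq_sum_mul_le {s : Finset ι} {w x v a : ι → ℝ} (hw : ∀ j ∈ s, 0 < w j)
    (hx : 0 < ∑ j ∈ s, w j * x j ^ 2) (hax : ∑ j ∈ s, a j * x j = 0) :
    (∑ j ∈ s, w j * x j ^ 2) * (∑ j ∈ s, a j * v j) ^ 2 ≤
      (∑ j ∈ s, a j ^ 2 / w j) *
        ((∑ j ∈ s, w j * x j ^ 2) * (∑ j ∈ s, w j * v j ^ 2) -
          (∑ j ∈ s, w j * x j * v j) ^ 2) := by
  set S := ∑ j ∈ s, w j * x j ^ 2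
  set A := ∑ j ∈ s, w j * v j ^ 2
  set T := ∑ j ∈ s, w j * x j * v j
  have hcs := sum_sq_le_sum_mul_sum_of_sq_le_mul s (r := fun j ↦ a j * (S * v j - T * x j))
    (f := fun j ↦ a j ^ 2 / w j) (g := fun j ↦ w j * (S * v j - T * x j) ^ 2)
    (fun j hj ↦ div_nonneg (sq_nonneg _) (hw j hj).le)
    (fun j hj ↦ mul_nonneg (hw j hj).le (sq_nonneg _))
    (fun j hj ↦ by have := (hw j hj).ne'; field_simp; rfl)
  have hpair : ∑ j ∈ s, a j * (S * v j - T * x j) = S * ∑ j ∈ s, a j * v j := calc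
    _ = ∑ j ∈ s, (S * (a j * v j) - T * (a j * x j)) := sum_congr rfl fun j _ ↦ by ring
    _ = _ := by rw [sum_sub_distrib, ← mul_sum, ← mul_sum, hax, mul_zero, sub_zero]
  have hgram : ∑ j ∈ s, w j * (S * v j - T * x j) ^ 2 = S * (S * A - T ^ 2) := calc
    _ = ∑ j ∈ s, (S ^ 2 * (w j * v j ^ 2) - 2 * S * T * (w j * x j * v j)
          + T ^ 2 * (w j * x j ^ 2)) := sum_congr rfl fun j _ ↦ by ring
    _ = S ^ 2 * A - 2 * S * T * T + T ^ 2 * S := by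
      simp only [sum_add_distrib, sum_sub_distrib, ← mul_sum, S, A, T]
    _ = _ := by ring
  rw [hpair, hgram] at hcs
  refine le_of_mul_le_mul_left ?_ hx
  linarith

end FinsetSums

section BetaNorm

variable {ι : Type*} [Fintype ι] {β : ℝ} {x q v : ι → ℝ} {t : ℝ}

/-- The generalized entropy `‖x‖_β = (∑ x j ^ β) ^ (1 / β)`, meant for `x` with nonnegative
coordinates; no absolute values are taken. -/
noncomputable def betaNorm (β : ℝ) (x : ι → ℝ) : ℝ := (∑ j, x j ^ β) ^ (1 / β)

/-- The gradient of `betaNorm β` on the open positive orthant. -/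
noncomputable def betaNormGrad (β : ℝ) (x : ι → ℝ) (j : ι) : ℝ :=
  x j ^ (β - 1) * betaNorm β x ^ (1 - β)

/-- The Hessian of `betaNorm β` at a point `x` of the open positive orthant, as a quadratic form
in `v`. -/
noncomputable def betaNormHess (β : ℝ) (x v : ι → ℝ) : ℝ :=
  (1 - β) * betaNorm β x ^ (1 - 2 * β) *
    ((∑ j, x j ^ (β - 1) * v j) ^ 2 - (∑ j, x j ^ β) * ∑ j, x j ^ (β - 2) * v j ^ 2)

lemma sum_rpow_pos [Nonempty ι] (hx : ∀ j, 0 < x j) : 0 < ∑ j, x j ^ β :=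
  sum_pos (fun j _ ↦ Real.rpow_pos_of_pos (hx j) β) univ_nonempty

lemma betaNorm_pos [Nonempty ι] (hx : ∀ j, 0 < x j) : 0 < betaNorm β x :=
  Real.rpow_pos_of_pos (sum_rpow_pos hx) _

lemma betaNorm_rpow (hx : ∀ j, 0 ≤ x j) (r : ℝ) :
    betaNorm β x ^ r = (∑ j, x j ^ β) ^ (r / β) := by
  rw [betaNorm, ← Real.rpow_mul (sum_nonneg fun j _ ↦ Real.rpow_nonneg (hx j) β),
    one_div_mul_eq_div]

lemma betaNorm_rpow_self (hβ : β ≠ 0) (hx : ∀ j, 0 ≤ x j) :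
    betaNorm β x ^ β = ∑ j, x j ^ β := by
  rw [betaNorm_rpow hx, div_self hβ, Real.rpow_one]

lemma betaNorm_le (hβ₀ : 0 < β) (hβ₁ : β ≤ 1) (hx : ∀ j, 0 ≤ x j) :
    betaNorm β x ≤ (Fintype.card ι : ℝ) ^ (1 / β - 1) * ∑ j, x j := by
  have hpow : ∀ j, (x j ^ β) ^ (1 / β) = x j := fun j ↦ by
    rw [← Real.rpow_mul (hx j), mul_one_div_cancel hβ₀.ne', Real.rpow_one]
  simpa only [betaNorm, hpow, card_univ] using Real.rpow_sum_le_const_mul_sum_rpow_of_nonneg univ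
    ((one_le_div hβ₀).2 hβ₁) (fun j _ ↦ Real.rpow_nonneg (hx j) β)

lemma continuous_betaNorm (hβ : 0 < β) : Continuous (betaNorm β : (ι → ℝ) → ℝ) :=
  (continuous_finsetSum _ fun j _ ↦ (continuous_apply j).rpow_const fun _ ↦ .inr hβ.le).rpow_const
    fun _ ↦ .inr (one_div_pos.2 hβ).le

lemma hasDerivAt_sum_rpow_mul (p : ℝ) (w : ι → ℝ) (hx : ∀ j, (q + t • v) j ≠ 0) :
    HasDerivAt (fun s : ℝ ↦ ∑ j, (q + s • v) j ^ p * w j)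
      (p * ∑ j, (q + t • v) j ^ (p - 1) * (v j * w j)) t := by
  have hcoord : ∀ j, HasDerivAt (fun s : ℝ ↦ (q + s • v) j) (v j) t := fun j ↦ by
    simpa using ((hasDerivAt_id t).mul_const (v j)).const_add (q j)
  refine (HasDerivAt.fun_sum fun j _ ↦
    ((hcoord j).rpow_const (p := p) (.inl (hx j))).mul_const (w j)).congr_deriv ?_
  rw [mul_sum]
  exact sum_congr rfl fun j _ ↦ by ring

lemma sum_mul_betaNormGrad :
    ∑ j, v j * betaNormGrad β x j = betaNorm β x ^ (1 - β) * ∑ j, x j ^ (β - 1) * v j := by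
  rw [mul_sum]
  exact sum_congr rfl fun j _ ↦ by rw [betaNormGrad]; ring

lemma hasDerivAt_betaNorm [Nonempty ι] (hβ : β ≠ 0) (hx : ∀ j, 0 < (q + t • v) j) :
    HasDerivAt (fun s : ℝ ↦ betaNorm β (q + s • v)) (∑ j, v j * betaNormGrad β (q + t • v) j)
      t := by
  have hsum := hasDerivAt_sum_rpow_mul β 1 fun j ↦ (hx j).ne'
  simp only [Pi.one_apply, mul_one] at hsum
  refine (hsum.rpow_const (p := 1 / β) (.inl (sum_rpow_pos hx).ne')).congr_deriv ?_
  rw [sum_mul_betaNormGrad, betaNorm_rpow fun j ↦ (hx j).le,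
    show (1 - β) / β = 1 / β - 1 by field_simp]
  field_simp

lemma hasDerivAt_sum_mul_betaNormGrad [Nonempty ι] (hβ : β ≠ 0) (hx : ∀ j, 0 < (q + t • v) j) :
    HasDerivAt (fun s : ℝ ↦ ∑ j, v j * betaNormGrad β (q + s • v) j)
      (betaNormHess β (q + t • v) v) t := by
  have hN := betaNorm_pos (β := β) hx
  simp only [sum_mul_betaNormGrad]
  refine (((hasDerivAt_betaNorm hβ hx).rpow_const (p := 1 - β) (.inl hN.ne')).mul
    (hasDerivAt_sum_rpow_mul (β - 1) v fun j ↦ (hx j).ne')).congr_deriv ?_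
  have hpow : betaNorm β (q + t • v) ^ (1 - β) * betaNorm β (q + t • v) ^ (1 - β - 1) =
      betaNorm β (q + t • v) ^ (1 - 2 * β) := by
    rw [← Real.rpow_add hN]
    congr 1
    ring
  have hpow' : betaNorm β (q + t • v) ^ (1 - β) =
      betaNorm β (q + t • v) ^ (1 - 2 * β) * ∑ j, (q + t • v) j ^ β := by
    rw [← betaNorm_rpow_self hβ fun j ↦ (hx j).le, ← Real.rpow_add hN]
    congr 1
    ring
  rw [sum_mul_betaNormGrad, betaNormHess, ← hpow, sub_sub β 1 1, one_add_one_eq_two]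
  simp only [← sq]
  linear_combination
    (β - 1) * (∑ j, (q + t • v) j ^ (β - 2) * v j ^ 2) * (hpow' - (∑ j, (q + t • v) j ^ β) * hpow)

end BetaNorm

section TwoPoint

variable {β p : ℝ}

/-- The strong convexity constant `κ_β` of `-‖·‖_β` with respect to the `ℓ¹` norm on probability
vectors with `m` coordinates; `m` is real to avoid casts. -/
noncomputable def strongConvexityConst (m β : ℝ) : ℝ :=
  if (1 / 2 : ℝ) ≤ β then
    (1 - β) * m ^ ((1 - 1 / β) * (2 * β - 1)) * (2 : ℝ) ^ (2 - 2 * β)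
  else (1 - β) * (2 : ℝ) ^ (1 / β - 1)

lemma strongConvexityConst_nonneg {m : ℝ} (hm : 0 ≤ m) (hβ : β ≤ 1) :
    0 ≤ strongConvexityConst m β := by
  have := sub_nonneg.2 hβ
  unfold strongConvexityConst
  split_ifs <;> positivity

lemma mul_one_sub_le_quarter (p : ℝ) : p * (1 - p) ≤ 1 / 4 := by
  nlinarith [sq_nonneg (2 * p - 1)]

lemma rpow_add_rpow_one_sub_pos (hp : p ∈ Set.Icc (0 : ℝ) 1) : 0 < p ^ β + (1 - p) ^ β := by
  rcases hp.1.eq_or_lt with rfl | hp₀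
  · rw [sub_zero, Real.one_rpow]
    positivity
  · exact add_pos_of_pos_of_nonneg (Real.rpow_pos_of_pos hp₀ β)
      (Real.rpow_nonneg (sub_nonneg.2 hp.2) β)

lemma two_rpow_mul_rpow_mul_one_sub_le_one (hp : p ∈ Set.Icc (0 : ℝ) 1) (hβ : β ≤ 2) :
    (2 : ℝ) ^ (2 - 2 * β) * (4 * (p * (1 - p)) ^ (2 - β)) ≤ 1 := by
  have hr := mul_nonneg hp.1 (sub_nonneg.2 hp.2)
  calc (2 : ℝ) ^ (2 - 2 * β) * (4 * (p * (1 - p)) ^ (2 - β))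
      ≤ 2 ^ (2 - 2 * β) * (4 * (1 / 4) ^ (2 - β)) := by
        gcongr
        exact mul_one_sub_le_quarter p
    _ = 2 ^ (2 - 2 * β) * (2 ^ (2 : ℝ) * (2 ^ (-2 : ℝ)) ^ (2 - β)) := by norm_num
    _ = 2 ^ ((2 - 2 * β) + (2 + -2 * (2 - β))) := by
        rw [← Real.rpow_mul two_pos.le, ← Real.rpow_add two_pos, ← Real.rpow_add two_pos]
    _ = 1 := by
        ring_nf
        exact Real.rpow_zero 2

lemma two_mul_rpow_half_le_rpow_add_rpow {a b : ℝ} (ha : 0 ≤ a) (hb : 0 ≤ b) (r : ℝ) :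
    2 * (a * b) ^ (r / 2) ≤ a ^ r + b ^ r := by
  have hsq : ∀ y : ℝ, 0 ≤ y → y ^ r = (y ^ (r / 2)) ^ 2 := fun y hy ↦ by
    rw [← Real.rpow_mul_natCast hy]
    norm_num
  rw [Real.mul_rpow ha hb, hsq a ha, hsq b hb, ← mul_assoc]
  exact two_mul_le_add_sq _ _

lemma two_rpow_mul_rpow_mul_one_sub_le_rpow (hp : p ∈ Set.Icc (0 : ℝ) 1) (hβ₀ : 0 < β)
    (hβ : β ≤ 1 / 2) :
    (2 : ℝ) ^ (1 / β - 1) * (4 * (p * (1 - p)) ^ (2 - β)) ≤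
      (p ^ β + (1 - p) ^ β) ^ (1 / β - 2) := by
  have hq := sub_nonneg.2 hp.2
  have hr := mul_nonneg hp.1 hq
  have hexp : 0 ≤ 1 / β - 2 := by
    rw [sub_nonneg, le_div_iff₀ hβ₀]
    linarith
  have heighth : (p * (1 - p)) ^ (3 / 2 : ℝ) ≤ 1 / 8 := calc
    _ ≤ ((1 / 2 : ℝ) ^ (2 : ℝ)) ^ (3 / 2 : ℝ) :=
      Real.rpow_le_rpow hr ((mul_one_sub_le_quarter p).trans (by norm_num)) (by norm_num)
    _ = 1 / 8 := by
      rw [← Real.rpow_mul (by norm_num)]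
      norm_num
  calc (2 : ℝ) ^ (1 / β - 1) * (4 * (p * (1 - p)) ^ (2 - β))
      = 2 ^ (1 / β - 2) * (p * (1 - p)) ^ (1 / 2 - β) * (8 * (p * (1 - p)) ^ (3 / 2 : ℝ)) := by
        rw [show 2 - β = (1 / 2 - β) + 3 / 2 by ring,
          Real.rpow_add_of_nonneg hr (by linarith) (by norm_num),
          show 1 / β - 1 = (1 / β - 2) + 1 by ring, Real.rpow_add_one two_ne_zero]
        ring
    _ ≤ 2 ^ (1 / β - 2) * (p * (1 - p)) ^ (1 / 2 - β) :=
        mul_le_of_le_one_right (by positivity) (by linarith)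
    _ = (2 * (p * (1 - p)) ^ (β / 2)) ^ (1 / β - 2) := by
        rw [Real.mul_rpow two_pos.le (by positivity), ← Real.rpow_mul hr]
        congr 2
        field_simp
    _ ≤ _ := Real.rpow_le_rpow (by positivity)
        (two_mul_rpow_half_le_rpow_add_rpow hp.1 hq β) hexp

/-- `N` plays the role of `‖x‖_β`, and `p` that of the mass given by `x` to a set of coordinates. -/
lemma strongConvexityConst_mul_le {m N : ℝ} (hβ : β ∈ Set.Ioo (0 : ℝ) 1)
    (hp : p ∈ Set.Icc (0 : ℝ) 1) (hm : 0 ≤ m) (hN : 0 < N) (hpN : p ^ β + (1 - p) ^ β ≤ N ^ β)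
    (hNm : N ≤ m ^ (1 / β - 1)) :
    strongConvexityConst m β * (4 * (p * (1 - p)) ^ (2 - β) * (p ^ β + (1 - p) ^ β)) ≤
      (1 - β) * N ^ (1 - β) := by
  obtain ⟨hβ₀, hβ₁⟩ := hβ
  have : 0 ≤ 1 - β := (sub_pos.2 hβ₁).le
  have hD := rpow_add_rpow_one_sub_pos (β := β) hp
  set D := p ^ β + (1 - p) ^ β
  unfold strongConvexityConst
  split_ifs with hβhalf
  · have hmN : m ^ ((1 - 1 / β) * (2 * β - 1)) ≤ N ^ (1 - 2 * β) := calc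
      _ = (m ^ (1 / β - 1)) ^ (1 - 2 * β) := by
        rw [← Real.rpow_mul hm]
        ring_nf
      _ ≤ _ := Real.rpow_le_rpow_of_nonpos hN hNm (by linarith)
    calc (1 - β) * m ^ ((1 - 1 / β) * (2 * β - 1)) * (2 : ℝ) ^ (2 - 2 * β) *
          (4 * (p * (1 - p)) ^ (2 - β) * D)
        = (1 - β) * m ^ ((1 - 1 / β) * (2 * β - 1)) *
          ((2 : ℝ) ^ (2 - 2 * β) * (4 * (p * (1 - p)) ^ (2 - β))) * D := by ring
      _ ≤ (1 - β) * N ^ (1 - 2 * β) * 1 * N ^ β := by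
          have hr := mul_nonneg hp.1 (sub_nonneg.2 hp.2)
          gcongr
          exact two_rpow_mul_rpow_mul_one_sub_le_one hp (hβ₁.le.trans one_le_two)
      _ = (1 - β) * N ^ (1 - β) := by
          rw [mul_one, mul_assoc, ← Real.rpow_add hN]
          ring_nf
  · have hexp : 0 ≤ 1 / β - 1 := sub_nonneg.2 ((one_le_div hβ₀).2 hβ₁.le)
    calc (1 - β) * (2 : ℝ) ^ (1 / β - 1) * (4 * (p * (1 - p)) ^ (2 - β) * D)
        = (1 - β) * ((2 : ℝ) ^ (1 / β - 1) * (4 * (p * (1 - p)) ^ (2 - β)) * D) := by ring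
      _ ≤ (1 - β) * (D ^ (1 / β - 2) * D) := by
          gcongr
          exact two_rpow_mul_rpow_mul_one_sub_le_rpow hp hβ₀ (not_le.1 hβhalf).le
      _ = (1 - β) * D ^ (1 / β - 1) := by
          rw [← Real.rpow_add_one hD.ne']
          ring_nf
      _ ≤ (1 - β) * (N ^ β) ^ (1 / β - 1) := by gcongr
      _ = (1 - β) * N ^ (1 - β) := by
          rw [← Real.rpow_mul hN.le, mul_sub, mul_one_div_cancel hβ₀.ne', mul_one]

end TwoPoint

section HessianBound

variable {ι : Type*} [Fintype ι] {β : ℝ} {x v : ι → ℝ}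

lemma sum_compl_eq_one_sub [DecidableEq ι] (hx₁ : ∑ j, x j = 1) (s : Finset ι) :
    ∑ j ∈ sᶜ, x j = 1 - ∑ j ∈ s, x j := by
  rw [← hx₁, ← sum_add_sum_compl s, add_sub_cancel_left]

lemma sum_mem_Icc (hx : ∀ j, 0 ≤ x j) (hx₁ : ∑ j, x j = 1) (s : Finset ι) :
    ∑ j ∈ s, x j ∈ Set.Icc (0 : ℝ) 1 :=
  ⟨sum_nonneg fun j _ ↦ hx j, hx₁ ▸ sum_le_univ_sum_of_nonneg hx⟩

lemma rpow_sum_add_rpow_one_sub_sum_le (hβ₀ : 0 < β) (hβ₁ : β ≤ 1) (hx : ∀ j, 0 ≤ x j)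
    (hx₁ : ∑ j, x j = 1) (s : Finset ι) :
    (∑ j ∈ s, x j) ^ β + (1 - ∑ j ∈ s, x j) ^ β ≤ ∑ j, x j ^ β := by
  classical
  rw [← sum_compl_eq_one_sub hx₁, ← sum_add_sum_compl s fun j ↦ x j ^ β]
  exact add_le_add (rpow_sum_le_sum_rpow (fun j _ ↦ hx j) hβ₀ hβ₁)
    (rpow_sum_le_sum_rpow (fun j _ ↦ hx j) hβ₀ hβ₁)

lemma sum_ite_sub_mul [DecidableEq ι] (s : Finset ι) (c : ℝ) (f : ι → ℝ) :
    ∑ j, ((if j ∈ s then 1 else 0) - c) * f j = ∑ j ∈ s, f j - c * ∑ j, f j := by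
  simp only [sub_mul, ite_mul, one_mul, zero_mul, sum_sub_distrib, sum_ite_mem, univ_inter, mul_sum]

lemma sum_sq_ite_sub_mul_rpow_le [DecidableEq ι] (hβ₀ : 0 ≤ β) (hβ₁ : β ≤ 1) (hx : ∀ j, 0 ≤ x j)
    (hx₁ : ∑ j, x j = 1) (s : Finset ι) {p : ℝ} (hp : ∑ j ∈ s, x j = p) :
    ∑ j, ((if j ∈ s then 1 else 0) - p) ^ 2 * x j ^ (2 - β) ≤
      (p * (1 - p)) ^ (2 - β) * (p ^ β + (1 - p) ^ β) := by
  have hpq := sum_mem_Icc hx hx₁ s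
  rw [hp] at hpq
  have hq₀ := sub_nonneg.2 hpq.2
  have hpow : ∀ y : ℝ, 0 ≤ y → y ^ (2 - β) * y ^ β = y ^ 2 := fun y hy ↦ by
    rw [← Real.rpow_add_of_nonneg hy (by linarith) hβ₀, sub_add_cancel, Real.rpow_two]
  calc ∑ j, ((if j ∈ s then 1 else 0) - p) ^ 2 * x j ^ (2 - β)
      = (1 - p) ^ 2 * ∑ j ∈ s, x j ^ (2 - β) + p ^ 2 * ∑ j ∈ sᶜ, x j ^ (2 - β) := by
        rw [← sum_add_sum_compl s, mul_sum, mul_sum]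
        congr 1 <;> refine sum_congr rfl fun j hj ↦ ?_
        · rw [if_pos hj]
        · rw [if_neg (mem_compl.1 hj), zero_sub, neg_sq]
    _ ≤ (1 - p) ^ 2 * p ^ (2 - β) + p ^ 2 * (1 - p) ^ (2 - β) := by
        have hle : ∀ u : Finset ι, ∑ j ∈ u, x j ^ (2 - β) ≤ (∑ j ∈ u, x j) ^ (2 - β) := fun u ↦
          sum_rpow_le_rpow_sum (fun j _ ↦ hx j) (by linarith)
        rw [← hp, ← sum_compl_eq_one_sub hx₁]
        gcongr <;> exact hle _
    _ = (p * (1 - p)) ^ (2 - β) * (p ^ β + (1 - p) ^ β) := by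
        rw [Real.mul_rpow hpq.1 hq₀, ← hpow p hpq.1, ← hpow (1 - p) hq₀]
        ring

lemma sq_sum_rpow_mul_le (hx : ∀ j, 0 < x j) (v : ι → ℝ) :
    (∑ j, x j ^ (β - 1) * v j) ^ 2 ≤ (∑ j, x j ^ β) * ∑ j, x j ^ (β - 2) * v j ^ 2 := by
  refine sum_sq_le_sum_mul_sum_of_sq_le_mul univ (fun j _ ↦ Real.rpow_nonneg (hx j).le β)
    (fun j _ ↦ mul_nonneg (Real.rpow_nonneg (hx j).le _) (sq_nonneg _)) fun j _ ↦ le_of_eq ?_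
  have hpow : (x j ^ (β - 1)) ^ 2 = x j ^ β * x j ^ (β - 2) := by
    rw [← Real.rpow_mul_natCast (hx j).le, ← Real.rpow_add (hx j)]
    ring_nf
  rw [mul_pow, hpow, mul_assoc]

lemma sum_rpow_mul_sq_sum_le [Nonempty ι] (hβ₀ : 0 ≤ β) (hβ₁ : β ≤ 1) (hx : ∀ j, 0 < x j)
    (hx₁ : ∑ j, x j = 1) (hv : ∑ j, v j = 0) (s : Finset ι) {p : ℝ} (hp : ∑ j ∈ s, x j = p) :
    (∑ j, x j ^ β) * (∑ j ∈ s, v j) ^ 2 ≤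
      (p * (1 - p)) ^ (2 - β) * (p ^ β + (1 - p) ^ β) *
        ((∑ j, x j ^ β) * (∑ j, x j ^ (β - 2) * v j ^ 2) - (∑ j, x j ^ (β - 1) * v j) ^ 2) := by
  classical
  have hx₂ : ∀ j, x j ^ (β - 2) * x j ^ 2 = x j ^ β := fun j ↦ by
    rw [← Real.rpow_add_natCast (hx j).ne', Nat.cast_ofNat, sub_add_cancel]
  have hxv : ∀ j, x j ^ (β - 2) * x j = x j ^ (β - 1) := fun j ↦ by
    rw [← Real.rpow_add_one (hx j).ne']
    ring_nf
  have hdiv : ∀ j (y : ℝ), y / x j ^ (β - 2) = y * x j ^ (2 - β) := fun j y ↦ by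
    rw [← neg_sub, Real.rpow_neg (hx j).le, div_inv_eq_mul]
  have hS : 0 < ∑ j, x j ^ β := sum_rpow_pos hx
  have hcs := sum_mul_sq_mul_sq_sum_mul_le (s := univ) (w := fun j ↦ x j ^ (β - 2)) (x := x)
    (v := v) (a := fun j ↦ (if j ∈ s then 1 else 0) - p)
    (fun j _ ↦ Real.rpow_pos_of_pos (hx j) _) (by simpa only [hx₂] using hS)
    (by rw [sum_ite_sub_mul, hp, hx₁, mul_one, sub_self])
  simp only [hx₂, hxv, hdiv, sum_ite_sub_mul, hv, mul_zero, sub_zero] at hcs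
  exact hcs.trans (mul_le_mul_of_nonneg_right
    (sum_sq_ite_sub_mul_rpow_le hβ₀ hβ₁ (fun j ↦ (hx j).le) hx₁ s hp)
    (sub_nonneg.2 (sq_sum_rpow_mul_le hx v)))

lemma strongConvexityConst_mul_sq_sum_abs_le_neg_betaNormHess [Nonempty ι]
    (hβ : β ∈ Set.Ioo (0 : ℝ) 1) (hx : ∀ j, 0 < x j) (hx₁ : ∑ j, x j = 1) (hv : ∑ j, v j = 0) :
    strongConvexityConst (Fintype.card ι) β * (∑ j, |v j|) ^ 2 ≤ -betaNormHess β x v := by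
  have hx₀ : ∀ j, 0 ≤ x j := fun j ↦ (hx j).le
  set P : Finset ι := {j | 0 ≤ v j}
  set p := ∑ j ∈ P, x j with hp
  set G := (∑ j, x j ^ β) * (∑ j, x j ^ (β - 2) * v j ^ 2) - (∑ j, x j ^ (β - 1) * v j) ^ 2 with hG
  have hG₀ : 0 ≤ G := sub_nonneg.2 (sq_sum_rpow_mul_le hx v)
  have hN : 0 < betaNorm β x := betaNorm_pos hx
  have hNβ : betaNorm β x ^ β = ∑ j, x j ^ β := betaNorm_rpow_self hβ.1.ne' hx₀
  have hcs : betaNorm β x ^ β * (∑ j ∈ P, v j) ^ 2 ≤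
      (p * (1 - p)) ^ (2 - β) * (p ^ β + (1 - p) ^ β) * G :=
    hNβ ▸ sum_rpow_mul_sq_sum_le hβ.1.le hβ.2.le hx hx₁ hv P hp.symm
  have hκ : strongConvexityConst (Fintype.card ι) β *
      (4 * (p * (1 - p)) ^ (2 - β) * (p ^ β + (1 - p) ^ β)) ≤ (1 - β) * betaNorm β x ^ (1 - β) :=
    strongConvexityConst_mul_le hβ (sum_mem_Icc hx₀ hx₁ P) (Nat.cast_nonneg _) hN
      (hNβ ▸ rpow_sum_add_rpow_one_sub_sum_le hβ.1 hβ.2.le hx₀ hx₁ P)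
      (by simpa only [hx₁, mul_one] using betaNorm_le hβ.1 hβ.2.le hx₀)
  have hκ₀ := strongConvexityConst_nonneg (Nat.cast_nonneg (α := ℝ) (Fintype.card ι)) hβ.2.le
  refine le_of_mul_le_mul_left ?_ (Real.rpow_pos_of_pos hN β)
  calc betaNorm β x ^ β * (strongConvexityConst (Fintype.card ι) β * (∑ j, |v j|) ^ 2)
      = strongConvexityConst (Fintype.card ι) β *
          (4 * (betaNorm β x ^ β * (∑ j ∈ P, v j) ^ 2)) := by
        rw [sum_abs_eq_two_mul_sum_nonneg hv]
        ring
    _ ≤ strongConvexityConst (Fintype.card ι) β *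
          (4 * ((p * (1 - p)) ^ (2 - β) * (p ^ β + (1 - p) ^ β) * G)) := by gcongr
    _ = strongConvexityConst (Fintype.card ι) β *
          (4 * (p * (1 - p)) ^ (2 - β) * (p ^ β + (1 - p) ^ β)) * G := by ring
    _ ≤ (1 - β) * betaNorm β x ^ (β + (1 - 2 * β)) * G := by
        rw [show β + (1 - 2 * β) = 1 - β by ring]
        gcongr
    _ = betaNorm β x ^ β * -betaNormHess β x v := by
        rw [Real.rpow_add hN, betaNormHess, hG]
        ring

end HessianBound

lemma add_smul_sub_pos {ι : Type*} {q η : ι → ℝ} (hη : ∀ j, 0 ≤ η j) (hq : ∀ j, 0 < q j) {t : ℝ}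
    (ht : t ∈ Set.Ico (0 : ℝ) 1) (j : ι) : 0 < (q + t • (η - q)) j := by
  have : (q + t • (η - q)) j = (1 - t) * q j + t * η j := by
    simp only [Pi.add_apply, Pi.smul_apply, Pi.sub_apply, smul_eq_mul]
    ring
  rw [this]
  exact add_pos_of_pos_of_nonneg (mul_pos (sub_pos.2 ht.2) (hq j)) (mul_nonneg ht.1 (hη j))

theorem stmt14_general {ι : Type*} [Fintype ι] {β : ℝ} (hβ : β ∈ Set.Ioo (0 : ℝ) 1) {η q : ι → ℝ}
    (hη₀ : ∀ j, 0 ≤ η j) (hη₁ : ∑ j, η j = 1) (hq₀ : ∀ j, 0 < q j) (hq₁ : ∑ j, q j = 1) :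
    strongConvexityConst (Fintype.card ι) β / 2 * (∑ j, |η j - q j|) ^ 2 ≤
      betaNorm β q - betaNorm β η - ∑ j, (q j - η j) * betaNormGrad β q j := by
  have : Nonempty ι := by
    by_contra! h
    simp at hq₁
  have hv : ∑ j, (η - q) j = 0 := by simp [hη₁, hq₁]
  have hline : ∀ t : ℝ, ∑ j, (q + t • (η - q)) j = 1 := fun t ↦ by
    simp only [Pi.add_apply, Pi.smul_apply, smul_eq_mul, sum_add_distrib, ← mul_sum, hv, hq₁,
      mul_zero, add_zero]
  have htaylor := add_mul_add_half_mul_sq_le_of_hasDerivAt2 zero_lt_one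
    (f := fun t ↦ -betaNorm β (q + t • (η - q)))
    ((continuous_betaNorm hβ.1).comp (by fun_prop)).neg.continuousOn
    (fun t ht ↦ (hasDerivAt_betaNorm hβ.1.ne' (add_smul_sub_pos hη₀ hq₀ ht)).neg)
    (fun t ht ↦ (hasDerivAt_sum_mul_betaNormGrad hβ.1.ne'
      (add_smul_sub_pos hη₀ hq₀ (Set.Ioo_subset_Ico_self ht))).neg)
    (fun t ht ↦ strongConvexityConst_mul_sq_sum_abs_le_neg_betaNormHess hβ
      (add_smul_sub_pos hη₀ hq₀ (Set.Ioo_subset_Ico_self ht)) (hline t) hv)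
  have hgrad : ∑ j, (q j - η j) * betaNormGrad β q j =
      -∑ j, (η j - q j) * betaNormGrad β q j := by
    simp only [← sum_neg_distrib, ← neg_mul, neg_sub]
  simp only [zero_smul, add_zero, one_smul, add_sub_cancel, sub_zero, mul_one, one_pow,
    Pi.sub_apply] at htaylor
  linarith

theorem stmt14 (d : ℕ) (hd : 1 ≤ d) (β : ℝ) (hβ : β ∈ Set.Ioo (0 : ℝ) 1)
    (η q : Fin (d + 1) → ℝ)
    (hη0 : ∀ j, 0 < η j) (hη1 : ∑ j, η j = 1)
    (hq0 : ∀ j, 0 < q j) (hq1 : ∑ j, q j = 1) :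
    -- κ_β/2 · ‖η - q‖₁² ≤ Bregman divergence of -‖·‖_β from q to η
    ((if (1 / 2 : ℝ) ≤ β then
        (1 - β) * ((d : ℝ) + 1) ^ ((1 - 1 / β) * (2 * β - 1)) * (2 : ℝ) ^ (2 - 2 * β)
      else (1 - β) * (2 : ℝ) ^ (1 / β - 1)) / 2) * (∑ j, |η j - q j|) ^ 2 ≤
      (∑ j, q j ^ β) ^ (1 / β) - (∑ j, η j ^ β) ^ (1 / β) -
        ∑ j, (q j - η j) *
          (q j ^ (β - 1) * ((∑ k, q k ^ β) ^ (1 / β)) ^ (1 - β)) := by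
  simpa only [strongConvexityConst, betaNorm, betaNormGrad, Fintype.card_fin, Nat.cast_succ]
    using stmt14_general hβ (fun j ↦ (hη0 j).le) hη1 hq0 hq1
end

section
/- Let m ≥ 2, let A be a nonempty set, let L : {1,…,m} × A → ℝ be a loss, and let C = (c_{jk}) be a cost matrix with row maxima c_{jM} = max_{k} c_{jk}. Define the cost-transformed loss L̃(j, γ) = c_{jM} L(j, γ) + Σ_{k≠j} (c_{jM} − c_{jk}) (L(k, γ) − 1), the vector η̃ ∈ ℝ^m with η̃_j = c_{jM} η_j + Σ_{k≠j} (c_{kM} − c_{kj}) η_k, and D(η) = Σ_{j=1}^m Σ_{k≠j} η_j (c_{jM} − c_{jk}). Then for every η ∈ Δ_m: (a) η̃_j ≥ 0 for all j and Σ_{j=1}^m η̃_j > 0, so p := η̃ / (Σ_j η̃_j) ∈ Δ_m; (b) for every γ ∈ A, Σ_{j=1}^m η_j L̃(j, γ) = Σ_{j=1}^m η̃_j L(j, γ) − D(η); (c) if the infimum H_L(p) := inf_{γ'} Σ_j p_j L(j, γ') is finite, then for every γ ∈ A, Σ_j η_j L̃(j, γ) − inf_{γ'} Σ_j η_j L̃(j,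 γ') = (Σ_j η̃_j) · ( Σ_j p_j L(j, γ) − H_L(p) ). -/
open Finset

/-- Row maxima `c_{jM} = max_k c_{jk}`. -/
noncomputable def cM (d : ℕ) (C : Fin (d + 1) → Fin (d + 1) → ℝ)
    (j : Fin (d + 1)) : ℝ :=
  ⨆ k, C j k

/-- The cost-transformed loss
`L̃(j,γ) = c_{jM} L(j,γ) + Σ_{k≠j} (c_{jM} - c_{jk})(L(k,γ) - 1)`. -/
noncomputable def Ltil {A : Type} (d : ℕ) (C : Fin (d + 1) → Fin (d + 1) → ℝ)
    (L : Fin (d + 1) → A → ℝ) (j : Fin (d + 1)) (γ : A) : ℝ :=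
  cM d C j * L j γ +
    ∑ k ∈ Finset.univ.erase j, (cM d C j - C j k) * (L k γ - 1)

/-- `η̃_j = c_{jM} η_j + Σ_{k≠j} (c_{kM} - c_{kj}) η_k`. -/
noncomputable def etaTil (d : ℕ) (C : Fin (d + 1) → Fin (d + 1) → ℝ)
    (η : Fin (d + 1) → ℝ) (j : Fin (d + 1)) : ℝ :=
  cM d C j * η j + ∑ k ∈ Finset.univ.erase j, (cM d C k - C k j) * η k

/-- `D(η) = Σ_j Σ_{k≠j} η_j (c_{jM} - c_{jk})`. -/
noncomputable def Dcw (d : ℕ) (C : Fin (d + 1) → Fin (d + 1) → ℝ)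
    (η : Fin (d + 1) → ℝ) : ℝ :=
  ∑ j, ∑ k ∈ Finset.univ.erase j, η j * (cM d C j - C j k)

/-!
Exchanging the order of summation over the pairs `j ≠ k` turns the `η`-risk of the transformed
loss into the `η̃`-weighted risk of `L` minus `D(η)`. Writing `s = ∑ j, η̃ j > 0` and `p = η̃ / s`,
the transformed risk is `s` times the `p`-risk minus a constant independent of the action. The
increasing affine map `x ↦ s * x - D(η)` carries infima to infima and scales differences by `s`,
which gives the regret identity.
-/

section General

variable {ι K : Type*} [Fintype ι]

theorem sum_sum_erase_comm {M : Type*} [AddCommMonoid M] [DecidableEq ι] (f : ι → ι → M) :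
    ∑ i, ∑ j ∈ univ.erase i, f i j = ∑ j, ∑ i ∈ univ.erase j, f i j :=
  sum_comm' fun i j => by simp only [mem_univ, mem_erase, and_true, true_and, ne_comm]

theorem sum_mul_eq_sum_mul_sum_div_mul [Semifield K] {w : ι → K} (hw : ∑ i, w i ≠ 0)
    (f : ι → K) : ∑ i, w i * f i = (∑ i, w i) * ∑ i, (w i / ∑ k, w k) * f i := by
  rw [mul_sum]
  exact sum_congr rfl fun i _ => by rw [← mul_assoc, mul_div_cancel₀ _ hw]

theorem div_sum_mem_stdSimplex [Semifield K] [LinearOrder K] [IsStrictOrderedRing K]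
    {w : ι → K} (hw : ∀ i, 0 ≤ w i) (hs : ∑ i, w i ≠ 0) :
    (fun i => w i / ∑ k, w k) ∈ stdSimplex K ι :=
  ⟨fun i => div_nonneg (hw i) (sum_nonneg fun k _ => hw k), by rw [← sum_div, div_self hs]⟩

theorem isGLB_image_mul_sub [Field K] [LinearOrder K] [IsStrictOrderedRing K]
    {a : K} (ha : 0 < a) (b : K) {s : Set K} {c : K} (hc : IsGLB s c) :
    IsGLB ((fun x => a * x - b) '' s) (a * c - b) :=
  ((OrderIso.mulLeft₀ a ha).trans (OrderIso.subRight b)).isGLB_image'.2 hc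

end General

section CostTransform

variable {d : ℕ} {C : Fin (d + 1) → Fin (d + 1) → ℝ} {η : Fin (d + 1) → ℝ}

theorem le_cM (j k : Fin (d + 1)) : C j k ≤ cM d C j :=
  le_ciSup (f := C j) (Set.finite_range _).bddAbove k

theorem cM_pos {j : Fin (d + 1)} (hC : ∃ k, 0 < C j k) : 0 < cM d C j :=
  let ⟨k, hk⟩ := hC
  hk.trans_le (le_cM j k)

theorem cM_mul_le_etaTil (hη : 0 ≤ η) (j : Fin (d + 1)) : cM d C j * η j ≤ etaTil d C η j :=
  le_add_of_nonneg_right <|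
    sum_nonneg fun k _ => mul_nonneg (sub_nonneg.2 (le_cM k j)) (hη k)

theorem etaTil_nonneg (hC : ∀ j, 0 ≤ cM d C j) (hη : 0 ≤ η) (j : Fin (d + 1)) :
    0 ≤ etaTil d C η j :=
  (mul_nonneg (hC j) (hη j)).trans (cM_mul_le_etaTil hη j)

theorem sum_etaTil_pos (hC : ∀ j, 0 < cM d C j) (hη : 0 < η) : 0 < ∑ j, etaTil d C η j := by
  obtain ⟨hη_nonneg, i, hi⟩ := Pi.lt_def.1 hη
  exact sum_pos' (fun j _ => etaTil_nonneg (fun k => (hC k).le) hη_nonneg j)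
    ⟨i, mem_univ i, (mul_pos (hC i) hi).trans_le (cM_mul_le_etaTil hη_nonneg i)⟩

variable {A : Type}

theorem mul_Ltil (L : Fin (d + 1) → A → ℝ) (j : Fin (d + 1)) (γ : A) :
    η j * Ltil d C L j γ =
      cM d C j * η j * L j γ + ∑ k ∈ univ.erase j, (cM d C j - C j k) * η j * L k γ -
        ∑ k ∈ univ.erase j, η j * (cM d C j - C j k) := by
  rw [Ltil, mul_add, mul_sum, add_sub_assoc, ← sum_sub_distrib]
  congr 1
  · ring
  · exact sum_congr rfl fun k _ => by ring

theorem etaTil_mul (L : Fin (d + 1) → A → ℝ) (j : Fin (d + 1)) (γ : A) :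
    etaTil d C η j * L j γ =
      cM d C j * η j * L j γ + ∑ k ∈ univ.erase j, (cM d C k - C k j) * η k * L j γ := by
  rw [etaTil, add_mul, sum_mul]

theorem sum_mul_Ltil (L : Fin (d + 1) → A → ℝ) (γ : A) :
    ∑ j, η j * Ltil d C L j γ = ∑ j, etaTil d C η j * L j γ - Dcw d C η := by
  simp only [mul_Ltil, etaTil_mul, sum_sub_distrib, sum_add_distrib, Dcw]
  rw [sum_sum_erase_comm fun j k => (cM d C j - C j k) * η j * L k γ]

theorem sum_mul_Ltil_eq_mul_sub (hs : ∑ j, etaTil d C η j ≠ 0) (L : Fin (d + 1) → A → ℝ) (γ : A) :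
    ∑ j, η j * Ltil d C L j γ =
      (∑ j, etaTil d C η j) * ∑ j, (etaTil d C η j / ∑ k, etaTil d C η k) * L j γ -
        Dcw d C η := by
  rw [sum_mul_Ltil, sum_mul_eq_sum_mul_sum_div_mul hs]

theorem isGLB_sum_mul_Ltil (hs : 0 < ∑ j, etaTil d C η j) (L : Fin (d + 1) → A → ℝ) {c : ℝ}
    (hc : IsGLB {x : ℝ | ∃ γ : A,
      x = ∑ j, (etaTil d C η j / ∑ k, etaTil d C η k) * L j γ} c) :
    IsGLB {x : ℝ | ∃ γ : A, x = ∑ j, η j * Ltil d C L j γ}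
      ((∑ j, etaTil d C η j) * c - Dcw d C η) := by
  have himage : {x : ℝ | ∃ γ : A, x = ∑ j, η j * Ltil d C L j γ} =
      (fun x => (∑ j, etaTil d C η j) * x - Dcw d C η) ''
        {x | ∃ γ : A, x = ∑ j, (etaTil d C η j / ∑ k, etaTil d C η k) * L j γ} := by
    ext x
    simp [sum_mul_Ltil_eq_mul_sub hs.ne', eq_comm]
  rw [himage]
  exact isGLB_image_mul_sub hs (Dcw d C η) hc

end CostTransform

theorem stmt15_general {d : ℕ} {A : Type} (L : Fin (d + 1) → A → ℝ)
    {C : Fin (d + 1) → Fin (d + 1) → ℝ} (hC : ∀ j, ∃ k, 0 < C j k)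
    {η : Fin (d + 1) → ℝ} (hη : 0 < η) :
    ((∀ j, 0 ≤ etaTil d C η j) ∧ 0 < ∑ j, etaTil d C η j ∧
      (∀ j, 0 ≤ etaTil d C η j / ∑ k, etaTil d C η k) ∧
      ∑ j, etaTil d C η j / ∑ k, etaTil d C η k = 1)
    ∧
    (∀ γ : A, ∑ j, η j * Ltil d C L j γ =
      ∑ j, etaTil d C η j * L j γ - Dcw d C η)
    ∧
    (∀ c : ℝ,
      IsGLB {x : ℝ | ∃ γ : A,
          x = ∑ j, (etaTil d C η j / ∑ k, etaTil d C η k) * L j γ} c →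
      IsGLB {x : ℝ | ∃ γ : A, x = ∑ j, η j * Ltil d C L j γ}
          ((∑ j, etaTil d C η j) * c - Dcw d C η) ∧
        ∀ γ : A,
          ∑ j, η j * Ltil d C L j γ - ((∑ j, etaTil d C η j) * c - Dcw d C η) =
            (∑ j, etaTil d C η j) *
              (∑ j, (etaTil d C η j / ∑ k, etaTil d C η k) * L j γ - c)) := by
  have hcM : ∀ j, 0 < cM d C j := fun j => cM_pos (hC j)
  have hnonneg : ∀ j, 0 ≤ etaTil d C η j := etaTil_nonneg (fun j => (hcM j).le) hη.le
  have hs : 0 < ∑ j, etaTil d C η j := sum_etaTil_pos hcM hη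
  refine ⟨⟨hnonneg, hs, div_sum_mem_stdSimplex hnonneg hs.ne'⟩, sum_mul_Ltil L,
    fun c hc => ⟨isGLB_sum_mul_Ltil hs L hc, fun γ => ?_⟩⟩
  rw [sum_mul_Ltil_eq_mul_sub hs.ne']
  ring

theorem stmt15 (d : ℕ) (hd : 1 ≤ d) (A : Type) [Nonempty A]
    (L : Fin (d + 1) → A → ℝ) (C : Fin (d + 1) → Fin (d + 1) → ℝ)
    (hC0 : ∀ j, C j j = 0) (hCnn : ∀ j k, 0 ≤ C j k)
    (hCpos : ∀ j, ∃ k, k ≠ j ∧ 0 < C j k)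
    (η : Fin (d + 1) → ℝ) (hη0 : ∀ j, 0 ≤ η j) (hη1 : ∑ j, η j = 1) :
    -- (a) η̃ is nonnegative with positive total mass, so p := η̃/(Σ η̃) ∈ Δ_m
    ((∀ j, 0 ≤ etaTil d C η j) ∧ 0 < ∑ j, etaTil d C η j ∧
      (∀ j, 0 ≤ etaTil d C η j / ∑ k, etaTil d C η k) ∧
      ∑ j, etaTil d C η j / ∑ k, etaTil d C η k = 1)
    ∧
    -- (b) risk identity
    (∀ γ : A, ∑ j, η j * Ltil d C L j γ =
      ∑ j, etaTil d C η j * L j γ - Dcw d C η)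
    ∧
    -- (c) regret identity: if H_L(p) is finite (p = η̃/(Σ η̃)), then
    -- B_{L̃}(η,γ) = (Σ η̃) · B_L(p,γ)
    (∀ c : ℝ,
      IsGLB {x : ℝ | ∃ γ : A,
          x = ∑ j, (etaTil d C η j / ∑ k, etaTil d C η k) * L j γ} c →
      IsGLB {x : ℝ | ∃ γ : A, x = ∑ j, η j * Ltil d C L j γ}
          ((∑ j, etaTil d C η j) * c - Dcw d C η) ∧
        ∀ γ : A,
          ∑ j, η j * Ltil d C L j γ - ((∑ j, etaTil d C η j) * c - Dcw d C η) =
            (∑ j, etaTil d C η j) *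
              (∑ j, (etaTil d C η j / ∑ k, etaTil d C η k) * L j γ - c)) := by
  have hη : 0 < η := lt_of_le_of_ne hη0 (by rintro rfl; simp at hη1)
  exact stmt15_general L (fun j => (hCpos j).imp fun _ hk => hk.2) hη
end

section
/- Let m ≥ 2 and let C = (c_{jk}) be a cost matrix with row maxima c_{jM} = max_k c_{jk}. Define C̄ ∈ ℝ^{m×m} by C̄_{jk} = c_{jM} − c_{jk}, and for v ∈ ℝ^m write (C̄^T v)_k = Σ_{j=1}^m v_j (c_{jM} − c_{jk}). Then for all η, q ∈ Δ_m and every index k ∈ {1,…,m} with (C̄^T q)_k = max_{j∈{1,…,m}} (C̄^T q)_j: Σ_{j=1}^m η_j c_{jk} − min_{l∈{1,…,m}} Σ_{j=1}^m η_j c_{jl} ≤ ‖C̄^T(η − q)‖_{∞2}. -/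
/-!
Up to a constant, `C̄ᵀη` is the negative of the vector of expected costs, so the regret of `k`
equals `(C̄ᵀη)_l - (C̄ᵀη)_k` with `l` of minimal expected cost. Since `k` maximizes `C̄ᵀq`,
subtracting `(C̄ᵀq)_l - (C̄ᵀq)_k ≤ 0` only increases this difference, and the result is the
difference of two entries of `C̄ᵀ(η - q)`.
-/

open Finset

/-- `‖b‖_{∞2} = max_{j≠k} (|b_j| + |b_k|)`. -/
noncomputable def norminf2 (m : ℕ) (b : Fin m → ℝ) : ℝ :=
  sSup {x : ℝ | ∃ j k : Fin m, j ≠ k ∧ x = |b j| + |b k|}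

/-- `(C̄ᵀ v)_k = Σ_j v_j (c_{jM} - c_{jk})`. -/
noncomputable def CbarT (d : ℕ) (C : Fin (d + 1) → Fin (d + 1) → ℝ)
    (v : Fin (d + 1) → ℝ) (k : Fin (d + 1)) : ℝ :=
  ∑ j, v j * (cM d C j - C j k)

section Norminf2

variable {m : ℕ}

theorem abs_add_abs_le_norminf2 (b : Fin m → ℝ) {j k : Fin m} (hjk : j ≠ k) :
    |b j| + |b k| ≤ norminf2 m b := by
  have hfin : {x : ℝ | ∃ j k : Fin m, j ≠ k ∧ x = |b j| + |b k|}.Finite := by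
    refine (Set.finite_range fun p : Fin m × Fin m => |b p.1| + |b p.2|).subset ?_
    rintro x ⟨i, l, -, rfl⟩
    exact ⟨(i, l), rfl⟩
  exact le_csSup hfin.bddAbove ⟨j, k, hjk, rfl⟩

theorem sub_le_norminf2 [Nontrivial (Fin m)] (b : Fin m → ℝ) (j k : Fin m) :
    b j - b k ≤ norminf2 m b := by
  obtain rfl | hjk := eq_or_ne j k
  · obtain ⟨i, hij⟩ := exists_ne j
    calc b j - b j = 0 := sub_self _
      _ ≤ |b i| + |b j| := by positivity
      _ ≤ norminf2 m b := abs_add_abs_le_norminf2 b hij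
  · calc b j - b k ≤ |b j - b k| := le_abs_self _
      _ ≤ |b j| + |b k| := abs_sub _ _
      _ ≤ norminf2 m b := abs_add_abs_le_norminf2 b hjk

end Norminf2

section CbarT

variable {d : ℕ} (C : Fin (d + 1) → Fin (d + 1) → ℝ)

theorem CbarT_sub (v w : Fin (d + 1) → ℝ) (k : Fin (d + 1)) :
    CbarT d C (fun j => v j - w j) k = CbarT d C v k - CbarT d C w k := by
  simp only [CbarT, sub_mul, sum_sub_distrib]

theorem CbarT_apply_sub_CbarT_apply (v : Fin (d + 1) → ℝ) (k l : Fin (d + 1)) :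
    CbarT d C v l - CbarT d C v k = ∑ j, v j * C j k - ∑ j, v j * C j l := by
  simp only [CbarT, mul_sub, sum_sub_distrib, sub_sub_sub_cancel_left]

end CbarT

theorem stmt17_general {d : ℕ} (hd : 1 ≤ d) (C : Fin (d + 1) → Fin (d + 1) → ℝ)
    (η q : Fin (d + 1) → ℝ) {k : Fin (d + 1)} (hk : ∀ j, CbarT d C q j ≤ CbarT d C q k) :
    ∑ j, η j * C j k - ⨅ l, ∑ j, η j * C j l ≤
      norminf2 (d + 1) (CbarT d C (fun j => η j - q j)) := by
  have : Nontrivial (Fin (d + 1)) := Fin.nontrivial_iff_two_le.2 (Nat.succ_le_succ hd)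
  obtain ⟨l, hl⟩ := exists_eq_ciInf_of_finite (f := fun l => ∑ j, η j * C j l)
  calc ∑ j, η j * C j k - ⨅ l, ∑ j, η j * C j l
      = CbarT d C η l - CbarT d C η k := by rw [← hl, CbarT_apply_sub_CbarT_apply]
    _ ≤ (CbarT d C η l - CbarT d C q l) - (CbarT d C η k - CbarT d C q k) := by
      linarith [hk l]
    _ = CbarT d C (fun j => η j - q j) l - CbarT d C (fun j => η j - q j) k := by
      rw [CbarT_sub, CbarT_sub]
    _ ≤ norminf2 (d + 1) (CbarT d C (fun j => η j - q j)) := sub_le_norminf2 _ l k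

theorem stmt17 (d : ℕ) (hd : 1 ≤ d) (C : Fin (d + 1) → Fin (d + 1) → ℝ)
    (hC0 : ∀ j, C j j = 0) (hCnn : ∀ j k, 0 ≤ C j k)
    (hCpos : ∀ j, ∃ k, k ≠ j ∧ 0 < C j k)
    (η q : Fin (d + 1) → ℝ)
    (hη0 : ∀ j, 0 ≤ η j) (hη1 : ∑ j, η j = 1)
    (hq0 : ∀ j, 0 ≤ q j) (hq1 : ∑ j, q j = 1)
    (k : Fin (d + 1)) (hk : ∀ j, CbarT d C q j ≤ CbarT d C q k) :
    ∑ j, η j * C j k - ⨅ l, ∑ j, η j * C j l ≤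
      norminf2 (d + 1) (CbarT d C (fun j => η j - q j)) :=
  stmt17_general hd C η q hk
end

section
/- Let m ≥ 2 and let η, q ∈ Δ_m with η_j > 0 and q_j > 0 for all j. Then for every index k ∈ {1,…,m} with q_k = max_{j∈{1,…,m}} q_j: (1/2) · ( max_{j∈{1,…,m}} η_j − η_k )^2 ≤ Σ_{j=1}^m η_j log(η_j / q_j). That is, the zero-one classification regret of the prediction q at η is controlled by the Kullback–Leibler regret of the multinomial likelihood loss. -/
open Finset

/-!
When `k` maximizes `q`, the classification regret `max η - η k` is at most the `ℓ¹` distance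
`∑ j, |η j - q j|`: passing from `η` to `q` has to close the gap between the largest entry of `η`
and its entry `k`. Pinsker's inequality bounds half the squared `ℓ¹` distance by the
Kullback–Leibler divergence; it follows by Cauchy–Schwarz from the pointwise inequality
`3 (x - 1)² ≤ (2 x + 4) (x log x + 1 - x)`, applied at the likelihood ratios `x = η j / q j`.
-/

open InformationTheory

theorem hasDerivAt_log_sub_div {x : ℝ} (hx : 0 < x) :
    HasDerivAt (fun y ↦ Real.log y - (y - 1) * (5 * y + 1) / (2 * y * (y + 2)))
      ((x - 1) ^ 3 / (x ^ 2 * (x + 2) ^ 2)) x := by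
  have hnum : HasDerivAt (fun y : ℝ ↦ (y - 1) * (5 * y + 1)) (10 * x - 4) x := by
    convert! ((hasDerivAt_id x).sub_const 1).mul
      (((hasDerivAt_id x).const_mul 5).add_const 1) using 1
    simp only [id]
    ring
  have hden : HasDerivAt (fun y : ℝ ↦ 2 * y * (y + 2)) (4 * x + 4) x := by
    convert! ((hasDerivAt_id x).const_mul 2).mul ((hasDerivAt_id x).add_const 2) using 1
    simp only [id]
    ring
  convert! (Real.hasDerivAt_log hx.ne').sub (hnum.div hden (by positivity)) using 1
  field_simp
  ring

-- The rational function is chosen so that clearing denominators turns this into a bound on `klFun`.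
theorem sub_one_mul_div_le_log {x : ℝ} (hx : 0 < x) :
    (x - 1) * (5 * x + 1) / (2 * x * (x + 2)) ≤ Real.log x := by
  let g : ℝ → ℝ := fun y ↦ Real.log y - (y - 1) * (5 * y + 1) / (2 * y * (y + 2))
  have hg {y : ℝ} (hy : 0 < y) : HasDerivAt g ((y - 1) ^ 3 / (y ^ 2 * (y + 2) ^ 2)) y :=
    hasDerivAt_log_sub_div hy
  have hmin : IsMinOn g (Set.Ioi 0) 1 := by
    refine isMinOn_Ioi_of_deriv (hg one_pos).continuousAt
      (fun y hy ↦ (hg hy.1).differentiableAt.differentiableWithinAt)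
      (fun y hy ↦ (hg (one_pos.trans hy)).differentiableAt.differentiableWithinAt)
      (fun y hy ↦ ?_) (fun y hy ↦ ?_)
    · rw [(hg hy.1).deriv]
      have hcube : (y - 1) ^ 3 ≤ 0 := Odd.pow_nonpos (by decide) (sub_nonpos.2 hy.2.le)
      exact div_nonpos_of_nonpos_of_nonneg hcube (by positivity)
    · rw [(hg (one_pos.trans hy)).deriv]
      have hcube : 0 ≤ (y - 1) ^ 3 := pow_nonneg (sub_nonneg.2 (Set.mem_Ioi.1 hy).le) 3
      positivity
  have hg_one : g 1 = 0 := by simp [g]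
  exact sub_nonneg.1 (hg_one ▸ hmin hx)

theorem three_mul_sub_one_sq_le_mul_klFun {x : ℝ} (hx : 0 ≤ x) :
    3 * (x - 1) ^ 2 ≤ (2 * x + 4) * klFun x := by
  obtain rfl | hpos := hx.eq_or_lt
  · norm_num [klFun_zero]
  have hlog := (div_le_iff₀ (by positivity)).1 (sub_one_mul_div_le_log hpos)
  rw [klFun_apply]
  linarith

theorem mul_klFun_div {a b : ℝ} (hab : b = 0 → a = 0) :
    b * klFun (a / b) = a * Real.log (a / b) + b - a := by
  obtain rfl | hb := eq_or_ne b 0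
  · simp [hab rfl]
  rw [klFun_apply]
  field_simp

theorem three_mul_sub_sq_le_mul_klFun_div {a b : ℝ} (ha : 0 ≤ a) (hb : 0 ≤ b)
    (hab : b = 0 → a = 0) :
    3 * (a - b) ^ 2 ≤ (2 * a + 4 * b) * (b * klFun (a / b)) := by
  obtain rfl | hpos := hb.eq_or_lt
  · simp [hab rfl]
  calc 3 * (a - b) ^ 2 = b ^ 2 * (3 * (a / b - 1) ^ 2) := by field_simp
    _ ≤ b ^ 2 * ((2 * (a / b) + 4) * klFun (a / b)) :=
      mul_le_mul_of_nonneg_left (three_mul_sub_one_sq_le_mul_klFun (by positivity)) (sq_nonneg b)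
    _ = (2 * a + 4 * b) * (b * klFun (a / b)) := by field_simp

section FiniteType

variable {ι : Type*} [Fintype ι]

theorem three_mul_sq_sum_abs_sub_le {p q : ι → ℝ} (hp : ∀ j, 0 ≤ p j) (hq : ∀ j, 0 ≤ q j)
    (hpq : ∀ j, q j = 0 → p j = 0) :
    3 * (∑ j, |p j - q j|) ^ 2 ≤
      (2 * ∑ j, p j + 4 * ∑ j, q j) * ∑ j, q j * klFun (p j / q j) := by
  have hcs : (∑ j, |p j - q j|) ^ 2 ≤
      (∑ j, (2 * p j + 4 * q j) / 3) * ∑ j, q j * klFun (p j / q j) := by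
    refine sum_sq_le_sum_mul_sum_of_sq_le_mul _ (fun j _ ↦ ?_)
      (fun j _ ↦ mul_nonneg (hq j) (klFun_nonneg (div_nonneg (hp j) (hq j)))) (fun j _ ↦ ?_)
    · linarith [hp j, hq j]
    · rw [sq_abs]
      linarith [three_mul_sub_sq_le_mul_klFun_div (hp j) (hq j) (hpq j)]
  rw [← sum_div, sum_add_distrib, ← mul_sum, ← mul_sum] at hcs
  linarith

theorem pinsker_inequality {p q : ι → ℝ} (hp : p ∈ stdSimplex ℝ ι) (hq : ∀ j, 0 ≤ q j)
    (hq_sum : ∑ j, q j ≤ 1) (hpq : ∀ j, q j = 0 → p j = 0) :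
    (1 / 2 : ℝ) * (∑ j, |p j - q j|) ^ 2 ≤ ∑ j, p j * Real.log (p j / q j) := by
  have hkl_nonneg : 0 ≤ ∑ j, q j * klFun (p j / q j) :=
    sum_nonneg fun j _ ↦ mul_nonneg (hq j) (klFun_nonneg (div_nonneg (hp.1 j) (hq j)))
  have hkl_le : ∑ j, q j * klFun (p j / q j) ≤ ∑ j, p j * Real.log (p j / q j) := by
    rw [sum_congr rfl fun j _ ↦ mul_klFun_div (hpq j), sum_sub_distrib, sum_add_distrib, hp.2]
    linarith
  have hbound : 3 * (∑ j, |p j - q j|) ^ 2 ≤ 6 * ∑ j, p j * Real.log (p j / q j) :=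
    calc 3 * (∑ j, |p j - q j|) ^ 2
      _ ≤ (2 * ∑ j, p j + 4 * ∑ j, q j) * ∑ j, q j * klFun (p j / q j) :=
        three_mul_sq_sum_abs_sub_le hp.1 hq hpq
      _ ≤ 6 * ∑ j, p j * Real.log (p j / q j) := by
        gcongr
        linarith [hp.2]
  linarith

theorem sub_le_sum_abs_sub {η q : ι → ℝ} {i k : ι} (hik : q i ≤ q k) :
    η i - η k ≤ ∑ j, |η j - q j| := by
  obtain rfl | hne := eq_or_ne i k
  · simpa using sum_nonneg fun j _ ↦ abs_nonneg (η j - q j)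
  calc η i - η k ≤ (η i - q i) + (q k - η k) := by linarith
    _ ≤ |η i - q i| + |η k - q k| :=
      add_le_add (le_abs_self _) (abs_sub_comm (η k) (q k) ▸ le_abs_self _)
    _ ≤ ∑ j, |η j - q j| :=
      add_le_sum (fun j _ ↦ abs_nonneg (η j - q j)) (mem_univ i) (mem_univ k) hne

theorem stmt18_general {η q : ι → ℝ} (hη : η ∈ stdSimplex ℝ ι) (hq : ∀ j, 0 ≤ q j)
    (hq_sum : ∑ j, q j ≤ 1) (hηq : ∀ j, q j = 0 → η j = 0) {k : ι} (hk : ∀ j, q j ≤ q k) :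
    (1 / 2 : ℝ) * ((⨆ j, η j) - η k) ^ 2 ≤ ∑ j, η j * Real.log (η j / q j) := by
  have : Nonempty ι := ⟨k⟩
  have hregret_nonneg : 0 ≤ (⨆ j, η j) - η k :=
    sub_nonneg.2 (le_ciSup (Set.finite_range η).bddAbove k)
  have hregret_le : (⨆ j, η j) - η k ≤ ∑ j, |η j - q j| :=
    sub_le_iff_le_add.2 (ciSup_le fun i ↦ sub_le_iff_le_add.1 (sub_le_sum_abs_sub (hk i)))
  calc (1 / 2 : ℝ) * ((⨆ j, η j) - η k) ^ 2 ≤ 1 / 2 * (∑ j, |η j - q j|) ^ 2 := by gcongr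
    _ ≤ ∑ j, η j * Real.log (η j / q j) := pinsker_inequality hη hq hq_sum hηq

end FiniteType

theorem stmt18 (d : ℕ) (hd : 1 ≤ d) (η q : Fin (d + 1) → ℝ)
    (hη0 : ∀ j, 0 < η j) (hη1 : ∑ j, η j = 1)
    (hq0 : ∀ j, 0 < q j) (hq1 : ∑ j, q j = 1)
    (k : Fin (d + 1)) (hk : ∀ j, q j ≤ q k) :
    (1 / 2 : ℝ) * ((⨆ j, η j) - η k) ^ 2 ≤
      ∑ j, η j * Real.log (η j / q j) :=
  stmt18_general ⟨fun j ↦ (hη0 j).le, hη1⟩ (fun j ↦ (hq0 j).le) hq1.le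
    (fun j hj ↦ absurd hj (hq0 j).ne') hk
end
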